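/- For every ε > 0 there exists a constant C_ε > 0, depending only on ε, such that for every δ with δ⁻¹ ∈ ℕ and every g : [0,1] → ℂ, ‖E_{[0,1]} g‖_{L¹²(ℝ³)} ≤ C_ε δ^{−1/4−ε} (∑_{J ∈ P_δ} ‖E_J g‖_{L¹²(ℝ³)}⁴)^{1/4}; equivalently, the ℓ⁴L¹² decoupling constant satisfies D(δ) ≤ C_ε δ^{−1/4−ε}. -/

import Mathlib

/-!
The proof is a bilinear argument in the style of efficient congruencing. Write
`δ = 1 / n` and consider the estimate
`∫ |E g| ^ 12 ≤ C n ^ h (∑ ‖E_J g‖₁₂ ^ 4) ^ 3`, with `C` uniform in `n` and `g`; the claim is that it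
holds for every `h > 3`. It is true for `h = 11` by Hölder's inequality, and `improve` shows that an
estimate with `h > 3` implies one with a smaller exponent, the gain being bounded below away from
`h = 3`.

All that is needed from the curve is an orthogonality principle, `momExt_orth`: the integral of a
product of six pieces and six conjugates of pieces of `E g` vanishes unless the system
`∑ s_i ^ e = ∑ t_i ^ e`, `e = 1, 2, 3`, has a solution with the unknowns in the respective
intervals. The notion `CurveFam` records this principle together with membership in `L¹²`. Using
the global integrals directly, with even exponents, avoids all weights and local constancy.

For two separated intervals the translation-invariant system gives two almost orthogonality
statements. If five unknowns on each side lie in an interval of length `μ`, the cubic equation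
forces the remaining two to be within `O(μ ^ 3)` of each other (`nt_two`, `l2_step`). If four
unknowns on each side lie there, the quadratic and cubic equations force the two remaining pairs to
agree up to permutation and an error `O(μ ^ 2)` over their separation (`nt_four`, `l4_step`).
Alternating the two steps and interpolating by Hölder's inequality yields `bilin`, a bilinear
estimate whose exponent improves linearly in the number of alternations as long as `h > 3`. The
broad-narrow dichotomy `broad_narrow` turns it into a better linear estimate.

Integrability needs care, because `E g ∈ L¹²` does not formally contain the same statement for the
pieces `E_J g`. This is the `L¹²` boundedness of sharp frequency cutoffs, `momExt_memLp`. It reduces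
to the cutoff to a half-line in one dimension, and that follows from an absorption argument based on
`∫ F ^ 6 conj (H) ^ 6 = 0` for `F` of positive and `H` of negative frequencies (`hardy_orth`),
which is the orthogonality principle again.
-/

open MeasureTheory Real

noncomputable section

/-- Points of `ℝ³`. -/
abbrev E3 := Fin 3 → ℝ

/-- Points of `ℝ²`. -/
abbrev E2 := Fin 2 → ℝ

/-- `eR z = e(z) = exp(2πiz)`. -/
def eR (z : ℝ) : ℂ := Complex.exp (2 * Real.pi * Complex.I * z)

/-- Extension operator along the moment curve `γ(ξ) = (ξ, ξ², ξ³)` over the interval `[l, r]`. -/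
def momExt (g : ℝ → ℂ) (l r : ℝ) (x : E3) : ℂ :=
  ∫ ξ in l..r, g ξ * eR (x 0 * ξ + x 1 * ξ ^ 2 + x 2 * ξ ^ 3)

/-- The `L¹²(ℝ³)` norm. -/
def L12 (f : E3 → ℂ) : ℝ := (∫ x : E3, ‖f x‖ ^ (12 : ℕ)) ^ ((1 : ℝ) / 12)

/-- `∑_{J ∈ P_δ(I)} ‖E_J g‖_{L¹²}⁴` where `I = [l, l + n·δ]` is partitioned into `n` intervals
of length `δ`. -/
def decSum (g : ℝ → ℂ) (l δ : ℝ) (n : ℕ) : ℝ :=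
  ∑ k ∈ Finset.range n, L12 (momExt g (l + k * δ) (l + (k + 1) * δ)) ^ 4

/-- `δ > 0` and `δ⁻¹ ∈ ℕ`. -/
def IsRecipNat (δ : ℝ) : Prop := 0 < δ ∧ ∃ n : ℕ, (n : ℝ) = δ⁻¹

/-- `x ∈ ℕ` (as a real number). -/
def IsNatReal (x : ℝ) : Prop := ∃ n : ℕ, (n : ℝ) = x

/-- The `ℓ⁴L¹²` decoupling constant `D(δ)`: the smallest constant `C` such that
`‖E_{[0,1]} g‖₁₂ ≤ C (∑_{J ∈ P_δ} ‖E_J g‖₁₂⁴)^{1/4}` for all `g`. -/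
def Dconst (δ : ℝ) : ℝ :=
  sInf {C : ℝ | 0 ≤ C ∧ ∀ g : ℝ → ℂ,
    L12 (momExt g 0 1) ≤ C * decSum g 0 δ ⌊δ⁻¹⌋₊ ^ ((1 : ℝ) / 4)}

/-- The weight `φ_{T_I, E}` associated to the parallelepiped `T_I` dual to the interval `I`
with center `c` and length `len`; it is `L¹`-normalized and decays like the `E`-th power of the
non-isotropic distance `‖(len (x·γ'(c)), len² (x·γ''(c)), len³ (x·γ'''(c)))‖`. -/
def phiT (c len E : ℝ) (x : E3) : ℝ :=
  3 / 2 * len ^ 6 *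
    (1 + Real.sqrt ((len * (x 0 + 2 * c * x 1 + 3 * c ^ 2 * x 2)) ^ 2 +
      (len ^ 2 * (2 * x 1 + 6 * c * x 2)) ^ 2 + (len ^ 3 * (6 * x 2)) ^ 2)) ^ (-E)

/-- The convolution `(|E_{[l,r]} g|^p ∗ φ)(x)`. -/
def convPow (g : ℝ → ℂ) (l r : ℝ) (p : ℕ) (φ : E3 → ℝ) (x : E3) : ℝ :=
  ∫ y : E3, ‖momExt g l r y‖ ^ p * φ (x - y)

/-- The bilinear integral `∫_{ℝ³} (|E_I g|^p ∗ φ_{T_I,E}) (|E_{I'} g|^q ∗ φ_{T_{I'},E})`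
where `I = [lI, lI + sI]` and `I' = [lI', lI' + sI']`. -/
def biInt (g : ℝ → ℂ) (p q : ℕ) (lI sI lI' sI' E : ℝ) : ℝ :=
  ∫ x : E3, convPow g lI (lI + sI) p (phiT (lI + sI / 2) sI E) x *
    convPow g lI' (lI' + sI') q (phiT (lI' + sI' / 2) sI' E) x

/-- The intervals `[l₁, l₁+s₁]` and `[l₂, l₂+s₂]` are at distance at least `ν`. -/
def IntSep (l₁ s₁ l₂ s₂ ν : ℝ) : Prop := l₁ + s₁ + ν ≤ l₂ ∨ l₂ + s₂ + ν ≤ l₁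

/-- The first bilinear constant `M_{1,a,b}(δ,ν,E)`: the smallest constant `C` such that
`∫ (|E_I g|² ∗ φ_{T_I,E})(|E_{I'} g|¹⁰ ∗ φ_{T_{I'},E})
  ≤ C¹² (∑_{J ∈ P_δ(I)} ‖E_J g‖₁₂⁴)^{1/2} (∑_{J' ∈ P_δ(I')} ‖E_{J'} g‖₁₂⁴)^{5/2}`
for all `g` and all `I ∈ P_{ν^a}([0,1])`, `I' ∈ P_{ν^b}([0,1])` with `dist(I,I') ≥ ν`. -/
def M1 (δ ν : ℝ) (a b : ℕ) (E : ℝ) : ℝ :=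
  sInf {C : ℝ | 0 ≤ C ∧ ∀ g : ℝ → ℂ, ∀ i j : ℕ,
    i < ⌊ν⁻¹⌋₊ ^ a → j < ⌊ν⁻¹⌋₊ ^ b →
    IntSep (i * ν ^ a) (ν ^ a) (j * ν ^ b) (ν ^ b) ν →
    biInt g 2 10 (i * ν ^ a) (ν ^ a) (j * ν ^ b) (ν ^ b) E ≤
      C ^ 12 * decSum g (i * ν ^ a) δ ⌊ν ^ a / δ⌋₊ ^ ((1 : ℝ) / 2) *
        decSum g (j * ν ^ b) δ ⌊ν ^ b / δ⌋₊ ^ ((5 : ℝ) / 2)}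

/-- The second bilinear constant `M_{2,a,b}(δ,ν,E)`: the smallest constant `C` such that
`∫ (|E_I g|⁴ ∗ φ_{T_I,E})(|E_{I'} g|⁸ ∗ φ_{T_{I'},E})
  ≤ C¹² (∑_{J ∈ P_δ(I)} ‖E_J g‖₁₂⁴) (∑_{J' ∈ P_δ(I')} ‖E_{J'} g‖₁₂⁴)²`
for all `g` and all `I ∈ P_{ν^a}([0,1])`, `I' ∈ P_{ν^b}([0,1])` with `dist(I,I') ≥ ν`. -/
def M2 (δ ν : ℝ) (a b : ℕ) (E : ℝ) : ℝ :=
  sInf {C : ℝ | 0 ≤ C ∧ ∀ g : ℝ → ℂ, ∀ i j : ℕ,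
    i < ⌊ν⁻¹⌋₊ ^ a → j < ⌊ν⁻¹⌋₊ ^ b →
    IntSep (i * ν ^ a) (ν ^ a) (j * ν ^ b) (ν ^ b) ν →
    biInt g 4 8 (i * ν ^ a) (ν ^ a) (j * ν ^ b) (ν ^ b) E ≤
      C ^ 12 * decSum g (i * ν ^ a) δ ⌊ν ^ a / δ⌋₊ *
        decSum g (j * ν ^ b) δ ⌊ν ^ b / δ⌋₊ ^ 2}

/-- `ν ∈ 2^{-2^ℕ}`, i.e. `ν = 2^{-2^k}` for some `k ∈ ℕ`. -/
def IsNu (ν : ℝ) : Prop := ∃ k : ℕ, ν = ((2 : ℝ) ^ (2 ^ k))⁻¹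

/-- Extension operator for the parabola over the interval `[l, r]`. -/
def parExt (g : ℝ → ℂ) (l r : ℝ) (x : E2) : ℂ :=
  ∫ ξ in l..r, g ξ * eR (x 0 * ξ + x 1 * ξ ^ 2)

/-- The weight `w_{B,E}` associated to a ball (or square) in `ℝ²` with center `c` and
radius (resp. side length) `R`. -/
def wB2 (c : E2) (R E : ℝ) (x : E2) : ℝ :=
  (1 + Real.sqrt ((x 0 - c 0) ^ 2 + (x 1 - c 1) ^ 2) / R) ^ (-E)

/-- The weighted `L⁴` norm `(∫_{ℝ²} |f|⁴ w)^{1/4}`. -/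
def L4w (f : E2 → ℂ) (w : E2 → ℝ) : ℝ :=
  (∫ x : E2, ‖f x‖ ^ 4 * w x) ^ ((1 : ℝ) / 4)

open Filter Topology
open scoped ComplexConjugate ENNReal

/-! ### Vanishing of integrals of oscillating superpositions -/

lemma continuous_eR : Continuous eR := by unfold eR; fun_prop

@[simp] lemma norm_eR (z : ℝ) : ‖eR z‖ = 1 := by
  rw [← Complex.norm_exp_ofReal_mul_I (2 * π * z), eR]
  congr 2; push_cast; ring

lemma eR_add (a b : ℝ) : eR (a + b) = eR a * eR b := by
  rw [eR, eR, eR, ← Complex.exp_add]; congr 1; push_cast; ring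

lemma conj_eR (a : ℝ) : (starRingEnd ℂ) (eR a) = eR (-a) := by
  rw [eR, eR, ← Complex.exp_conj]; congr 1; simp
  exact Or.inl (map_ofNat _ 2)

/-- A superposition `∫ G ω φ ω` of unimodular functions has integral zero as soon as the integrals
of the `φ ω`, regularized by windows `Ψ n → 1`, tend to zero uniformly where `G ω ≠ 0`. Only the
superposition as a whole is assumed integrable in `x`. -/
lemma orth_abs {X Ω : Type*} [MeasurableSpace X] [MeasurableSpace Ω] {μ : Measure X}
    {ν : Measure Ω} [SFinite μ] [SFinite ν]
    {φ : Ω → X → ℂ} (hφm : Measurable (Function.uncurry φ)) (hφ : ∀ ω x, ‖φ ω x‖ = 1)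
    {G : Ω → ℂ} (hG : Integrable G ν) {Ψ : ℕ → X → ℂ} (hΨi : ∀ n, Integrable (Ψ n) μ)
    (hΨb : ∀ n x, ‖Ψ n x‖ ≤ 1) (hΨ : ∀ x, Tendsto (fun n => Ψ n x) atTop (𝓝 1))
    {c : ℕ → ℝ} (hc : Tendsto c atTop (𝓝 0))
    (hbd : ∀ n ω, G ω ≠ 0 → ‖∫ x, Ψ n x * φ ω x ∂μ‖ ≤ c n)
    (hF : Integrable (fun x => ∫ ω, G ω * φ ω x ∂ν) μ) :
    ∫ x, (∫ ω, G ω * φ ω x ∂ν) ∂μ = 0 := by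
  set F : X → ℂ := fun x => ∫ ω, G ω * φ ω x ∂ν with hFdef
  have h1 : Tendsto (fun n => ∫ x, Ψ n x * F x ∂μ) atTop (𝓝 (∫ x, F x ∂μ)) := by
    refine tendsto_integral_of_dominated_convergence (fun x => ‖F x‖)
      (fun n => (hΨi n).aestronglyMeasurable.mul hF.aestronglyMeasurable) hF.norm
      (fun n => Eventually.of_forall fun x => ?_) (Eventually.of_forall fun x => ?_)
    · rw [norm_mul]
      exact mul_le_of_le_one_left (norm_nonneg _) (hΨb n x)
    · simpa using (hΨ x).mul_const (F x)
  have h2 : ∀ n, ‖∫ x, Ψ n x * F x ∂μ‖ ≤ c n * ∫ ω, ‖G ω‖ ∂ν := by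
    intro n
    have hint : Integrable (Function.uncurry fun x ω => Ψ n x * (G ω * φ ω x)) (μ.prod ν) := by
      have h0 : Integrable (fun z : X × Ω => Ψ n z.1 * G z.2) (μ.prod ν) := (hΨi n).mul_prod hG
      have h1 := h0.mul_bdd (c := 1) (g := fun z : X × Ω => φ z.2 z.1)
        (hφm.comp measurable_swap).aestronglyMeasurable
        (Eventually.of_forall fun z => (hφ _ _).le)
      refine h1.congr (Eventually.of_forall fun z => ?_)
      simp [Function.uncurry, mul_assoc]
    have : ∫ x, Ψ n x * F x ∂μ = ∫ ω, G ω * ∫ x, Ψ n x * φ ω x ∂μ ∂ν := by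
      simp_rw [hFdef, ← integral_const_mul]
      rw [integral_integral_swap hint]
      congr 1; ext ω; congr 1; ext x; ring
    rw [this, ← integral_const_mul]
    refine norm_integral_le_of_norm_le (hG.norm.const_mul _) (Eventually.of_forall fun ω => ?_)
    rw [norm_mul, mul_comm]
    by_cases h : G ω = 0
    · simp [h]
    · exact mul_le_mul_of_nonneg_right (hbd n ω h) (norm_nonneg _)
  have h3 : Tendsto (fun n => ∫ x, Ψ n x * F x ∂μ) atTop (𝓝 0) := by
    refine squeeze_zero_norm h2 ?_
    simpa using hc.mul_const (∫ ω, ‖G ω‖ ∂ν)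
  exact tendsto_nhds_unique h1 h3

/-- Gaussian window on `ℝ^d`, tending to `1` pointwise. -/
def gwin {d : ℕ} (n : ℕ) (x : Fin d → ℝ) : ℂ :=
  Complex.exp (-((1 / (n + 1 : ℝ) : ℝ) : ℂ) * ∑ i, (x i : ℂ) ^ 2)

lemma gwin_eq {d : ℕ} (n : ℕ) (x : Fin d → ℝ) :
    gwin n x = ((Real.exp (-(1 / (n + 1 : ℝ)) * ∑ i, x i ^ 2) : ℝ) : ℂ) := by
  simp [gwin]

lemma norm_gwin_le {d : ℕ} (n : ℕ) (x : Fin d → ℝ) : ‖gwin n x‖ ≤ 1 := by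
  rw [gwin_eq, Complex.norm_real, Real.norm_eq_abs, abs_of_pos (Real.exp_pos _), Real.exp_le_one_iff]
  have : 0 ≤ ∑ i, x i ^ 2 := Finset.sum_nonneg fun i _ => sq_nonneg _
  have h2 : 0 < 1 / ((n : ℝ) + 1) := by positivity
  nlinarith

lemma gwin_integrable {d : ℕ} (n : ℕ) : Integrable (gwin (d := d) n) := by
  have := GaussianFourier.integrable_cexp_neg_mul_sum_add (ι := Fin d)
    (b := ((1 / (n + 1 : ℝ) : ℝ) : ℂ)) (by rw [Complex.ofReal_re]; positivity) 0
  refine this.congr (Eventually.of_forall fun x => ?_)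
  simp [gwin]

lemma gwin_tendsto {d : ℕ} (x : Fin d → ℝ) : Tendsto (fun n => gwin n x) atTop (𝓝 1) := by
  have h : Tendsto (fun n : ℕ => (1 / (n + 1 : ℝ))) atTop (𝓝 0) :=
    tendsto_one_div_add_atTop_nhds_zero_nat
  have h2 : Tendsto (fun n : ℕ => Real.exp (-(1 / (n + 1 : ℝ)) * ∑ i, x i ^ 2)) atTop (𝓝 1) := by
    have := (h.neg.mul_const (∑ i, x i ^ 2)).rexp
    simpa using this
  simp_rw [gwin_eq]
  exact_mod_cast (Complex.continuous_ofReal.tendsto _).comp h2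

lemma norm_integral_gwin {d : ℕ} (n : ℕ) (y : Fin d → ℝ) :
    ‖∫ x : Fin d → ℝ, gwin n x * eR (∑ i, x i * y i)‖ =
      (π * (n + 1)) ^ ((d : ℝ) / 2) * Real.exp (-(π ^ 2 * ∑ i, y i ^ 2) * (n + 1)) := by
  have hb : 0 < ((1 / (n + 1 : ℝ) : ℝ) : ℂ).re := by rw [Complex.ofReal_re]; positivity
  have h := GaussianFourier.integral_cexp_neg_mul_sum_add (ι := Fin d) hb
    (fun i => 2 * π * Complex.I * y i)
  have e : ∀ x : Fin d → ℝ, gwin n x * eR (∑ i, x i * y i) =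
      Complex.exp (-((1 / (n + 1 : ℝ) : ℝ) : ℂ) * ∑ i, (x i : ℂ) ^ 2 +
        ∑ i, 2 * π * Complex.I * y i * x i) := by
    intro x
    rw [gwin, eR, ← Complex.exp_add]
    congr 2
    push_cast
    rw [Finset.mul_sum]
    exact Finset.sum_congr rfl fun i _ => by ring
  simp_rw [e]
  rw [h, norm_mul, Complex.norm_exp]
  have hn : (0 : ℝ) < n + 1 := by positivity
  congr 1
  · have : (π : ℂ) / ((1 / (n + 1 : ℝ) : ℝ) : ℂ) = ((π * (n + 1) : ℝ) : ℂ) := by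
      push_cast; field_simp
    rw [this, Complex.norm_cpow_eq_rpow_re_of_pos (by positivity)]
    simp
  · congr 1
    have : (∑ i, (2 * (π : ℂ) * Complex.I * y i) ^ 2) / (4 * ((1 / (n + 1 : ℝ) : ℝ) : ℂ)) =
        ((-(π ^ 2 * ∑ i, y i ^ 2) * (n + 1) : ℝ) : ℂ) := by
      have hn' : ((n : ℂ) + 1) ≠ 0 := by exact_mod_cast hn.ne'
      push_cast
      have h1 : ∀ i, (2 * (π : ℂ) * Complex.I * y i) ^ 2 = (-(4 * π ^ 2) : ℂ) * (y i : ℂ) ^ 2 := by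
        intro i
        linear_combination (4 * (π : ℂ) ^ 2 * y i ^ 2) * Complex.I_sq
      simp_rw [h1, ← Finset.mul_sum]
      field_simp
    rw [this, Complex.ofReal_re]

/-- If an integrable superposition of characters, with frequencies bounded away from zero, is
integrable in `x`, its integral over `ℝ^d` is zero. -/
lemma orth_gap {d : ℕ} {Ω : Type*} [MeasurableSpace Ω] {ν : Measure Ω} [SFinite ν]
    {G : Ω → ℂ} (hG : Integrable G ν) {Γ : Ω → Fin d → ℝ} (hΓ : Measurable Γ)
    {r : ℝ} (hr : 0 < r) (hgap : ∀ ω, G ω ≠ 0 → r ≤ ∑ i, Γ ω i ^ 2)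
    (hF : Integrable (fun x : Fin d → ℝ => ∫ ω, G ω * eR (∑ i, x i * Γ ω i) ∂ν)) :
    ∫ x : Fin d → ℝ, (∫ ω, G ω * eR (∑ i, x i * Γ ω i) ∂ν) = 0 := by
  refine orth_abs (μ := volume) (φ := fun ω (x : Fin d → ℝ) => eR (∑ i, x i * Γ ω i)) ?_ ?_ hG
    (Ψ := fun n => gwin n) (fun n => gwin_integrable n) (fun n x => norm_gwin_le n x)
    (fun x => gwin_tendsto x)
    (c := fun n => (π * (n + 1)) ^ ((d : ℝ) / 2) * Real.exp (-(π ^ 2 * r) * (n + 1))) ?_ ?_ hF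
  · have := continuous_eR
    refine this.measurable.comp (f := fun p : Ω × (Fin d → ℝ) => ∑ i, p.2 i * Γ p.1 i) ?_
    fun_prop
  · exact fun ω x => norm_eR _
  · have h := tendsto_rpow_mul_exp_neg_mul_atTop_nhds_zero ((d : ℝ) / 2) (π * r) (by positivity)
    have h2 : Tendsto (fun n : ℕ => π * ((n : ℝ) + 1)) atTop atTop :=
      Tendsto.const_mul_atTop pi_pos (tendsto_natCast_atTop_atTop.atTop_add tendsto_const_nhds)
    refine (h.comp h2).congr fun n => ?_
    simp only [Function.comp]
    congr 2; ring
  · intro n ω h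
    rw [norm_integral_gwin]
    gcongr
    exact hgap ω h

/-! ### Orthogonality along the moment curve -/

/-- The phase `x · γ(ξ)`. -/
def cph (x : E3) (ξ : ℝ) : ℝ := x 0 * ξ + x 1 * ξ ^ 2 + x 2 * ξ ^ 3

lemma momExt_eq {g : ℝ → ℂ} {l r : ℝ} (h : l ≤ r) (x : E3) :
    momExt g l r x = ∫ ξ, (Set.Ioc l r).indicator g ξ * eR (cph x ξ) := by
  rw [momExt, intervalIntegral.integral_of_le h, ← integral_indicator measurableSet_Ioc]
  congr 1; ext ξ
  rw [Set.indicator_mul_left]; rfl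

lemma momExt_mul_conj {g : ℝ → ℂ} {p q : ℝ × ℝ} (hp : p.1 ≤ p.2) (hq : q.1 ≤ q.2) (x : E3) :
    momExt g p.1 p.2 x * conj (momExt g q.1 q.2 x) =
      ∫ z : ℝ × ℝ, ((Set.Ioc p.1 p.2).indicator g z.1 * eR (cph x z.1)) *
        conj ((Set.Ioc q.1 q.2).indicator g z.2 * eR (cph x z.2)) := by
  rw [momExt_eq hp, momExt_eq hq, ← integral_conj, ← integral_prod_mul]
  rfl

/-- Orthogonality along the curve: if the integral of a twelvefold product of pieces of `E g` is
nonzero, then the power-sum system of degrees one, two and three is solvable with the unknowns in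
the closed supporting intervals. Otherwise, by compactness, the frequencies of the product stay
away from zero and `orth_gap` applies. -/
lemma momExt_orth {g : ℝ → ℂ} (hg : Integrable g) (p q : Fin 6 → ℝ × ℝ)
    (hp : ∀ i, (p i).1 ≤ (p i).2) (hq : ∀ i, (q i).1 ≤ (q i).2)
    (hint : Integrable (fun x => ∏ i, (momExt g (p i).1 (p i).2 x *
      conj (momExt g (q i).1 (q i).2 x))))
    (hne : ∫ x, ∏ i, (momExt g (p i).1 (p i).2 x * conj (momExt g (q i).1 (q i).2 x)) ≠ 0) :
    ∃ s t : Fin 6 → ℝ, (∀ i, s i ∈ Set.Icc (p i).1 (p i).2) ∧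
      (∀ i, t i ∈ Set.Icc (q i).1 (q i).2) ∧
      ∀ e : Fin 3, ∑ i, s i ^ (e.val + 1) = ∑ i, t i ^ (e.val + 1) := by
  by_contra hcon
  apply hne
  let G : (Fin 6 → ℝ × ℝ) → ℂ := fun ω => ∏ i, ((Set.Ioc (p i).1 (p i).2).indicator g (ω i).1 *
    conj ((Set.Ioc (q i).1 (q i).2).indicator g (ω i).2))
  let Γ : (Fin 6 → ℝ × ℝ) → Fin 3 → ℝ := fun ω e =>
    ∑ i, ((ω i).1 ^ (e.val + 1) - (ω i).2 ^ (e.val + 1))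
  have hG : Integrable G := by
    refine Integrable.fintype_prod_dep (f := fun i (z : ℝ × ℝ) =>
      (Set.Ioc (p i).1 (p i).2).indicator g z.1 *
        conj ((Set.Ioc (q i).1 (q i).2).indicator g z.2)) fun i => ?_
    have h2 : Integrable (fun y => conj ((Set.Ioc (q i).1 (q i).2).indicator g y)) :=
      Complex.conjCLE.toContinuousLinearMap.integrable_comp (hg.indicator measurableSet_Ioc)
    exact (hg.indicator measurableSet_Ioc).mul_prod h2
  have hΓc : Continuous Γ := by fun_prop
  have key : ∀ x : E3, ∏ i, (momExt g (p i).1 (p i).2 x * conj (momExt g (q i).1 (q i).2 x)) =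
      ∫ ω, G ω * eR (∑ e, x e * Γ ω e) := by
    intro x
    simp_rw [fun i => momExt_mul_conj (g := g) (hp i) (hq i) x]
    rw [← integral_fintype_prod_volume_eq_prod]
    congr 1; ext ω
    have h1 : eR (∑ e, x e * Γ ω e) = ∏ i, (eR (cph x (ω i).1) * conj (eR (cph x (ω i).2))) := by
      simp_rw [conj_eR, ← eR_add]
      simp only [Γ, cph, Fin.sum_univ_three, Fin.prod_univ_six, Fin.sum_univ_six, ← eR_add]
      congr 1
      simp
      ring
    rw [h1, ← Finset.prod_mul_distrib]
    refine Finset.prod_congr rfl fun i _ => ?_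
    rw [map_mul]; ring
  have hK : IsCompact (Set.pi Set.univ fun i : Fin 6 =>
      Set.Icc (p i).1 (p i).2 ×ˢ Set.Icc (q i).1 (q i).2) :=
    isCompact_univ_pi fun i => isCompact_Icc.prod isCompact_Icc
  obtain ⟨r, hr, hmin⟩ := hK.exists_forall_le' (f := fun ω => ∑ e, Γ ω e ^ 2) (a := 0)
    (by fun_prop) (by
      intro ω hω
      by_contra h
      have hz : ∑ e, Γ ω e ^ 2 = 0 :=
        le_antisymm (not_lt.mp h) (Finset.sum_nonneg fun _ _ => sq_nonneg _)
      rw [Finset.sum_eq_zero_iff_of_nonneg (fun _ _ => sq_nonneg _)] at hz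
      refine hcon ⟨fun i => (ω i).1, fun i => (ω i).2, fun i => (hω i trivial).1,
        fun i => (hω i trivial).2, fun e => ?_⟩
      have := pow_eq_zero_iff (two_ne_zero) |>.mp (hz e (Finset.mem_univ _))
      simp only [Γ, Finset.sum_sub_distrib] at this
      linarith)
  simp_rw [key] at hint ⊢
  refine orth_gap hG hΓc.measurable hr (fun ω hω => hmin ω fun i _ => ?_) hint
  have := (Finset.prod_ne_zero_iff.mp hω) i (Finset.mem_univ _)
  have h1 := left_ne_zero_of_mul this
  have h2 := right_ne_zero_of_mul this
  have h3 : (Set.Ioc (q i).1 (q i).2).indicator g (ω i).2 ≠ 0 := fun h => h2 (by rw [h, map_zero])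
  exact Set.mk_mem_prod (Set.Ioc_subset_Icc_self (Set.mem_of_indicator_ne_zero h1))
    (Set.Ioc_subset_Icc_self (Set.mem_of_indicator_ne_zero h3))

/-! ### Gaussian windows and the one-dimensional transform -/

/-- The inverse Fourier transform on `ℝ`, written with `eR`. -/
def ft (p : ℝ → ℂ) (x : ℝ) : ℂ := ∫ ξ, p ξ * eR (x * ξ)

/-- Gaussian window on `ℝ`. -/
def gw (n : ℕ) (x : ℝ) : ℝ := Real.exp (-(1 / (n + 1 : ℝ)) * x ^ 2)

/-- Fourier transform of the Gaussian window, a probability density. -/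
def gk (n : ℕ) (y : ℝ) : ℝ := √(π * (n + 1)) * Real.exp (-(π ^ 2 * (n + 1)) * y ^ 2)

lemma continuous_gk (n : ℕ) : Continuous (gk n) := by unfold gk; fun_prop
lemma gk_nonneg (n : ℕ) (y : ℝ) : 0 ≤ gk n y := by unfold gk; positivity
lemma gw_pos (n : ℕ) (y : ℝ) : 0 < gw n y := by unfold gw; positivity
lemma gw_le (n : ℕ) (y : ℝ) : gw n y ≤ 1 := by
  unfold gw
  rw [Real.exp_le_one_iff]
  have h2 : 0 < 1 / ((n : ℝ) + 1) := by positivity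
  nlinarith [sq_nonneg y]
lemma gk_le (n : ℕ) (y : ℝ) : gk n y ≤ √(π * (n + 1)) := by
  unfold gk
  refine mul_le_of_le_one_right (by positivity) ?_
  rw [Real.exp_le_one_iff]
  have h2 : 0 < π ^ 2 * ((n : ℝ) + 1) := by positivity
  nlinarith [sq_nonneg y]
lemma gk_integrable (n : ℕ) : Integrable (gk n) := by
  unfold gk
  exact (integrable_exp_neg_mul_sq (by positivity)).const_mul _
lemma gw_integrable (n : ℕ) : Integrable (gw n) := by
  unfold gw
  exact (integrable_exp_neg_mul_sq (by positivity))
lemma gw_tendsto (x : ℝ) : Tendsto (fun n => gw n x) atTop (𝓝 1) := by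
  have h : Tendsto (fun n : ℕ => (1 / (n + 1 : ℝ))) atTop (𝓝 0) :=
    tendsto_one_div_add_atTop_nhds_zero_nat
  have := (h.neg.mul_const (x ^ 2)).rexp
  simpa [gw] using this
lemma integral_gk (n : ℕ) : ∫ y, gk n y = 1 := by
  unfold gk
  have hn : (0 : ℝ) < n + 1 := by positivity
  rw [integral_const_mul, integral_gaussian, ← Real.sqrt_mul (by positivity)]
  rw [show π * ((n : ℝ) + 1) * (π / (π ^ 2 * (n + 1))) = 1 by field_simp]
  exact Real.sqrt_one

lemma integral_gk_eR (n : ℕ) (x : ℝ) : ∫ y, (gk n y : ℂ) * eR (x * y) = gw n x := by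
  have hn : (0 : ℝ) < n + 1 := by positivity
  have hb : 0 < ((π ^ 2 * (n + 1) : ℝ) : ℂ).re := by rw [Complex.ofReal_re]; positivity
  have h := fourierIntegral_gaussian hb (2 * π * x : ℂ)
  have e : ∀ y : ℝ, (gk n y : ℂ) * eR (x * y) = (√(π * (n + 1)) : ℝ) *
      (Complex.exp (Complex.I * (2 * π * x : ℂ) * y) *
        Complex.exp (-((π ^ 2 * (n + 1) : ℝ) : ℂ) * y ^ 2)) := by
    intro y
    rw [gk, eR]; push_cast
    rw [mul_assoc, mul_comm (Complex.exp _)]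
    congr 3; ring
  simp_rw [e]
  rw [integral_const_mul, h, gw, ← mul_assoc]
  have h1 : (π : ℂ) / ((π ^ 2 * (n + 1) : ℝ) : ℂ) = ((1 / (π * (n + 1)) : ℝ) : ℂ) := by
    have hn' : ((n : ℂ) + 1) ≠ 0 := by exact_mod_cast hn.ne'
    have : (π : ℂ) ≠ 0 := by exact_mod_cast pi_pos.ne'
    push_cast; field_simp
  have h2 : (((1 / (π * (n + 1)) : ℝ) : ℂ)) ^ (1 / 2 : ℂ) = ((√(1 / (π * (n + 1))) : ℝ) : ℂ) := by
    rw [Real.sqrt_eq_rpow, Complex.ofReal_cpow (by positivity)]; norm_num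
  rw [h1, h2, ← Complex.ofReal_mul, ← Real.sqrt_mul (by positivity),
    show π * ((n : ℝ) + 1) * (1 / (π * (n + 1))) = 1 by field_simp, Real.sqrt_one]
  rw [Complex.ofReal_one, one_mul, Complex.ofReal_exp]
  congr 1
  have hn' : ((n : ℂ) + 1) ≠ 0 := by exact_mod_cast hn.ne'
  have : (π : ℂ) ≠ 0 := by exact_mod_cast pi_pos.ne'
  push_cast; field_simp; ring

lemma integral_gw_eR (n : ℕ) (y : ℝ) : ∫ x, (gw n x : ℂ) * eR (x * y) = gk n y := by
  have hn : (0 : ℝ) < n + 1 := by positivity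
  have hb : 0 < ((1 / (n + 1) : ℝ) : ℂ).re := by rw [Complex.ofReal_re]; positivity
  have h := fourierIntegral_gaussian hb (2 * π * y : ℂ)
  have e : ∀ x : ℝ, (gw n x : ℂ) * eR (x * y) = 
      (Complex.exp (Complex.I * (2 * π * y : ℂ) * x) *
        Complex.exp (-((1 / (n + 1) : ℝ) : ℂ) * x ^ 2)) := by
    intro y
    rw [gw, eR]; push_cast
    rw [mul_comm (Complex.exp _)]
    congr 2; ring
  simp_rw [e]
  rw [h, gk]
  have hn' : ((n : ℂ) + 1) ≠ 0 := by exact_mod_cast hn.ne'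
  have h1 : (π : ℂ) / ((1 / (n + 1) : ℝ) : ℂ) = ((π * (n + 1) : ℝ) : ℂ) := by
    push_cast; field_simp
  have h2 : ((π * (n + 1) : ℝ) : ℂ) ^ (1 / 2 : ℂ) = ((√(π * (n + 1)) : ℝ) : ℂ) := by
    rw [Real.sqrt_eq_rpow, Complex.ofReal_cpow (by positivity)]; norm_num
  rw [h1, h2, Complex.ofReal_mul, Complex.ofReal_exp]
  congr 2
  push_cast; field_simp; ring

lemma norm_ft_le (p : ℝ → ℂ) (x : ℝ) : ‖ft p x‖ ≤ ∫ ξ, ‖p ξ‖ := by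
  refine (norm_integral_le_integral_norm _).trans (le_of_eq ?_)
  simp

lemma continuous_ft {p : ℝ → ℂ} (hp : Integrable p) : Continuous (ft p) := by
  refine continuous_of_dominated (bound := fun ξ => ‖p ξ‖) (fun x => ?_) (fun x => ?_) hp.norm ?_
  · exact hp.aestronglyMeasurable.mul
      (continuous_eR.comp (by fun_prop)).aestronglyMeasurable
  · exact Eventually.of_forall fun ξ => by simp
  · exact Eventually.of_forall fun ξ => continuous_const.mul (continuous_eR.comp (by fun_prop))

/-- `L² ` bound for the transform of a bounded integrable function. -/
lemma ft_sq_integrable {p : ℝ → ℂ} (hp : Integrable p) {B : ℝ} (hB : ∀ ξ, ‖p ξ‖ ≤ B) :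
    Integrable (fun x => ‖ft p x‖ ^ 2) := by
  have hB0 : 0 ≤ B := (norm_nonneg _).trans (hB 0)
  have hc := continuous_ft hp
  have key : ∀ n, ∫ x, gw n x * ‖ft p x‖ ^ 2 ≤ B * ∫ ξ, ‖p ξ‖ := by
    intro n
    have hpc : Integrable (fun η => conj (p η)) :=
      Complex.conjCLE.toContinuousLinearMap.integrable_comp hp
    have hGi : Integrable (fun z : ℝ × ℝ => p z.1 * conj (p z.2)) (volume.prod volume) :=
      hp.mul_prod hpc
    have e1 : ∀ x, ((gw n x * ‖ft p x‖ ^ 2 : ℝ) : ℂ) =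
        ∫ z : ℝ × ℝ, (gw n x : ℂ) * ((p z.1 * conj (p z.2)) * eR (x * (z.1 - z.2))) := by
      intro x
      rw [integral_const_mul, Complex.ofReal_mul]
      congr 1
      rw [Complex.ofReal_pow, ← Complex.mul_conj', ft, ← integral_conj, ← integral_prod_mul]
      refine integral_congr_ae (Eventually.of_forall fun z => ?_)
      simp only [map_mul, conj_eR]
      rw [mul_sub, sub_eq_add_neg, eR_add]; ring
    have hint : Integrable (Function.uncurry fun (x : ℝ) (z : ℝ × ℝ) =>
        (gw n x : ℂ) * ((p z.1 * conj (p z.2)) * eR (x * (z.1 - z.2))))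
        (volume.prod (volume.prod volume)) := by
      have h0 := (gw_integrable n).ofReal (𝕜 := ℂ) |>.mul_prod hGi
      have h1 := h0.mul_bdd (c := 1) (g := fun z : ℝ × (ℝ × ℝ) => eR (z.1 * (z.2.1 - z.2.2)))
        (continuous_eR.comp (by fun_prop)).aestronglyMeasurable
        (Eventually.of_forall fun z => (norm_eR _).le)
      refine h1.congr (Eventually.of_forall fun z => ?_)
      simp [Function.uncurry, mul_assoc]
    have e2 : ((∫ x, gw n x * ‖ft p x‖ ^ 2 : ℝ) : ℂ) =
        ∫ z : ℝ × ℝ, (p z.1 * conj (p z.2)) * (gk n (z.1 - z.2) : ℂ) := by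
      rw [← integral_complex_ofReal]
      simp_rw [e1]
      refine (integral_integral_swap hint).trans ?_
      congr 1; ext z
      rw [← integral_gw_eR, ← integral_const_mul]
      congr 1; ext x; ring
    have hbnd : Integrable (fun z : ℝ × ℝ => ‖p z.1‖ * gk n (z.1 - z.2))
        (volume.prod volume) := by
      have h0 : Integrable (fun z : ℝ × ℝ => ‖p z.1‖ * gk n z.2) (volume.prod volume) :=
        hp.norm.mul_prod (gk_integrable n)
      have h1 := (measurePreserving_prod_sub_swap (volume : Measure ℝ) (volume : Measure ℝ))
      rw [integrable_prod_iff]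
      · refine ⟨Eventually.of_forall fun ξ => ?_, ?_⟩
        · exact ((gk_integrable n).comp_sub_left ξ).const_mul ‖p ξ‖
        · simp_rw [norm_mul, norm_norm, integral_const_mul, Real.norm_eq_abs,
            abs_of_nonneg (gk_nonneg n _), integral_sub_left_eq_self (gk n), integral_gk, mul_one]
          exact hp.norm
      · exact hp.norm.aestronglyMeasurable.comp_fst.mul
          ((continuous_gk n).comp (by fun_prop)).aestronglyMeasurable
    have e3 : ∫ z : ℝ × ℝ, ‖p z.1‖ * gk n (z.1 - z.2) = ∫ ξ, ‖p ξ‖ := by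
      rw [Measure.volume_eq_prod, integral_prod _ hbnd]
      simp_rw [integral_const_mul, integral_sub_left_eq_self (gk n), integral_gk, mul_one]
    calc ∫ x, gw n x * ‖ft p x‖ ^ 2 ≤ ‖((∫ x, gw n x * ‖ft p x‖ ^ 2 : ℝ) : ℂ)‖ := by
          rw [Complex.norm_real]; exact le_abs_self _
      _ ≤ ∫ z : ℝ × ℝ, B * (‖p z.1‖ * gk n (z.1 - z.2)) := by
          rw [e2]
          refine norm_integral_le_of_norm_le (hbnd.const_mul B) (Eventually.of_forall fun z => ?_)
          rw [norm_mul, norm_mul, Complex.norm_real, Real.norm_eq_abs,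
            abs_of_nonneg (gk_nonneg n _), RCLike.norm_conj]
          have := mul_le_mul_of_nonneg_left (hB z.2)
            (mul_nonneg (norm_nonneg (p z.1)) (gk_nonneg n (z.1 - z.2)))
          linarith
      _ = B * ∫ ξ, ‖p ξ‖ := by rw [integral_const_mul, e3]
  have hint : ∀ n, Integrable (fun x => gw n x * ‖ft p x‖ ^ 2) := by
    intro n
    refine (gw_integrable n).mul_bdd (c := (∫ ξ, ‖p ξ‖) ^ 2)
      (hc.norm.pow 2).aestronglyMeasurable (Eventually.of_forall fun x => ?_)
    rw [Real.norm_eq_abs, abs_of_nonneg (by positivity)]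
    exact pow_le_pow_left₀ (norm_nonneg _) (norm_ft_le p x) 2
  refine ⟨(hc.norm.pow 2).aestronglyMeasurable, ?_⟩
  rw [hasFiniteIntegral_iff_ofReal (Eventually.of_forall fun x => by positivity)]
  have hf : ∀ x, ENNReal.ofReal (‖ft p x‖ ^ 2) =
      liminf (fun n => ENNReal.ofReal (gw n x * ‖ft p x‖ ^ 2)) atTop := by
    intro x
    refine (Tendsto.liminf_eq ?_).symm
    refine ENNReal.tendsto_ofReal ?_
    simpa using (gw_tendsto x).mul_const (‖ft p x‖ ^ 2)
  simp_rw [hf]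
  refine lt_of_le_of_lt (lintegral_liminf_le fun n => ?_) ?_
  · have : Continuous (gw n) := by unfold gw; fun_prop
    exact (this.mul (hc.norm.pow 2)).measurable.ennreal_ofReal
  · refine lt_of_le_of_lt ?_ (ENNReal.ofReal_lt_top (r := B * ∫ ξ, ‖p ξ‖))
    refine liminf_le_of_le (by isBoundedDefault) fun b hb => ?_
    obtain ⟨n, hn⟩ := hb.exists
    refine hn.trans ?_
    rw [← ofReal_integral_eq_lintegral_ofReal (hint n)
      (Eventually.of_forall fun x => mul_nonneg (gw_pos n x).le (by positivity))]
    exact ENNReal.ofReal_le_ofReal (key n)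

lemma ft_pow_integrable {p : ℝ → ℂ} (hp : Integrable p) {B : ℝ} (hB : ∀ ξ, ‖p ξ‖ ≤ B) (k : ℕ) :
    Integrable (fun x => ‖ft p x‖ ^ (k + 2)) := by
  have := (ft_sq_integrable hp hB).bdd_mul (c := (∫ ξ, ‖p ξ‖) ^ k)
    (f := fun x => ‖ft p x‖ ^ k)
    ((continuous_ft hp).norm.pow k).aestronglyMeasurable (Eventually.of_forall fun x => by
      rw [Real.norm_eq_abs, abs_of_nonneg (by positivity)]
      exact pow_le_pow_left₀ (norm_nonneg _) (norm_ft_le p x) k)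
  simpa [pow_add] using this

/-! ### Boundedness of the half-line cutoff, bounded densities -/

/-- Weighted Young inequality; the factor `400` makes the coefficient of `a ^ 12` at most one half,
so that this term can be absorbed. -/
lemma half_young {a b : ℝ} (ha : 0 ≤ a) (hb : 0 ≤ b) :
    6 * a ^ 6 * b * (a + b) ^ 5 ≤ 1 / 2 * a ^ 12 + 6 * 400 ^ 6 * 401 ^ 5 * b ^ 12 := by
  rcases le_total (400 * b) a with h | h
  · have h1 : a + b ≤ 401 / 400 * a := by linarith
    have h2 : b ≤ a / 400 := by linarith
    calc 6 * a ^ 6 * b * (a + b) ^ 5 ≤ 6 * a ^ 6 * (a / 400) * (401 / 400 * a) ^ 5 := by gcongr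
      _ ≤ 1 / 2 * a ^ 12 := by
          have : 0 ≤ a ^ 12 := by positivity
          nlinarith
      _ ≤ _ := by
          have : 0 ≤ b ^ 12 := by positivity
          linarith
  · calc 6 * a ^ 6 * b * (a + b) ^ 5 ≤ 6 * (400 * b) ^ 6 * b * (401 * b) ^ 5 := by
          gcongr; linarith
      _ = 6 * 400 ^ 6 * 401 ^ 5 * b ^ 12 := by ring
      _ ≤ _ := by
          have : 0 ≤ a ^ 12 := by positivity
          linarith

lemma norm_pow_six_sub (a b : ℂ) {M : ℝ} (ha : ‖a‖ ≤ M) (hb : ‖b‖ ≤ M) :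
    ‖a ^ 6 - b ^ 6‖ ≤ 6 * ‖a - b‖ * M ^ 5 := by
  have hM : 0 ≤ M := (norm_nonneg _).trans ha
  have e : a ^ 6 - b ^ 6 = (a - b) * ∑ i ∈ Finset.range 6, a ^ i * b ^ (5 - i) := by
    simp [Finset.sum_range_succ]; ring
  rw [e, norm_mul, mul_comm (6 : ℝ), mul_assoc]
  refine mul_le_mul_of_nonneg_left ?_ (norm_nonneg _)
  refine (norm_sum_le_of_le (f := fun i => a ^ i * b ^ (5 - i)) _
    (n := fun _ => M ^ 5) fun i hi => ?_).trans (by simp)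
  have hi' : i ≤ 5 := by have := Finset.mem_range.mp hi; omega
  rw [norm_mul, norm_pow, norm_pow]
  calc ‖a‖ ^ i * ‖b‖ ^ (5 - i) ≤ M ^ i * M ^ (5 - i) := by gcongr
    _ = M ^ 5 := by rw [← pow_add]; congr 1; omega

/-- The sixth powers of the positive- and negative-frequency parts are orthogonal: all frequencies
of the product are positive. To obtain a uniform gap one first shifts them by `η > 0`. -/
lemma hardy_orth {P N : ℝ → ℂ} (hP : Integrable P) (hN : Integrable N)
    {B : ℝ} (hPB : ∀ ξ, ‖P ξ‖ ≤ B) (hNB : ∀ ξ, ‖N ξ‖ ≤ B)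
    (hPs : ∀ ξ, P ξ ≠ 0 → 0 < ξ) (hNs : ∀ ξ, N ξ ≠ 0 → ξ ≤ 0) :
    Integrable (fun x => ft P x ^ 6 * conj (ft N x) ^ 6) ∧
      ∫ x, ft P x ^ 6 * conj (ft N x) ^ 6 = 0 := by
  have hcP := continuous_ft hP
  have hcN := continuous_ft hN
  have hΦ : Integrable (fun x => ft P x ^ 6 * conj (ft N x) ^ 6) := by
    have h12 := (ft_pow_integrable hP hPB 10).add (ft_pow_integrable hN hNB 10)
    refine h12.mono' ?_ (Eventually.of_forall fun x => ?_)
    · exact ((hcP.pow 6).mul ((Complex.continuous_conj.comp hcN).pow 6)).aestronglyMeasurable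
    · simp only [norm_mul, norm_pow, RCLike.norm_conj, Pi.add_apply]
      have e1 : ∀ y : ℝ, y ^ (10 + 2) = (y ^ 6) ^ 2 := fun y => by ring
      rw [e1, e1]
      nlinarith [sq_nonneg (‖ft P x‖ ^ 6 - ‖ft N x‖ ^ 6), sq_nonneg (‖ft P x‖ ^ 6),
        sq_nonneg (‖ft N x‖ ^ 6)]
  refine ⟨hΦ, ?_⟩
  let G : (Fin 6 → ℝ × ℝ) → ℂ := fun ω => ∏ i, (P (ω i).1 * conj (N (ω i).2))
  let S : (Fin 6 → ℝ × ℝ) → ℝ := fun ω => ∑ i, ((ω i).1 - (ω i).2)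
  have hG : Integrable G := by
    refine Integrable.fintype_prod_dep (f := fun i (z : ℝ × ℝ) => P z.1 * conj (N z.2)) fun i => ?_
    have h2 : Integrable (fun y => conj (N y)) :=
      Complex.conjCLE.toContinuousLinearMap.integrable_comp hN
    exact hP.mul_prod h2
  have hSc : Continuous S := by fun_prop
  have hS : ∀ ω, G ω ≠ 0 → 0 ≤ S ω := by
    intro ω hω
    refine Finset.sum_nonneg fun i _ => ?_
    have := (Finset.prod_ne_zero_iff.mp hω) i (Finset.mem_univ _)
    have h1 := hPs _ (left_ne_zero_of_mul this)
    have h2 := hNs (ω i).2 (fun h => right_ne_zero_of_mul this (by rw [h, map_zero]))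
    linarith
  have h2 : ∀ x, ft P x * conj (ft N x) =
      ∫ z : ℝ × ℝ, (P z.1 * eR (x * z.1)) * conj (N z.2 * eR (x * z.2)) := by
    intro x
    rw [ft, ft, ← integral_conj, ← integral_prod_mul]
    rfl
  have key : ∀ (η x : ℝ), ft P x ^ 6 * conj (ft N x) ^ 6 * eR (x * η) =
      ∫ ω, G ω * eR (x * (S ω + η)) := by
    intro η x
    rw [← mul_pow, h2]
    have : (∫ z : ℝ × ℝ, (P z.1 * eR (x * z.1)) * conj (N z.2 * eR (x * z.2))) ^ 6 =
        ∏ i : Fin 6, ∫ z : ℝ × ℝ, (P z.1 * eR (x * z.1)) * conj (N z.2 * eR (x * z.2)) := by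
      simp
    rw [this, ← integral_fintype_prod_volume_eq_prod, ← integral_mul_const]
    congr 1; ext ω
    have h1 : eR (x * (S ω + η)) =
        (∏ i, (eR (x * (ω i).1) * conj (eR (x * (ω i).2)))) * eR (x * η) := by
      simp_rw [conj_eR, ← eR_add]
      simp only [S, Fin.prod_univ_six, Fin.sum_univ_six, ← eR_add]
      congr 1
      ring
    rw [h1, ← mul_assoc, ← Finset.prod_mul_distrib]
    congr 1
    refine Finset.prod_congr rfl fun i _ => ?_
    rw [map_mul]; ring
  have hz : ∀ η : ℝ, 0 < η → ∫ x, ft P x ^ 6 * conj (ft N x) ^ 6 * eR (x * η) = 0 := by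
    intro η hη
    simp_rw [key]
    refine orth_abs (μ := volume) (φ := fun ω (x : ℝ) => eR (x * (S ω + η))) ?_ ?_ hG
      (Ψ := fun n x => (gw n x : ℂ)) (fun n => (gw_integrable n).ofReal) (fun n x => ?_)
      (fun x => ?_)
      (c := fun n => (π * (n + 1)) ^ ((1 : ℝ) / 2) * Real.exp (-(π * η ^ 2) * (π * (n + 1)))) ?_ ?_ ?_
    · exact (continuous_eR.comp (by fun_prop)).measurable
    · exact fun ω x => norm_eR _
    · rw [Complex.norm_real, Real.norm_eq_abs, abs_of_pos (gw_pos n x)]; exact gw_le n x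
    · exact_mod_cast (Complex.continuous_ofReal.tendsto _).comp (gw_tendsto x)
    · have h := tendsto_rpow_mul_exp_neg_mul_atTop_nhds_zero ((1 : ℝ) / 2) (π * η ^ 2) (by positivity)
      have h2 : Tendsto (fun n : ℕ => π * ((n : ℝ) + 1)) atTop atTop :=
        Tendsto.const_mul_atTop pi_pos (tendsto_natCast_atTop_atTop.atTop_add tendsto_const_nhds)
      exact h.comp h2
    · intro n ω h
      rw [integral_gw_eR, Complex.norm_real, Real.norm_eq_abs, abs_of_nonneg (gk_nonneg n _), gk,
        Real.sqrt_eq_rpow]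
      refine mul_le_mul_of_nonneg_left (Real.exp_le_exp.mpr ?_) (by positivity)
      have h1 : η ^ 2 ≤ (S ω + η) ^ 2 := by nlinarith [hS ω h]
      have : 0 ≤ π ^ 2 * ((n : ℝ) + 1) := by positivity
      nlinarith
    · simp_rw [← key]
      refine hΦ.mul_bdd (c := 1) (continuous_eR.comp (by fun_prop)).aestronglyMeasurable
        (Eventually.of_forall fun z => (norm_eR _).le)
  have hlim : Tendsto (fun n : ℕ => ∫ x, ft P x ^ 6 * conj (ft N x) ^ 6 * eR (x * (1 / (n + 1 : ℝ))))
      atTop (𝓝 (∫ x, ft P x ^ 6 * conj (ft N x) ^ 6)) := by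
    refine tendsto_integral_of_dominated_convergence
      (fun x => ‖ft P x ^ 6 * conj (ft N x) ^ 6‖)
      (fun n => hΦ.aestronglyMeasurable.mul
        (continuous_eR.comp (by fun_prop)).aestronglyMeasurable) hΦ.norm
      (fun n => Eventually.of_forall fun x => by rw [norm_mul, norm_eR, mul_one])
      (Eventually.of_forall fun x => ?_)
    have h := (tendsto_one_div_add_atTop_nhds_zero_nat (𝕜 := ℝ)).const_mul x
    have h3 := ((continuous_eR.tendsto _).comp h).const_mul (ft P x ^ 6 * conj (ft N x) ^ 6)
    simpa [eR] using h3
  refine tendsto_nhds_unique hlim ?_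
  rw [tendsto_congr fun n : ℕ => hz (1 / (n + 1 : ℝ)) (by positivity)]
  exact tendsto_const_nhds

/-- `L¹²` boundedness of the frequency cutoff to the positive half-line, for bounded densities. With
`F = ft P` the positive part and `h = ft p`, one has `conj (ft N) = conj h - conj F`, so the
orthogonality of `F ^ 6` and `ft N ^ 6` gives
`∫ |F| ^ 12 ≤ ∫ |F| ^ 6 |(conj F) ^ 6 - (conj (F - h)) ^ 6|`, and the difference carries a
factor `h`. -/
lemma hardy_bdd {p : ℝ → ℂ} (hp : Integrable p) {B : ℝ} (hB : ∀ ξ, ‖p ξ‖ ≤ B) :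
    Integrable (fun x => ‖ft ((Set.Ioi 0).indicator p) x‖ ^ 12) ∧
    Integrable (fun x => ‖ft p x‖ ^ 12) ∧
    ∫ x, ‖ft ((Set.Ioi 0).indicator p) x‖ ^ 12 ≤
      2 * (6 * 400 ^ 6 * 401 ^ 5) * ∫ x, ‖ft p x‖ ^ 12 := by
  have hB0 : 0 ≤ B := (norm_nonneg _).trans (hB 0)
  set P := (Set.Ioi (0 : ℝ)).indicator p with hPd
  set N := (Set.Iic (0 : ℝ)).indicator p with hNd
  have hP : Integrable P := hp.indicator measurableSet_Ioi
  have hN : Integrable N := hp.indicator measurableSet_Iic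
  have hPB : ∀ ξ, ‖P ξ‖ ≤ B := fun ξ => (norm_indicator_le_norm_self p ξ).trans (hB ξ)
  have hNB : ∀ ξ, ‖N ξ‖ ≤ B := fun ξ => (norm_indicator_le_norm_self p ξ).trans (hB ξ)
  obtain ⟨hΦ, h0⟩ := hardy_orth hP hN hPB hNB
    (fun ξ h => Set.mem_of_indicator_ne_zero (s := Set.Ioi (0 : ℝ)) (f := p) h)
    (fun ξ h => Set.mem_of_indicator_ne_zero (s := Set.Iic (0 : ℝ)) (f := p) h)
  have hadd : ∀ x, ft p x = ft P x + ft N x := by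
    intro x
    have hm : ∀ {f : ℝ → ℂ}, Integrable f → Integrable (fun ξ => f ξ * eR (x * ξ)) := fun hf =>
      hf.mul_bdd (c := 1) (continuous_eR.comp (by fun_prop)).aestronglyMeasurable
        (Eventually.of_forall fun z => (norm_eR _).le)
    rw [ft, ft, ft, ← integral_add (hm hP) (hm hN)]
    congr 1; ext ξ
    rw [← add_mul]; congr 1
    by_cases h : 0 < ξ
    · simp [hPd, hNd, h]
    · simp [hPd, hNd, h, not_lt.mp h]
  have hF12 := ft_pow_integrable hP hPB 10
  have hh12 := ft_pow_integrable hp hB 10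
  refine ⟨hF12, hh12, ?_⟩
  have hpt : ∀ x, ‖ft P x‖ ^ 12 ≤ (1 / 2 * ‖ft P x‖ ^ 12 + 6 * 400 ^ 6 * 401 ^ 5 * ‖ft p x‖ ^ 12) +
      (ft P x ^ 6 * conj (ft N x) ^ 6).re := by
    intro x
    refine le_trans ?_ (add_le_add_left (half_young (norm_nonneg (ft P x)) (norm_nonneg (ft p x))) _)
    -- The exponent six is even, so `conj F` may be replaced by `-conj F`.
    have e : ((‖ft P x‖ ^ 12 : ℝ) : ℂ) = ft P x ^ 6 * ((-conj (ft P x)) ^ 6 - conj (ft N x) ^ 6) +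
        ft P x ^ 6 * conj (ft N x) ^ 6 := by
      rw [mul_sub, sub_add_cancel, Even.neg_pow (by decide), ← mul_pow, Complex.mul_conj']
      push_cast; ring
    have e2 : ‖ft P x‖ ^ 12 = (ft P x ^ 6 * ((-conj (ft P x)) ^ 6 - conj (ft N x) ^ 6)).re +
        (ft P x ^ 6 * conj (ft N x) ^ 6).re := by
      rw [← Complex.add_re, ← e, Complex.ofReal_re]
    rw [e2]
    gcongr
    refine (Complex.re_le_norm _).trans ?_
    rw [norm_mul, norm_pow]
    have h3 : ‖(-conj (ft P x)) ^ 6 - conj (ft N x) ^ 6‖ ≤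
        6 * ‖ft p x‖ * (‖ft P x‖ + ‖ft p x‖) ^ 5 := by
      have := norm_pow_six_sub (-conj (ft P x)) (conj (ft N x)) (M := ‖ft P x‖ + ‖ft p x‖)
        (by simp) (by
          rw [RCLike.norm_conj, show ft N x = ft p x - ft P x by rw [hadd]; ring]
          exact (norm_sub_le _ _).trans (by linarith))
      rwa [show -conj (ft P x) - conj (ft N x) = -conj (ft p x) by rw [hadd, map_add]; ring,
        norm_neg, RCLike.norm_conj] at this
    calc _ ≤ ‖ft P x‖ ^ 6 * (6 * ‖ft p x‖ * (‖ft P x‖ + ‖ft p x‖) ^ 5) := by gcongr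
      _ = _ := by ring
  have hre : ∫ x, (ft P x ^ 6 * conj (ft N x) ^ 6).re = 0 := by
    have := integral_re hΦ
    simp only [RCLike.re_to_complex] at this
    rw [this, h0]; simp
  have hi1 : Integrable (fun x => 1 / 2 * ‖ft P x‖ ^ 12) := hF12.const_mul _
  have hi2 : Integrable (fun x => 6 * 400 ^ 6 * 401 ^ 5 * ‖ft p x‖ ^ 12) := hh12.const_mul _
  have hi3 : Integrable (fun x => (ft P x ^ 6 * conj (ft N x) ^ 6).re) := hΦ.re
  have h5 : ∫ x, ‖ft P x‖ ^ 12 ≤ _ := integral_mono hF12 ((hi1.add hi2).add hi3) hpt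
  have e3 : ∫ x, ((1 / 2 * ‖ft P x‖ ^ 12 + 6 * 400 ^ 6 * 401 ^ 5 * ‖ft p x‖ ^ 12) +
      (ft P x ^ 6 * conj (ft N x) ^ 6).re) = (1 / 2 * ∫ x, ‖ft P x‖ ^ 12) +
      6 * 400 ^ 6 * 401 ^ 5 * ∫ x, ‖ft p x‖ ^ 12 := by
    rw [integral_add (f := fun x => 1 / 2 * ‖ft P x‖ ^ 12 + 6 * 400 ^ 6 * 401 ^ 5 * ‖ft p x‖ ^ 12)
      (hi1.add hi2) hi3, hre, add_zero, integral_add hi1 hi2, integral_const_mul,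
      integral_const_mul]
  replace h5 := h5.trans_eq e3
  linarith

/-! ### Boundedness of the cutoff for integrable densities -/

/-- Convolution with the Gaussian kernel `gk n`, whose scale is `1 / √(n + 1)`. -/
def mol (n : ℕ) (G : ℝ → ℂ) (y : ℝ) : ℂ := ∫ ξ, G ξ * (gk n (y - ξ) : ℂ)

lemma mol_prod_integrable (n : ℕ) {G : ℝ → ℂ} (hG : Integrable G) :
    Integrable (fun z : ℝ × ℝ => G z.1 * (gk n (z.2 - z.1) : ℂ)) (volume.prod volume) := by
  rw [integrable_prod_iff]
  · refine ⟨Eventually.of_forall fun ξ => ?_, ?_⟩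
    · exact (((gk_integrable n).comp_sub_right ξ).ofReal (𝕜 := ℂ)).const_mul (G ξ)
    · simp_rw [norm_mul, Complex.norm_real, integral_const_mul, Real.norm_eq_abs,
        abs_of_nonneg (gk_nonneg n _), integral_sub_right_eq_self (gk n), integral_gk, mul_one]
      exact hG.norm
  · exact hG.aestronglyMeasurable.comp_fst.mul
      (Complex.continuous_ofReal.comp ((continuous_gk n).comp (by fun_prop))).aestronglyMeasurable

lemma mol_integrable (n : ℕ) {G : ℝ → ℂ} (hG : Integrable G) : Integrable (mol n G) :=
  (mol_prod_integrable n hG).integral_prod_right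

lemma norm_mol_le (n : ℕ) {G : ℝ → ℂ} (hG : Integrable G) (y : ℝ) :
    ‖mol n G y‖ ≤ ∫ ξ, ‖G ξ‖ * √(π * (n + 1)) := by
  refine norm_integral_le_of_norm_le (hG.norm.mul_const _) (Eventually.of_forall fun ξ => ?_)
  rw [norm_mul, Complex.norm_real, Real.norm_eq_abs, abs_of_nonneg (gk_nonneg n _)]
  exact mul_le_mul_of_nonneg_left (gk_le n _) (norm_nonneg _)

lemma ft_ind_mol (n : ℕ) {G : ℝ → ℂ} (hG : Integrable G) {s : Set ℝ} (hs : MeasurableSet s)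
    (x : ℝ) : ft (s.indicator (mol n G)) x = ∫ ξ, G ξ * eR (x * ξ) *
      ∫ v, (gk n v : ℂ) * (s.indicator (fun _ => (1 : ℂ)) (ξ + v) * eR (x * v)) := by
  have h1 : Integrable (Function.uncurry fun (y ξ : ℝ) => (G ξ * (gk n (y - ξ) : ℂ)) *
      (s.indicator (fun _ => (1 : ℂ)) y * eR (x * y))) (volume.prod volume) := by
    refine (mol_prod_integrable n hG).swap.mul_bdd (c := 1)
      (g := fun z : ℝ × ℝ => s.indicator (fun _ => (1 : ℂ)) z.1 * eR (x * z.1)) ?_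
      (Eventually.of_forall fun z => ?_)
    · refine Measurable.aestronglyMeasurable ?_
      have := continuous_eR.measurable
      have h2 : Measurable (s.indicator (fun _ => (1 : ℂ))) := measurable_const.indicator hs
      fun_prop
    · rw [norm_mul, norm_eR, mul_one]
      exact (norm_indicator_le_norm_self _ _).trans (by simp)
  calc ft (s.indicator (mol n G)) x
      = ∫ y, ∫ ξ, (G ξ * (gk n (y - ξ) : ℂ)) * (s.indicator (fun _ => (1 : ℂ)) y * eR (x * y)) := by
        rw [ft]; congr 1; ext y
        rw [integral_mul_const]
        by_cases h : y ∈ s <;> simp [h, mol]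
    _ = ∫ ξ, ∫ y, (G ξ * (gk n (y - ξ) : ℂ)) * (s.indicator (fun _ => (1 : ℂ)) y * eR (x * y)) :=
        integral_integral_swap h1
    _ = _ := by
        congr 1; ext ξ
        rw [← integral_add_right_eq_self _ ξ, ← integral_const_mul]
        congr 1; ext v
        rw [add_sub_cancel_right, mul_add, eR_add, add_comm v ξ]; ring

lemma ft_mol (n : ℕ) {G : ℝ → ℂ} (hG : Integrable G) (x : ℝ) :
    ft (mol n G) x = gw n x * ft G x := by
  have := ft_ind_mol n hG MeasurableSet.univ x
  simp only [Set.indicator_univ, one_mul, integral_gk_eR] at this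
  rw [this, integral_mul_const, mul_comm]; rfl

lemma gk_scale (n : ℕ) (u : ℝ) : gk n (u * (1 / √(n + 1))) = √(n + 1) * gk 0 u := by
  have hn : (0 : ℝ) < n + 1 := by positivity
  rw [gk, gk, Real.sqrt_mul pi_pos.le, mul_pow, div_pow, Real.sq_sqrt hn.le]
  have : -(π ^ 2 * ((n : ℝ) + 1)) * (u ^ 2 * (1 ^ 2 / (n + 1))) =
      -(π ^ 2 * (((0 : ℕ) : ℝ) + 1)) * u ^ 2 := by field_simp; simp
  rw [this]; simp; ring

/-- The Gaussian kernels form an approximate identity. -/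
lemma gk_approx {φ : ℝ → ℂ} (hm : Measurable φ) (hb : ∀ v, ‖φ v‖ ≤ 1) (hc : ContinuousAt φ 0) :
    Tendsto (fun n => ∫ v, (gk n v : ℂ) * φ v) atTop (𝓝 (φ 0)) := by
  have e : ∀ n : ℕ, ∫ v, (gk n v : ℂ) * φ v = ∫ u, (gk 0 u : ℂ) * φ (u * (1 / √(n + 1))) := by
    intro n
    have hn : (0 : ℝ) < √(n + 1) := by positivity
    have h := Measure.integral_comp_mul_right (fun v => (gk n v : ℂ) * φ v) (1 / √(n + 1 : ℝ))
    simp only [gk_scale] at h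
    have h3 : ∫ v, (gk n v : ℂ) * φ v = (1 / √(n + 1 : ℝ)) • ∫ u : ℝ,
        ((√(n + 1) * gk 0 u : ℝ) : ℂ) * φ (u * (1 / √(n + 1))) := by
      rw [h, abs_of_pos (by positivity), smul_smul]
      field_simp; simp
    rw [h3, ← integral_smul]
    congr 1; ext u
    rw [Complex.real_smul, Complex.ofReal_mul, ← mul_assoc, ← mul_assoc, ← Complex.ofReal_mul,
      one_div, inv_mul_cancel₀ hn.ne']
    simp
  simp_rw [e]
  have h1 : φ 0 = ∫ u, (gk 0 u : ℂ) * φ 0 := by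
    rw [integral_mul_const, integral_complex_ofReal, integral_gk]; simp
  rw [h1]
  refine tendsto_integral_of_dominated_convergence (fun u => gk 0 u) (fun n => ?_)
    (gk_integrable 0) (fun n => Eventually.of_forall fun u => ?_) (Eventually.of_forall fun u => ?_)
  · have := (continuous_gk 0).measurable
    exact Measurable.aestronglyMeasurable (by fun_prop)
  · rw [norm_mul, Complex.norm_real, Real.norm_eq_abs, abs_of_nonneg (gk_nonneg 0 _)]
    exact mul_le_of_le_one_right (gk_nonneg 0 _) (hb _)
  · refine Tendsto.const_mul _ ?_
    have h0 : Tendsto (fun n : ℕ => u * (1 / √((n : ℝ) + 1))) atTop (𝓝 0) := by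
      have h2 : Tendsto (fun n : ℕ => √((n : ℝ) + 1)) atTop atTop :=
        Real.tendsto_sqrt_atTop.comp (tendsto_natCast_atTop_atTop.atTop_add tendsto_const_nhds)
      have := (tendsto_inv_atTop_zero.comp h2).const_mul u
      simpa [one_div] using this
    exact hc.tendsto.comp h0

lemma ft_ind_mol_tendsto {G : ℝ → ℂ} (hG : Integrable G) (x : ℝ) :
    Tendsto (fun n => ft ((Set.Ioi 0).indicator (mol n G)) x) atTop
      (𝓝 (ft ((Set.Ioi 0).indicator G) x)) := by
  simp_rw [ft_ind_mol _ hG measurableSet_Ioi x]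
  have e : ft ((Set.Ioi 0).indicator G) x =
      ∫ ξ, G ξ * eR (x * ξ) * (Set.Ioi (0 : ℝ)).indicator (fun _ => (1 : ℂ)) ξ := by
    rw [ft]; congr 1; ext ξ
    by_cases h : ξ ∈ Set.Ioi (0 : ℝ) <;> simp [h]
  have hm : ∀ ξ, Measurable
      (fun v => (Set.Ioi (0 : ℝ)).indicator (fun _ => (1 : ℂ)) (ξ + v) * eR (x * v)) := by
    intro ξ
    have := continuous_eR.measurable
    have h2 : Measurable ((Set.Ioi (0 : ℝ)).indicator (fun _ => (1 : ℂ))) :=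
      measurable_const.indicator measurableSet_Ioi
    fun_prop
  have hb : ∀ ξ v, ‖(Set.Ioi (0 : ℝ)).indicator (fun _ => (1 : ℂ)) (ξ + v) * eR (x * v)‖ ≤ 1 := by
    intro ξ v
    rw [norm_mul, norm_eR, mul_one]
    exact (norm_indicator_le_norm_self _ _).trans (by simp)
  rw [e]
  refine tendsto_integral_of_dominated_convergence (fun ξ => ‖G ξ‖) (fun n => ?_)
    hG.norm (fun n => Eventually.of_forall fun ξ => ?_) ?_
  · refine (hG.aestronglyMeasurable.mul
      (continuous_eR.comp (by fun_prop)).aestronglyMeasurable).mul ?_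
    refine (StronglyMeasurable.integral_prod_right' (f := fun z : ℝ × ℝ => (gk n z.2 : ℂ) *
      ((Set.Ioi (0 : ℝ)).indicator (fun _ => (1 : ℂ)) (z.1 + z.2) * eR (x * z.2)))
        (Measurable.stronglyMeasurable ?_)).aestronglyMeasurable
    have := continuous_eR.measurable
    have := (continuous_gk n).measurable
    have h2 : Measurable ((Set.Ioi (0 : ℝ)).indicator (fun _ => (1 : ℂ))) :=
      measurable_const.indicator measurableSet_Ioi
    fun_prop
  · rw [norm_mul, norm_mul, norm_eR, mul_one]
    refine mul_le_of_le_one_right (norm_nonneg _) ?_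
    rw [← integral_gk n]
    refine norm_integral_le_of_norm_le (gk_integrable n) (Eventually.of_forall fun v => ?_)
    rw [norm_mul, Complex.norm_real, Real.norm_eq_abs, abs_of_nonneg (gk_nonneg n _)]
    exact mul_le_of_le_one_right (gk_nonneg n _) (hb _ _)
  · have h0 : ∀ᵐ ξ : ℝ, ξ ≠ 0 := by
      rw [ae_iff]; simp
    filter_upwards [h0] with ξ hξ
    refine Tendsto.const_mul _ ?_
    have hc : ContinuousAt (fun v => (Set.Ioi (0 : ℝ)).indicator (fun _ => (1 : ℂ)) (ξ + v) *
        eR (x * v)) 0 := by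
      refine ContinuousAt.mul ?_ (continuous_eR.comp (by fun_prop)).continuousAt
      refine ContinuousAt.comp (f := fun v => ξ + v) (x := 0)
        (g := (Set.Ioi (0 : ℝ)).indicator (fun _ => (1 : ℂ))) ?_ (by fun_prop)
      rw [add_zero]
      refine continuousOn_const.continuousAt_indicator ?_
      rw [frontier_Ioi]
      exact hξ
    have := gk_approx (hm ξ) (hb ξ) hc
    simpa [eR] using this

/-- `L¹²` boundedness of the cutoff to the positive half-line for integrable densities. Mollified
densities are bounded, so `hardy_bdd` applies to them, and Fatou's lemma passes to the limit. The
`ℝ≥0∞`-valued form needs no integrability of either side. -/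
lemma hardy_ft {G : ℝ → ℂ} (hG : Integrable G) :
    ∫⁻ x, ENNReal.ofReal (‖ft ((Set.Ioi 0).indicator G) x‖ ^ 12) ≤
      ENNReal.ofReal (2 * (6 * 400 ^ 6 * 401 ^ 5)) * ∫⁻ x, ENNReal.ofReal (‖ft G x‖ ^ 12) := by
  have hcont : ∀ n, Continuous (ft ((Set.Ioi 0).indicator (mol n G))) := fun n =>
    continuous_ft ((mol_integrable n hG).indicator measurableSet_Ioi)
  have hf : ∀ x, ENNReal.ofReal (‖ft ((Set.Ioi 0).indicator G) x‖ ^ 12) =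
      liminf (fun n => ENNReal.ofReal (‖ft ((Set.Ioi 0).indicator (mol n G)) x‖ ^ 12)) atTop :=
    fun x => (Tendsto.liminf_eq
      (ENNReal.tendsto_ofReal ((ft_ind_mol_tendsto hG x).norm.pow 12))).symm
  simp_rw [hf]
  refine le_trans (lintegral_liminf_le fun n => ?_) ?_
  · exact ((hcont n).norm.pow 12).measurable.ennreal_ofReal
  refine liminf_le_of_le (by isBoundedDefault) fun b hb => ?_
  obtain ⟨n, hn⟩ := hb.exists
  refine hn.trans ?_
  obtain ⟨i1, i2, h⟩ := hardy_bdd (mol_integrable n hG) (norm_mol_le n hG)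
  rw [← ofReal_integral_eq_lintegral_ofReal i1 (Eventually.of_forall fun x => by positivity)]
  refine (ENNReal.ofReal_le_ofReal h).trans ?_
  rw [ENNReal.ofReal_mul (by norm_num),
    ofReal_integral_eq_lintegral_ofReal i2 (Eventually.of_forall fun x => by positivity)]
  refine mul_le_mul_right (lintegral_mono fun x => ENNReal.ofReal_le_ofReal ?_) _
  refine pow_le_pow_left₀ (norm_nonneg _) ?_ 12
  rw [ft_mol n hG, norm_mul, Complex.norm_real, Real.norm_eq_abs, abs_of_pos (gw_pos n x)]
  exact mul_le_of_le_one_left (norm_nonneg _) (gw_le n x)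

/-- Extension operator applied to a density on the whole line. -/
def Ex (g : ℝ → ℂ) (x : E3) : ℂ := ∫ ξ, g ξ * eR (cph x ξ)

lemma continuous_Ex {g : ℝ → ℂ} (hg : Integrable g) : Continuous (Ex g) := by
  refine continuous_of_dominated (bound := fun ξ => ‖g ξ‖) (fun x => ?_) (fun x => ?_) hg.norm ?_
  · refine hg.aestronglyMeasurable.mul (continuous_eR.comp ?_).aestronglyMeasurable
    unfold cph; fun_prop
  · exact Eventually.of_forall fun ξ => by simp
  · refine Eventually.of_forall fun ξ => continuous_const.mul (continuous_eR.comp ?_)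
    unfold cph; fun_prop

lemma lintegral_E3 {f : E3 → ℝ≥0∞} (hf : Measurable f) :
    ∫⁻ x, f x = ∫⁻ y : Fin 2 → ℝ, ∫⁻ x : ℝ, f (Fin.cons x y) := by
  have e := volume_preserving_piFinSuccAbove (fun _ : Fin 3 => ℝ) 0
  rw [← e.symm.lintegral_comp_emb (MeasurableEquiv.measurableEmbedding _)]
  rw [Measure.volume_eq_prod, lintegral_prod_symm]
  · refine lintegral_congr fun y => lintegral_congr fun x => ?_
    congr 1
    rw [MeasurableEquiv.piFinSuccAbove_symm_apply, Fin.insertNthEquiv_zero]; rfl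
  · exact (hf.comp (MeasurableEquiv.measurable _)).aemeasurable

/-- The cutoff at `t` is bounded on `L¹²(ℝ³)`: on almost every line in the direction of the first
coordinate it is a translate of the one-dimensional cutoff. -/
lemma Ex_cut {g : ℝ → ℂ} (hg : Integrable g) (t : ℝ) :
    ∫⁻ x, ENNReal.ofReal (‖Ex ((Set.Ioi t).indicator g) x‖ ^ 12) ≤
      ENNReal.ofReal (2 * (6 * 400 ^ 6 * 401 ^ 5)) * ∫⁻ x, ENNReal.ofReal (‖Ex g x‖ ^ 12) := by
  have hm : ∀ {g : ℝ → ℂ}, Integrable g →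
      Measurable fun x => ENNReal.ofReal (‖Ex g x‖ ^ 12) := fun hg =>
    ((continuous_Ex hg).norm.pow 12).measurable.ennreal_ofReal
  rw [lintegral_E3 (hm hg), lintegral_E3 (hm (hg.indicator measurableSet_Ioi)),
    ← lintegral_const_mul']
  swap
  · exact ENNReal.ofReal_ne_top
  refine lintegral_mono fun y => ?_
  let G : ℝ → ℂ := fun ξ => g (ξ + t) * eR (y 0 * (ξ + t) ^ 2 + y 1 * (ξ + t) ^ 3)
  have hG : Integrable G := by
    refine (hg.comp_add_right t).mul_bdd (c := 1) (continuous_eR.comp (by fun_prop)).aestronglyMeasurable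
        (Eventually.of_forall fun z => (norm_eR _).le)
  have e : ∀ (s : Set ℝ) (x : ℝ), ‖Ex (s.indicator g) (Fin.cons x y)‖ =
      ‖ft (((fun ξ => ξ + t) ⁻¹' s).indicator G) x‖ := by
    intro s x
    have : ft (((fun ξ => ξ + t) ⁻¹' s).indicator G) x =
        Ex (s.indicator g) (Fin.cons x y) * eR (- (x * t)) := by
      rw [Ex, ← integral_mul_const, ft, ← integral_add_right_eq_self (fun ξ => s.indicator g ξ * _ * _) t]
      congr 1; ext ξ
      have h1 : eR (cph (Fin.cons x y) (ξ + t)) =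
          eR (y 0 * (ξ + t) ^ 2 + y 1 * (ξ + t) ^ 3) * eR (x * ξ) * eR (x * t) := by
        rw [← eR_add, ← eR_add, cph]; congr 1
        have c1 : (Fin.cons x y : E3) 1 = y 0 := rfl
        have c2 : (Fin.cons x y : E3) 2 = y 1 := rfl
        rw [c1, c2, Fin.cons_zero]; ring
      have h2 : eR (x * t) * eR (-(x * t)) = 1 := by
        rw [← eR_add]; simp [eR]
      rw [h1]
      by_cases h : ξ + t ∈ s
      · have h' : ξ ∈ (fun ξ => ξ + t) ⁻¹' s := h
        rw [Set.indicator_of_mem h, Set.indicator_of_mem h']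
        simp only [G]
        linear_combination (-(g (ξ + t) * eR (y 0 * (ξ + t) ^ 2 + y 1 * (ξ + t) ^ 3) * eR (x * ξ))) * h2
      · have h' : ξ ∉ (fun ξ => ξ + t) ⁻¹' s := h
        rw [Set.indicator_of_notMem h, Set.indicator_of_notMem h']
        simp
    rw [this, norm_mul, norm_eR, mul_one]
  have e1 := e (Set.Ioi t)
  have e2 := e Set.univ
  have e3 : (fun ξ => ξ + t) ⁻¹' Set.Ioi t = Set.Ioi (0 : ℝ) := by ext; simp
  simp only [Set.preimage_univ, Set.indicator_univ, e3] at e1 e2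
  simp_rw [e1, e2]
  exact hardy_ft hG

lemma Ex_cut_memLp {g : ℝ → ℂ} (hg : Integrable g) (h : MemLp (Ex g) 12) (t : ℝ) :
    MemLp (Ex ((Set.Ioi t).indicator g)) 12 := by
  have key : ∀ {f : ℝ → ℂ}, Integrable f → (MemLp (Ex f) 12 ↔
      ∫⁻ x, ENNReal.ofReal (‖Ex f x‖ ^ 12) < ⊤) := by
    intro f hf
    rw [MemLp, and_iff_right (continuous_Ex hf).aestronglyMeasurable,
      eLpNorm_lt_top_iff_lintegral_rpow_enorm_lt_top (by norm_num) (by norm_num)]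
    have : ∀ x, ENNReal.ofReal (‖Ex f x‖ ^ 12) = ‖Ex f x‖ₑ ^ (12 : ℝ≥0∞).toReal := by
      intro x
      rw [ENNReal.ofReal_pow (norm_nonneg _), ofReal_norm, ← ENNReal.rpow_natCast]
      rfl
    simp_rw [this]
  rw [key (hg.indicator measurableSet_Ioi)]
  rw [key hg] at h
  exact (Ex_cut hg t).trans_lt (ENNReal.mul_lt_top ENNReal.ofReal_lt_top h)

/-- If the extension of an integrable density lies in `L¹²`, so does its restriction to any
interval. -/
lemma momExt_memLp {g : ℝ → ℂ} (hg : Integrable g) (h : MemLp (Ex g) 12) {l r : ℝ} (hlr : l ≤ r) :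
    MemLp (momExt g l r) 12 := by
  have : momExt g l r = Ex ((Set.Ioi l).indicator g) - Ex ((Set.Ioi r).indicator g) := by
    ext x
    have hm : ∀ {f : ℝ → ℂ}, Integrable f → Integrable (fun ξ => f ξ * eR (cph x ξ)) := fun hf =>
      hf.mul_bdd (c := 1) (continuous_eR.comp (by unfold cph; fun_prop)).aestronglyMeasurable
        (Eventually.of_forall fun z => (norm_eR _).le)
    rw [momExt_eq hlr, Pi.sub_apply, Ex, Ex, ← integral_sub (hm (hg.indicator measurableSet_Ioi))
      (hm (hg.indicator measurableSet_Ioi))]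
    congr 1; ext ξ
    rw [← sub_mul]; congr 1
    by_cases h1 : l < ξ <;> by_cases h2 : r < ξ
    · simp [h1, h2]
    · simp [h1, h2, not_lt.mp h2]
    · exact absurd (hlr.trans_lt h2) h1
    · simp [h1, h2]
  rw [this]
  exact (Ex_cut_memLp hg h l).sub (Ex_cut_memLp hg h r)

/-! ### Block sums and bilinear integrals -/

/-- The block sum `∑_{a ≤ k < a + L} f k`. -/
def bk (f : ℕ → E3 → ℂ) (a L : ℕ) (x : E3) : ℂ := ∑ i ∈ Finset.range L, f (a + i) x

/-- The sum `∑_{a ≤ k < a + L} ‖f k‖₁₂⁴`. -/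
def Am (f : ℕ → E3 → ℂ) (a L : ℕ) : ℝ :=
  ∑ i ∈ Finset.range L, (∫ x, ‖f (a + i) x‖ ^ 12) ^ ((1 : ℝ) / 3)

/-- The bilinear integral `∫ |F|^m |G|^n`. -/
def Bm (m n : ℕ) (F G : E3 → ℂ) : ℝ := ∫ x, ‖F x‖ ^ m * ‖G x‖ ^ n

/-- Families of `L¹²` functions that behave like the pieces of `E g` over consecutive arcs of the
moment curve, the `k`-th one having frequencies in `γ([k, k + 1])` after rescaling to arcs of length
one. The field `orth` is the only trace of this that the argument uses. -/
structure CurveFam (f : ℕ → E3 → ℂ) : Prop where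
  mem : ∀ k, MemLp (f k) 12
  orth : ∀ a L a' L' : Fin 6 → ℕ,
    ∫ x, ∏ i, (bk f (a i) (L i) x * conj (bk f (a' i) (L' i) x)) ≠ 0 →
    ∃ s t : Fin 6 → ℝ, (∀ i, s i ∈ Set.Icc (a i : ℝ) (a i + L i)) ∧
      (∀ i, t i ∈ Set.Icc (a' i : ℝ) (a' i + L' i)) ∧
      ∀ e : Fin 3, ∑ i, s i ^ (e.val + 1) = ∑ i, t i ^ (e.val + 1)

lemma CurveFam.mem_bk {f : ℕ → E3 → ℂ} (hf : CurveFam f) (a L : ℕ) : MemLp (bk f a L) 12 := by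
  have := memLp_finsetSum (Finset.range L) (f := fun i => f (a + i)) (fun i _ => hf.mem (a + i))
  exact this

lemma MemLp.int12 {F : E3 → ℂ} (hF : MemLp F 12) : Integrable (fun x => ‖F x‖ ^ 12) := by
  have := hF.integrable_norm_pow (p := 12) (by norm_num)
  simpa using this

lemma Bm_integrable {m n : ℕ} (hmn : m + n = 12) {F G : E3 → ℂ} (hF : MemLp F 12)
    (hG : MemLp G 12) : Integrable (fun x => ‖F x‖ ^ m * ‖G x‖ ^ n) := by
  refine ((MemLp.int12 hF).add (MemLp.int12 hG)).mono'
    ((hF.1.norm.pow m).mul (hG.1.norm.pow n)) (Eventually.of_forall fun x => ?_)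
  rw [Real.norm_eq_abs, abs_of_nonneg (by positivity), Pi.add_apply]
  rcases le_total ‖F x‖ ‖G x‖ with h | h
  · calc ‖F x‖ ^ m * ‖G x‖ ^ n ≤ ‖G x‖ ^ m * ‖G x‖ ^ n := by gcongr
      _ = ‖G x‖ ^ 12 := by rw [← pow_add, hmn]
      _ ≤ _ := le_add_of_nonneg_left (by positivity)
  · calc ‖F x‖ ^ m * ‖G x‖ ^ n ≤ ‖F x‖ ^ m * ‖F x‖ ^ n := by gcongr
      _ = ‖F x‖ ^ 12 := by rw [← pow_add, hmn]
      _ ≤ _ := le_add_of_nonneg_right (by positivity)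

lemma Bm_nonneg (m n : ℕ) (F G : E3 → ℂ) : 0 ≤ Bm m n F G :=
  integral_nonneg fun _ => by positivity

lemma prod6_integrable {F G : Fin 6 → E3 → ℂ} (hF : ∀ i, MemLp (F i) 12)
    (hG : ∀ i, MemLp (G i) 12) : Integrable (fun x => ∏ i, (F i x * conj (G i x))) := by
  have hb : Integrable (fun x => ∑ i, (‖F i x‖ ^ 12 + ‖G i x‖ ^ 12)) :=
    integrable_finsetSum _ fun i _ => (MemLp.int12 (hF i)).add (MemLp.int12 (hG i))
  refine hb.mono' ?_ (Eventually.of_forall fun x => ?_)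
  · refine Finset.aestronglyMeasurable_fun_prod _ fun i _ => ?_
    exact (hF i).1.mul (Complex.continuous_conj.comp_aestronglyMeasurable (hG i).1)
  · rw [norm_prod]
    simp_rw [norm_mul, RCLike.norm_conj]
    obtain ⟨j, -, hj⟩ := Finset.exists_max_image Finset.univ
      (fun i => max ‖F i x‖ ‖G i x‖) Finset.univ_nonempty
    set M := max ‖F j x‖ ‖G j x‖
    have hM : 0 ≤ M := le_max_of_le_left (norm_nonneg _)
    calc ∏ i, (‖F i x‖ * ‖G i x‖) ≤ ∏ _i : Fin 6, (M * M) := by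
          refine Finset.prod_le_prod (fun i _ => by positivity) fun i hi => ?_
          have := hj i hi
          exact mul_le_mul ((le_max_left _ _).trans this) ((le_max_right _ _).trans this)
            (norm_nonneg _) hM
      _ = M ^ 12 := by simp; ring
      _ ≤ ‖F j x‖ ^ 12 + ‖G j x‖ ^ 12 := by
          rcases max_choice ‖F j x‖ ‖G j x‖ with h | h
          · simp only [M, h]; exact le_add_of_nonneg_right (by positivity)
          · simp only [M, h]; exact le_add_of_nonneg_left (by positivity)
      _ ≤ _ := Finset.single_le_sum (f := fun i => ‖F i x‖ ^ 12 + ‖G i x‖ ^ 12)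
          (fun i _ => by positivity) (Finset.mem_univ j)

lemma sum_range_blocks {M : Type*} [AddCommMonoid M] (u : ℕ → M) (a R0 ρ : ℕ) :
    ∑ i ∈ Finset.range (R0 * ρ), u (a + i) =
      ∑ j ∈ Finset.range R0, ∑ i ∈ Finset.range ρ, u (a + j * ρ + i) := by
  induction R0 with
  | zero => simp
  | succ n ih =>
    rw [Finset.sum_range_succ, ← ih, Nat.succ_mul, Finset.sum_range_add]
    simp_rw [add_assoc]

lemma bk_split (f : ℕ → E3 → ℂ) (a R0 ρ : ℕ) (x : E3) :
    bk f a (R0 * ρ) x = ∑ j ∈ Finset.range R0, bk f (a + j * ρ) ρ x :=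
  sum_range_blocks (fun k => f k x) a R0 ρ

lemma Am_split (f : ℕ → E3 → ℂ) (a R0 ρ : ℕ) :
    Am f a (R0 * ρ) = ∑ j ∈ Finset.range R0, Am f (a + j * ρ) ρ :=
  sum_range_blocks (fun k => (∫ x, ‖f k x‖ ^ 12) ^ ((1 : ℝ) / 3)) a R0 ρ

lemma Am_nonneg (f : ℕ → E3 → ℂ) (a L : ℕ) : 0 ≤ Am f a L :=
  Finset.sum_nonneg fun _ _ => by positivity

/-- Almost orthogonality in the weighted space `L²(W)`: the sum over `β` of the cross terms of `α`
is controlled by the number `D α` of those that do not vanish. -/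
lemma almost_orth {ι : Type*} [DecidableEq ι] (s : Finset ι) (G : ι → E3 → ℂ) (W : E3 → ℝ)
    (hW : ∀ x, 0 ≤ W x)
    (hint : ∀ α ∈ s, ∀ β ∈ s, Integrable (fun x => G α x * conj (G β x) * (W x : ℂ)))
    (D : ι → ℝ) (hD : ∀ α ∈ s, ((s.filter fun β =>
      ∫ x, G α x * conj (G β x) * (W x : ℂ) ≠ 0).card : ℝ) ≤ D α) :
    ∫ x, ‖∑ α ∈ s, G α x‖ ^ 2 * W x ≤ ∑ α ∈ s, D α * ∫ x, ‖G α x‖ ^ 2 * W x := by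
  set c : ι → ι → ℂ := fun α β => ∫ x, G α x * conj (G β x) * (W x : ℂ) with hc
  set X : ι → ℝ := fun α => ∫ x, ‖G α x‖ ^ 2 * W x with hX
  have hXi : ∀ α ∈ s, Integrable (fun x => ‖G α x‖ ^ 2 * W x) := by
    intro α hα
    have := (hint α hα α hα).re
    refine this.congr (Eventually.of_forall fun x => ?_)
    simp only [RCLike.re_to_complex]
    rw [Complex.mul_conj', ← Complex.ofReal_pow, ← Complex.ofReal_mul, Complex.ofReal_re]
  have hX0 : ∀ α, 0 ≤ X α := fun α => integral_nonneg fun x => mul_nonneg (by positivity) (hW x)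
  have hsymm : ∀ α β, c β α = conj (c α β) := by
    intro α β
    simp only [hc]
    rw [← integral_conj]
    congr 1; ext x
    simp only [map_mul, Complex.conj_conj, Complex.conj_ofReal]
    ring
  have hcb : ∀ α ∈ s, ∀ β ∈ s, ‖c α β‖ ≤ (X α + X β) / 2 := by
    intro α hα β hβ
    have : (X α + X β) / 2 = ∫ x, (‖G α x‖ ^ 2 * W x + ‖G β x‖ ^ 2 * W x) / 2 := by
      rw [integral_div, integral_add (hXi α hα) (hXi β hβ)]
    rw [this]
    refine norm_integral_le_of_norm_le (((hXi α hα).add (hXi β hβ)).div_const 2)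
      (Eventually.of_forall fun x => ?_)
    rw [norm_mul, norm_mul, RCLike.norm_conj, Complex.norm_real, Real.norm_eq_abs,
      abs_of_nonneg (hW x)]
    nlinarith [hW x, mul_nonneg (hW x) (sq_nonneg (‖G α x‖ - ‖G β x‖))]
  have e1 : ((∫ x, ‖∑ α ∈ s, G α x‖ ^ 2 * W x : ℝ) : ℂ) = ∑ α ∈ s, ∑ β ∈ s, c α β := by
    have : ∀ x, ((‖∑ α ∈ s, G α x‖ ^ 2 * W x : ℝ) : ℂ) =
        ∑ α ∈ s, ∑ β ∈ s, G α x * conj (G β x) * (W x : ℂ) := by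
      intro x
      rw [Complex.ofReal_mul, Complex.ofReal_pow, ← Complex.mul_conj', map_sum, Finset.sum_mul_sum,
        Finset.sum_mul]
      simp_rw [Finset.sum_mul]
    rw [← integral_complex_ofReal]
    simp_rw [this]
    rw [integral_finsetSum _ fun α hα => integrable_finsetSum _ fun β hβ => hint α hα β hβ]
    refine Finset.sum_congr rfl fun α hα => ?_
    rw [integral_finsetSum _ fun β hβ => hint α hα β hβ]
  have e2 : ∫ x, ‖∑ α ∈ s, G α x‖ ^ 2 * W x ≤ ∑ α ∈ s, ∑ β ∈ s, ‖c α β‖ := by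
    calc _ ≤ ‖((∫ x, ‖∑ α ∈ s, G α x‖ ^ 2 * W x : ℝ) : ℂ)‖ := by
          rw [Complex.norm_real]; exact le_abs_self _
      _ ≤ _ := by
          rw [e1]
          exact (norm_sum_le _ _).trans (Finset.sum_le_sum fun α _ => norm_sum_le _ _)
  refine e2.trans ?_
  have e3 : ∑ α ∈ s, ∑ β ∈ s, ‖c α β‖ ≤
      ∑ α ∈ s, ∑ β ∈ s, if c α β ≠ 0 then (X α + X β) / 2 else 0 := by
    refine Finset.sum_le_sum fun α hα => Finset.sum_le_sum fun β hβ => ?_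
    split_ifs with h
    · exact hcb α hα β hβ
    · rw [not_not.mp h, norm_zero]
  have e4 : ∑ α ∈ s, ∑ β ∈ s, (if c α β ≠ 0 then (X α + X β) / 2 else 0) =
      ∑ α ∈ s, ∑ β ∈ s, if c α β ≠ 0 then X α else 0 := by
    have h1 : ∑ α ∈ s, ∑ β ∈ s, (if c α β ≠ 0 then X β else 0) =
        ∑ α ∈ s, ∑ β ∈ s, if c α β ≠ 0 then X α else 0 := by
      rw [Finset.sum_comm]
      refine Finset.sum_congr rfl fun α _ => Finset.sum_congr rfl fun β _ => ?_
      have : c β α ≠ 0 ↔ c α β ≠ 0 := by rw [hsymm α β, map_ne_zero]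
      simp only [this]
    have h2 : ∀ α β, (if c α β ≠ 0 then (X α + X β) / 2 else 0) =
        ((if c α β ≠ 0 then X α else 0) + (if c α β ≠ 0 then X β else 0)) / 2 := by
      intro α β; split_ifs <;> simp
    simp_rw [h2, ← Finset.sum_div, Finset.sum_add_distrib]
    rw [h1]; ring
  refine (e3.trans_eq e4).trans (Finset.sum_le_sum fun α hα => ?_)
  rw [← Finset.sum_filter, Finset.sum_const, nsmul_eq_mul]
  exact mul_le_mul_of_nonneg_right (hD α hα) (hX0 α)

lemma holder_interp {u v : E3 → ℝ} (hu : Integrable u) (hv : Integrable v) (hu0 : ∀ x, 0 ≤ u x)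
    (hv0 : ∀ x, 0 ≤ v x) {θ : ℝ} (h0 : 0 < θ) (h1 : θ < 1) :
    ∫ x, u x ^ θ * v x ^ (1 - θ) ≤ (∫ x, u x) ^ θ * (∫ x, v x) ^ (1 - θ) := by
  have h1' : 0 < 1 - θ := by linarith
  have hpq : (1 / θ).HolderConjugate (1 / (1 - θ)) := by
    rw [Real.holderConjugate_iff]
    refine ⟨by rw [lt_div_iff₀ h0]; linarith, by field_simp; ring⟩
  have hm : ∀ {u : E3 → ℝ} {t : ℝ}, 0 < t → Integrable u → (∀ x, 0 ≤ u x) →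
      MemLp (fun x => u x ^ t) (ENNReal.ofReal (1 / t)) := by
    intro u t ht hu hu0
    have h := (memLp_one_iff_integrable.mpr hu).norm_rpow_div (ENNReal.ofReal t)
    have e1 : (1 : ℝ≥0∞) / ENNReal.ofReal t = ENNReal.ofReal (1 / t) := by
      rw [ENNReal.ofReal_div_of_pos ht, ENNReal.ofReal_one]
    rw [e1, ENNReal.toReal_ofReal ht.le] at h
    refine (memLp_congr_ae (Eventually.of_forall fun x => ?_)).mp h
    simp only [Real.norm_eq_abs, abs_of_nonneg (hu0 x)]
  have := integral_mul_le_Lp_mul_Lq_of_nonneg hpq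
    (Eventually.of_forall fun x => rpow_nonneg (hu0 x) θ)
    (Eventually.of_forall fun x => rpow_nonneg (hv0 x) (1 - θ))
    (hm h0 hu hu0) (hm h1' hv hv0)
  simp only [one_div_one_div] at this
  refine this.trans_eq ?_
  congr 3
  · ext x; rw [← rpow_mul (hu0 x), mul_one_div_cancel h0.ne', rpow_one]
  · ext x; rw [← rpow_mul (hv0 x), mul_one_div_cancel h1'.ne', rpow_one]

/-- Hölder interpolation between two bilinear integrals of total degree twelve. -/
lemma Bm_holder {m n m1 n1 m2 n2 : ℕ} {F G : E3 → ℂ} (hF : MemLp F 12) (hG : MemLp G 12)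
    (h1 : m1 + n1 = 12) (h2 : m2 + n2 = 12) {θ : ℝ} (h0 : 0 < θ) (h1' : θ < 1)
    (hm : (m : ℝ) = m1 * θ + m2 * (1 - θ)) (hn : (n : ℝ) = n1 * θ + n2 * (1 - θ)) :
    Bm m n F G ≤ Bm m1 n1 F G ^ θ * Bm m2 n2 F G ^ (1 - θ) := by
  refine le_trans (le_of_eq ?_) (holder_interp (Bm_integrable h1 hF hG) (Bm_integrable h2 hF hG)
    (fun x => by positivity) (fun x => by positivity) h0 h1')
  have key : ∀ (y : ℝ) (k k1 k2 : ℕ), 0 ≤ y → (k : ℝ) = k1 * θ + k2 * (1 - θ) →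
      y ^ k = (y ^ k1) ^ θ * (y ^ k2) ^ (1 - θ) := by
    intro y k k1 k2 hy hk
    rw [← rpow_natCast y k1, ← rpow_natCast y k2, ← rpow_natCast y k, ← rpow_mul hy, ← rpow_mul hy,
      hk, ← rpow_add_of_nonneg hy (by positivity) (by have : 0 < 1 - θ := by linarith
                                                      positivity)]
  rw [Bm]; congr 1; ext x
  rw [mul_rpow (by positivity) (by positivity), mul_rpow (by positivity) (by positivity),
    key _ m m1 m2 (norm_nonneg (F x)) hm, key _ n n1 n2 (norm_nonneg (G x)) hn]
  ring

lemma Bm_comm (m n : ℕ) (F G : E3 → ℂ) : Bm m n F G = Bm n m G F := by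
  rw [Bm, Bm]; congr 1; ext x; ring

/-! ### Transversality for the power-sum system -/

/-- The power-sum system is invariant under translation. -/
lemma shift_sums {s t : Fin 6 → ℝ}
    (h : ∀ e : Fin 3, ∑ i, s i ^ (e.val + 1) = ∑ i, t i ^ (e.val + 1)) (c : ℝ) :
    ∑ i, (s i - c) ^ 2 = ∑ i, (t i - c) ^ 2 ∧ ∑ i, (s i - c) ^ 3 = ∑ i, (t i - c) ^ 3 := by
  have h1 := h 0
  have h2 := h 1
  have h3 := h 2
  simp only [Fin.sum_univ_six, Fin.val_zero, Fin.val_one, Fin.val_two] at h1 h2 h3 ⊢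
  norm_num at h1 h2 h3
  constructor
  · linear_combination h2 - 2 * c * h1
  · linear_combination h3 - 3 * c * h2 + 3 * c ^ 2 * h1

/-- Transversality in the linear step. Both sides have five unknowns in an interval of length `μ`;
the third-degree equation centred there bounds the difference of the cubes of the two remaining
ones by `5 μ ^ 3`, and these are at distance at least `d`, where the cube has derivative at least
`3 d ^ 2`. -/
lemma nt_two {s t : Fin 6 → ℝ}
    (h : ∀ e : Fin 3, ∑ i, s i ^ (e.val + 1) = ∑ i, t i ^ (e.val + 1)) {c d μ : ℝ} (hd : 0 ≤ d)
    (hs : ∀ i, i ≠ 0 → s i ∈ Set.Icc c (c + μ)) (ht : ∀ i, i ≠ 0 → t i ∈ Set.Icc c (c + μ))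
    (hsep : (c + d ≤ s 0 ∧ c + d ≤ t 0) ∨ (s 0 ≤ c - d ∧ t 0 ≤ c - d)) :
    3 * d ^ 2 * |s 0 - t 0| ≤ 5 * μ ^ 3 := by
  obtain ⟨-, h3⟩ := shift_sums h c
  have hb : ∀ u : ℝ, u ∈ Set.Icc c (c + μ) → 0 ≤ (u - c) ^ 3 ∧ (u - c) ^ 3 ≤ μ ^ 3 := by
    intro u hu
    have h1 : 0 ≤ u - c := by linarith [hu.1]
    have h2 : u - c ≤ μ := by linarith [hu.2]
    exact ⟨by positivity, pow_le_pow_left₀ h1 h2 3⟩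
  have e : |(s 0 - c) ^ 3 - (t 0 - c) ^ 3| ≤ 5 * μ ^ 3 := by
    simp only [Fin.sum_univ_six] at h3
    have a1 := hb _ (hs 1 (by decide)); have a2 := hb _ (hs 2 (by decide))
    have a3 := hb _ (hs 3 (by decide)); have a4 := hb _ (hs 4 (by decide))
    have a5 := hb _ (hs 5 (by decide)); have b1 := hb _ (ht 1 (by decide))
    have b2 := hb _ (ht 2 (by decide)); have b3 := hb _ (ht 3 (by decide))
    have b4 := hb _ (ht 4 (by decide)); have b5 := hb _ (ht 5 (by decide))
    rw [abs_le]; constructor <;> linarith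
  have f : (s 0 - c) ^ 3 - (t 0 - c) ^ 3 =
      (s 0 - t 0) * ((s 0 - c) ^ 2 + (s 0 - c) * (t 0 - c) + (t 0 - c) ^ 2) := by ring
  have g : 3 * d ^ 2 ≤ (s 0 - c) ^ 2 + (s 0 - c) * (t 0 - c) + (t 0 - c) ^ 2 := by
    rcases hsep with ⟨u, v⟩ | ⟨u, v⟩
    · have u' : d ≤ s 0 - c := by linarith
      have v' : d ≤ t 0 - c := by linarith
      nlinarith [mul_le_mul u' v' hd (hd.trans u'), mul_self_le_mul_self hd u', mul_self_le_mul_self hd v']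
    · have u' : d ≤ c - s 0 := by linarith
      have v' : d ≤ c - t 0 := by linarith
      nlinarith [mul_le_mul u' v' hd (hd.trans u'), mul_self_le_mul_self hd u', mul_self_le_mul_self hd v']
  rw [f, abs_mul, abs_of_nonneg (le_trans (by positivity) g)] at e
  calc 3 * d ^ 2 * |s 0 - t 0| ≤ _ * |s 0 - t 0| := mul_le_mul_of_nonneg_right g (abs_nonneg _)
    _ ≤ 5 * μ ^ 3 := by rw [mul_comm]; exact e

/-- Pairs `(T1, T2)` and `(T3, T4)` of numbers in `[d, m]` with nearly equal second and third power
sums have nearly equal sums, and nearly agree up to permutation. -/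
lemma nt_core {T1 T2 T3 T4 d m μ : ℝ} (hd : 0 < d) (hμ : 0 ≤ μ) (hμm : μ ≤ m)
    (hμd : 4 * μ ^ 2 ≤ d ^ 2)
    (h1 : T1 ∈ Set.Icc d m) (h2 : T2 ∈ Set.Icc d m) (h3 : T3 ∈ Set.Icc d m)
    (h4 : T4 ∈ Set.Icc d m)
    (hE2 : |T1 ^ 2 + T2 ^ 2 - T3 ^ 2 - T4 ^ 2| ≤ 4 * μ ^ 2)
    (hE3 : |T1 ^ 3 + T2 ^ 3 - T3 ^ 3 - T4 ^ 3| ≤ 4 * μ ^ 3) :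
    d ^ 2 * |T1 + T2 - T3 - T4| ≤ 8 * m * μ ^ 2 ∧
    d ^ 2 * |(T1 - T3) * (T1 - T4)| ≤ 16 * m ^ 2 * μ ^ 2 + 2 * μ ^ 2 * d ^ 2 := by
  obtain ⟨l1, u1⟩ := h1
  obtain ⟨l2, u2⟩ := h2
  obtain ⟨l3, u3⟩ := h3
  obtain ⟨l4, u4⟩ := h4
  have hm : 0 < m := by linarith
  set E2 := T1 ^ 2 + T2 ^ 2 - T3 ^ 2 - T4 ^ 2 with hE2d
  set E3' := T1 ^ 3 + T2 ^ 3 - T3 ^ 3 - T4 ^ 3 with hE3d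
  set K := (T1 + T2) ^ 2 + (T1 + T2) * (T3 + T4) + (T3 + T4) ^ 2 - 3 * (T3 ^ 2 + T4 ^ 2) with hK
  have id1 : (T1 + T2 - T3 - T4) * K = 3 * (T1 + T2) * E2 - 2 * E3' := by
    rw [hK, hE2d, hE3d]; ring
  have hE2' := abs_le.mp hE2
  have p12 : d ^ 2 ≤ T1 * T2 := by nlinarith
  have p34 : d ^ 2 ≤ T3 * T4 := by nlinarith
  -- `(T1 + T2)²` and `(T3 + T4)²` both exceed `A`, hence so does `(T1 + T2)(T3 + T4)`.
  have hK4 : 4 * d ^ 2 ≤ K := by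
    set A := T3 ^ 2 + T4 ^ 2 + 2 * d ^ 2 - d ^ 2 with hA
    have a1 : A ≤ (T1 + T2) ^ 2 - 0 := by nlinarith
    have a2 : A + d ^ 2 ≤ (T3 + T4) ^ 2 := by nlinarith
    have hA0 : 0 ≤ A := by nlinarith [sq_nonneg T3, sq_nonneg T4, sq_nonneg d]
    have a3 : A ≤ (T1 + T2) * (T3 + T4) := by
      refine abs_le_of_sq_le_sq' (a := A) ?_
        (mul_nonneg (by linarith) (by linarith)) |>.2
      calc A ^ 2 = A * A := by ring
        _ ≤ (T1 + T2) ^ 2 * (T3 + T4) ^ 2 := by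
            refine mul_le_mul (by linarith) (by nlinarith [sq_nonneg d]) hA0 (by positivity)
        _ = _ := by ring
    nlinarith
  have hS : d ^ 2 * |T1 + T2 - T3 - T4| ≤ 8 * m * μ ^ 2 := by
    have e1 : |T1 + T2 - T3 - T4| * K ≤ 32 * m * μ ^ 2 := by
      have hK0 : 0 ≤ K := le_trans (by positivity) hK4
      calc |T1 + T2 - T3 - T4| * K = |3 * (T1 + T2) * E2 - 2 * E3'| := by
            rw [← id1, abs_mul, abs_of_nonneg hK0]
        _ ≤ |3 * (T1 + T2) * E2| + |2 * E3'| := abs_sub _ _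
        _ = 3 * (T1 + T2) * |E2| + 2 * |E3'| := by
            rw [abs_mul, abs_mul 2, abs_of_nonneg (by linarith : 0 ≤ 3 * (T1 + T2)), abs_two]
        _ ≤ 3 * (m + m) * (4 * μ ^ 2) + 2 * (4 * μ ^ 3) := by gcongr
        _ ≤ 32 * m * μ ^ 2 := by nlinarith [sq_nonneg μ, mul_nonneg (sub_nonneg.mpr hμm) (sq_nonneg μ)]
    have := mul_le_mul_of_nonneg_left hK4 (abs_nonneg (T1 + T2 - T3 - T4))
    linarith
  refine ⟨hS, ?_⟩
  have id2 : (T1 - T3) * (T1 - T4) =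
      (T1 + T2 - T3 - T4) * ((T1 - T2 - T3 - T4) / 2) + E2 / 2 := by
    rw [hE2d]; ring
  have hb : |(T1 - T2 - T3 - T4) / 2| ≤ 2 * m := by rw [abs_le]; constructor <;> linarith
  calc d ^ 2 * |(T1 - T3) * (T1 - T4)|
      ≤ d ^ 2 * (|T1 + T2 - T3 - T4| * |(T1 - T2 - T3 - T4) / 2| + |E2| / 2) := by
        rw [id2]
        refine mul_le_mul_of_nonneg_left ((abs_add_le _ _).trans (le_of_eq ?_)) (by positivity)
        rw [abs_mul, abs_div E2, abs_two]
    _ = (d ^ 2 * |T1 + T2 - T3 - T4|) * |(T1 - T2 - T3 - T4) / 2| + d ^ 2 * (|E2| / 2) := by ring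
    _ ≤ (8 * m * μ ^ 2) * (2 * m) + d ^ 2 * (4 * μ ^ 2 / 2) := by gcongr
    _ = _ := by ring

/-- Transversality in the quadratic step: if the four unknowns of each side other than the first two
lie in an interval of length `μ`, then the pairs `(s 0, s 1)` and `(t 0, t 1)`, which are
separated from it, nearly agree up to permutation. -/
lemma nt_four {s t : Fin 6 → ℝ}
    (h : ∀ e : Fin 3, ∑ i, s i ^ (e.val + 1) = ∑ i, t i ^ (e.val + 1)) {c d m μ : ℝ} (hd : 0 < d)
    (hμ : 0 ≤ μ) (hμm : μ ≤ m) (hμd : 4 * μ ^ 2 ≤ d ^ 2)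
    (hs : ∀ i, i ≠ 0 → i ≠ 1 → s i ∈ Set.Icc c (c + μ))
    (ht : ∀ i, i ≠ 0 → i ≠ 1 → t i ∈ Set.Icc c (c + μ))
    (hsep : (∀ i, i = 0 ∨ i = 1 → s i - c ∈ Set.Icc d m ∧ t i - c ∈ Set.Icc d m) ∨
      (∀ i, i = 0 ∨ i = 1 → c - s i ∈ Set.Icc d m ∧ c - t i ∈ Set.Icc d m)) :
    d ^ 2 * |s 0 + s 1 - t 0 - t 1| ≤ 8 * m * μ ^ 2 ∧
    d ^ 2 * |(s 0 - t 0) * (s 0 - t 1)| ≤ 16 * m ^ 2 * μ ^ 2 + 2 * μ ^ 2 * d ^ 2 ∧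
    d ^ 2 * |(s 1 - t 0) * (s 1 - t 1)| ≤ 16 * m ^ 2 * μ ^ 2 + 2 * μ ^ 2 * d ^ 2 := by
  obtain ⟨h2, h3⟩ := shift_sums h c
  have hb : ∀ u : ℝ, u ∈ Set.Icc c (c + μ) → (0 ≤ (u - c) ^ 3 ∧ (u - c) ^ 3 ≤ μ ^ 3) ∧
      0 ≤ (u - c) ^ 2 ∧ (u - c) ^ 2 ≤ μ ^ 2 := by
    intro u hu
    have h1 : 0 ≤ u - c := by linarith [hu.1]
    have h2 : u - c ≤ μ := by linarith [hu.2]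
    exact ⟨⟨by positivity, pow_le_pow_left₀ h1 h2 3⟩, by positivity, pow_le_pow_left₀ h1 h2 2⟩
  simp only [Fin.sum_univ_six] at h2 h3
  have a2 := hb _ (hs 2 (by decide) (by decide))
  have a3 := hb _ (hs 3 (by decide) (by decide)); have a4 := hb _ (hs 4 (by decide) (by decide))
  have a5 := hb _ (hs 5 (by decide) (by decide))
  have b2 := hb _ (ht 2 (by decide) (by decide)); have b3 := hb _ (ht 3 (by decide) (by decide))
  have b4 := hb _ (ht 4 (by decide) (by decide)); have b5 := hb _ (ht 5 (by decide) (by decide))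
  have E2 : |(s 0 - c) ^ 2 + (s 1 - c) ^ 2 - (t 0 - c) ^ 2 - (t 1 - c) ^ 2| ≤ 4 * μ ^ 2 := by
    rw [abs_le]; constructor <;> linarith
  have E3 : |(s 0 - c) ^ 3 + (s 1 - c) ^ 3 - (t 0 - c) ^ 3 - (t 1 - c) ^ 3| ≤ 4 * μ ^ 3 := by
    rw [abs_le]; constructor <;> linarith
  rcases hsep with hsep | hsep
  · have k1 := nt_core hd hμ hμm hμd (hsep 0 (Or.inl rfl)).1 (hsep 1 (Or.inr rfl)).1
      (hsep 0 (Or.inl rfl)).2 (hsep 1 (Or.inr rfl)).2 E2 E3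
    have k2 := nt_core hd hμ hμm hμd (hsep 1 (Or.inr rfl)).1 (hsep 0 (Or.inl rfl)).1
      (hsep 0 (Or.inl rfl)).2 (hsep 1 (Or.inr rfl)).2
      (by rw [add_comm ((s 1 - c) ^ 2)]; exact E2) (by rw [add_comm ((s 1 - c) ^ 3)]; exact E3)
    refine ⟨?_, ?_, ?_⟩
    · convert k1.1 using 3; ring
    · convert k1.2 using 3; ring
    · convert k2.2 using 3; ring
  · have E2' : |(c - s 0) ^ 2 + (c - s 1) ^ 2 - (c - t 0) ^ 2 - (c - t 1) ^ 2| ≤ 4 * μ ^ 2 := by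
      convert E2 using 2; ring
    have E3' : |(c - s 0) ^ 3 + (c - s 1) ^ 3 - (c - t 0) ^ 3 - (c - t 1) ^ 3| ≤ 4 * μ ^ 3 := by
      rw [← abs_neg]; convert E3 using 2; ring
    have k1 := nt_core hd hμ hμm hμd (hsep 0 (Or.inl rfl)).1 (hsep 1 (Or.inr rfl)).1
      (hsep 0 (Or.inl rfl)).2 (hsep 1 (Or.inr rfl)).2 E2' E3'
    have k2 := nt_core hd hμ hμm hμd (hsep 1 (Or.inr rfl)).1 (hsep 0 (Or.inl rfl)).1
      (hsep 0 (Or.inl rfl)).2 (hsep 1 (Or.inr rfl)).2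
      (by rw [add_comm ((c - s 1) ^ 2)]; exact E2') (by rw [add_comm ((c - s 1) ^ 3)]; exact E3')
    refine ⟨?_, ?_, ?_⟩
    · convert k1.1 using 2; rw [← abs_neg]; congr 1; ring
    · convert k1.2 using 3; ring
    · convert k2.2 using 3; ring

/-- A set of natural numbers within distance `r` of a point has at most `2 r + 1` elements. -/
lemma card_near (s : Finset ℕ) {x r : ℝ} (hr : 0 ≤ r) (h : ∀ j ∈ s, |(j : ℝ) - x| ≤ r) :
    (s.card : ℝ) ≤ 2 * r + 1 := by
  rcases s.eq_empty_or_nonempty with rfl | hs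
  · simp; positivity
  · have h1 : s ⊆ Finset.Icc (s.min' hs) (s.max' hs) := fun j hj =>
      Finset.mem_Icc.mpr ⟨s.min'_le j hj, s.le_max' j hj⟩
    have h2 := Finset.card_le_card h1
    rw [Nat.card_Icc] at h2
    have h3 := abs_le.mp (h _ (s.min'_mem hs))
    have h4 := abs_le.mp (h _ (s.max'_mem hs))
    have h5 : s.card + s.min' hs ≤ s.max' hs + 1 := by
      have : s.min' hs ≤ s.max' hs := s.min'_le _ (s.max'_mem hs)
      omega
    have h6 : (s.card : ℝ) + s.min' hs ≤ s.max' hs + 1 := by exact_mod_cast h5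
    linarith

/-! ### The linear step and a counting lemma -/

/-- Linear step: against the tenth power of a transversal block of length `μ`, the subblocks of
length `ρ` are almost orthogonal when `μ ^ 3 / d ^ 2` is at most comparable to `ρ`. -/
lemma l2_step {f : ℕ → E3 → ℂ} (hf : CurveFam f) (p R0 ρ c μ : ℕ) {d Λ : ℝ} (hρ : 0 < ρ)
    (hd : 0 < d) (hΛ0 : 0 ≤ Λ) (hsep : (c : ℝ) + d ≤ p ∨ (p : ℝ) + R0 * ρ + d ≤ c)
    (hΛ : 5 * (μ : ℝ) ^ 3 ≤ 3 * d ^ 2 * (Λ * ρ)) :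
    Bm 2 10 (bk f p (R0 * ρ)) (bk f c μ) ≤
      (2 * Λ + 3) * ∑ j ∈ Finset.range R0, Bm 2 10 (bk f (p + j * ρ) ρ) (bk f c μ) := by
  have hρ' : (0 : ℝ) < ρ := by exact_mod_cast hρ
  set F' := bk f c μ with hF'
  set A : ℕ → Fin 6 → ℕ := fun j i => if i = 0 then p + j * ρ else c with hA
  set B : Fin 6 → ℕ := fun i => if i = 0 then ρ else μ with hB
  have hprod : ∀ j j' : ℕ, (fun x => bk f (p + j * ρ) ρ x * conj (bk f (p + j' * ρ) ρ x) *
      ((‖F' x‖ ^ 10 : ℝ) : ℂ)) =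
      fun x => ∏ i, (bk f (A j i) (B i) x * conj (bk f (A j' i) (B i) x)) := by
    intro j j'
    ext x
    have : ((‖F' x‖ ^ 10 : ℝ) : ℂ) = (F' x * conj (F' x)) ^ 5 := by
      rw [Complex.mul_conj']; push_cast; ring
    rw [this, Fin.prod_univ_six]
    simp only [hA, hB, hF', if_true, Fin.reduceEq, if_false, one_ne_zero]
    ring
  have key := almost_orth (Finset.range R0) (fun j => bk f (p + j * ρ) ρ) (fun x => ‖F' x‖ ^ 10)
    (fun x => by positivity)
    (fun j _ j' _ => by
      rw [hprod]; exact prod6_integrable (fun i => hf.mem_bk _ _) (fun i => hf.mem_bk _ _))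
    (fun _ => 2 * Λ + 3) (fun j hj => by
      have hj := Finset.mem_range.mp hj
      refine (card_near (x := j) (r := Λ + 1) _ (by positivity) ?_).trans (by linarith)
      intro j' hj'
      rw [Finset.mem_filter, Finset.mem_range, hprod] at hj'
      obtain ⟨hj'R, hne⟩ := hj'
      obtain ⟨s, t, hs, ht, hst⟩ := hf.orth _ _ _ _ hne
      have hs0 := hs 0
      have ht0 := ht 0
      simp only [hA, hB, if_true, Nat.cast_add, Nat.cast_mul] at hs0 ht0
      have hle : ∀ j : ℕ, j < R0 → (j : ℝ) * ρ + ρ ≤ R0 * ρ := by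
        intro j hj
        have : (j : ℝ) + 1 ≤ R0 := by exact_mod_cast hj
        nlinarith
      have h1 := hle j hj
      have h2 := hle j' hj'R
      have h3 : (0 : ℝ) ≤ j * ρ := by positivity
      have h4 : (0 : ℝ) ≤ j' * ρ := by positivity
      have := nt_two hst (c := c) (μ := μ) hd.le
        (fun i hi => by have := hs i; simpa [hA, hB, hi] using this)
        (fun i hi => by have := ht i; simpa [hA, hB, hi] using this)
        (hsep.imp (fun h => ⟨by linarith [hs0.1], by linarith [ht0.1]⟩)
          (fun h => ⟨by linarith [hs0.2], by linarith [ht0.2]⟩))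
      have h5 : |s 0 - t 0| ≤ Λ * ρ :=
        le_of_mul_le_mul_left (this.trans hΛ) (by positivity)
      have h6 := abs_le.mp h5
      rw [abs_le]
      constructor
      · refine le_of_mul_le_mul_right (a := (ρ : ℝ)) ?_ hρ'
        linarith [hs0.1, hs0.2, ht0.1, ht0.2]
      · refine le_of_mul_le_mul_right (a := (ρ : ℝ)) ?_ hρ'
        linarith [hs0.1, hs0.2, ht0.1, ht0.2])
  rw [Finset.mul_sum]
  refine le_trans (le_of_eq ?_) key
  rw [Bm]
  simp_rw [bk_split f p R0 ρ]

/-- Harmonic sums centred at `j`. -/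
lemma harm_two (R0 j : ℕ) (hj : j < R0) :
    ∑ i ∈ Finset.range R0, 1 / (1 + |(j : ℝ) - i|) ≤ 2 * (1 + Real.log R0) := by
  set D : ℕ → ℕ := fun i => ((j : ℤ) - i).natAbs with hD
  have e : ∀ i : ℕ, 1 / (1 + |(j : ℝ) - i|) = (fun n : ℕ => 1 / (1 + (n : ℝ))) (D i) := by
    intro i
    simp only [hD]
    have h : (((((j : ℤ) - i).natAbs : ℤ)) : ℝ) = |(j : ℝ) - i| := by
      rw [Int.natCast_natAbs]; push_cast; rfl
    rw [← h, Int.cast_natCast]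
  have hm : ∀ i ∈ Finset.range R0, D i ∈ Finset.range R0 := by
    intro i hi
    simp only [hD, Finset.mem_range] at hi ⊢
    omega
  simp_rw [e]
  rw [← Finset.sum_fiberwise_of_maps_to hm]
  have h1 : ∀ n ∈ Finset.range R0, ∑ i ∈ (Finset.range R0).filter (fun i => D i = n),
      (fun n : ℕ => 1 / (1 + (n : ℝ))) (D i) ≤ 2 * ((n + 1 : ℕ) : ℝ)⁻¹ := by
    intro n _
    have hc : ((Finset.range R0).filter (fun i => D i = n)).card ≤ 2 := by
      refine (Finset.card_le_card (t := {j - n, j + n}) ?_).trans Finset.card_le_two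
      intro i hi
      simp only [hD, Finset.mem_filter, Finset.mem_insert, Finset.mem_singleton] at hi ⊢
      omega
    rw [Finset.sum_congr rfl (g := fun _ => 1 / (1 + (n : ℝ)))
      (fun i hi => by rw [(Finset.mem_filter.mp hi).2])]
    rw [Finset.sum_const, nsmul_eq_mul]
    push_cast
    rw [one_div, add_comm (1 : ℝ)]
    have : ((((Finset.range R0).filter (fun i => D i = n)).card : ℕ) : ℝ) ≤ 2 := by
      exact_mod_cast hc
    gcongr
  refine (Finset.sum_le_sum h1).trans ?_
  rw [← Finset.mul_sum]
  have := harmonic_le_one_add_log R0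
  rw [harmonic] at this
  push_cast at this ⊢
  linarith

/-- The number of pairs that can interact with `(j1, j2)` in the quadratic step. The condition on the
product says that one of `t3`, `t4` is close to `t1`, within about `K R0 / |j1 - j2|`, which produces
the harmonic weight. -/
lemma pair_count (R0 j1 j2 : ℕ) (h1 : j1 < R0) (h2 : j2 < R0) {Λ K : ℝ} (hΛ : 0 ≤ Λ) (hK : 0 ≤ K)
    (S : Finset (ℕ × ℕ)) (hS : ∀ β ∈ S, β.1 < R0 ∧ β.2 < R0 ∧ ∃ t1 t2 t3 t4 : ℝ,
      t1 ∈ Set.Icc (j1 : ℝ) (j1 + 1) ∧ t2 ∈ Set.Icc (j2 : ℝ) (j2 + 1) ∧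
      t3 ∈ Set.Icc (β.1 : ℝ) (β.1 + 1) ∧ t4 ∈ Set.Icc (β.2 : ℝ) (β.2 + 1) ∧
      |t1 + t2 - t3 - t4| ≤ Λ ∧ |(t1 - t3) * (t1 - t4)| ≤ K * R0) :
    (S.card : ℝ) ≤ (2 * Λ + 5) * ((16 * (K + Λ + 3) + 4) * R0) * (1 / (1 + |(j1 : ℝ) - j2|)) := by
  set M := K + Λ + 3 with hM
  have hR1 : (1 : ℝ) ≤ R0 := by exact_mod_cast (by omega : 1 ≤ R0)
  have hlt : ∀ j : ℕ, j < R0 → (j : ℝ) + 1 ≤ R0 := fun j hj => by exact_mod_cast hj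
  have hfib : ∀ j ∈ S.image Prod.fst, ((S.filter fun β => β.1 = j).card : ℝ) ≤ 2 * Λ + 5 := by
    intro j _
    have hinj : Set.InjOn Prod.snd ((S.filter fun β => β.1 = j : Finset (ℕ × ℕ)) : Set (ℕ × ℕ)) := by
      intro x hx y hy hxy
      have hx' := (Finset.mem_filter.mp (Finset.mem_coe.mp hx)).2
      have hy' := (Finset.mem_filter.mp (Finset.mem_coe.mp hy)).2
      exact Prod.ext (hx'.trans hy'.symm) hxy
    rw [← Finset.card_image_of_injOn hinj]
    refine (card_near (x := (j1 : ℝ) + j2 - j) (r := Λ + 2) _ (by positivity) ?_).trans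
      (by linarith)
    intro j4 hj4
    obtain ⟨β, hβ, rfl⟩ := Finset.mem_image.mp hj4
    obtain ⟨hβS, rfl⟩ := Finset.mem_filter.mp hβ
    obtain ⟨-, -, t1, t2, t3, t4, a1, a2, a3, a4, hs, -⟩ := hS β hβS
    have := abs_le.mp hs
    rw [abs_le]
    constructor <;> linarith [a1.1, a1.2, a2.1, a2.2, a3.1, a3.2, a4.1, a4.2]
  have hprod : ∀ j ∈ S.image Prod.fst, j < R0 ∧ |(j : ℝ) - j1| * |(j : ℝ) - j2| ≤ M * R0 := by
    intro j hj
    obtain ⟨β, hβS, rfl⟩ := Finset.mem_image.mp hj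
    obtain ⟨b1, b2, t1, t2, t3, t4, a1, a2, a3, a4, hs, hq⟩ := hS β hβS
    refine ⟨b1, ?_⟩
    have hb1 := hlt _ b1
    have hj1 := hlt _ h1
    have hj2 := hlt _ h2
    have n1 : (0 : ℝ) ≤ j1 := by positivity
    have n2 : (0 : ℝ) ≤ j2 := by positivity
    have n3 : (0 : ℝ) ≤ β.1 := by positivity
    have e1 : |t1 - t3| ≤ R0 := by
      rw [abs_le]; constructor <;> linarith [a1.1, a1.2, a3.1, a3.2]
    have e2 : |t2 - t3| ≤ R0 := by
      rw [abs_le]; constructor <;> linarith [a2.1, a2.2, a3.1, a3.2]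
    have e3 : |t1 - t3| * |t2 - t3| ≤ K * R0 + Λ * R0 := by
      rw [← abs_mul]
      have : (t1 - t3) * (t2 - t3) = (t1 - t3) * (t1 + t2 - t3 - t4) - (t1 - t3) * (t1 - t4) := by
        ring
      rw [this]
      refine (abs_sub _ _).trans ?_
      rw [abs_mul (t1 - t3) (t1 + t2 - t3 - t4)]
      have := mul_le_mul e1 hs (abs_nonneg _) (by positivity)
      linarith
    have d1 : |(β.1 : ℝ) - j1| ≤ |t1 - t3| + 1 := by
      have := neg_abs_le (t1 - t3)
      have := le_abs_self (t1 - t3)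
      rw [abs_le]; constructor <;> linarith [a1.1, a1.2, a3.1, a3.2]
    have d2 : |(β.1 : ℝ) - j2| ≤ |t2 - t3| + 1 := by
      have := neg_abs_le (t2 - t3)
      have := le_abs_self (t2 - t3)
      rw [abs_le]; constructor <;> linarith [a2.1, a2.2, a3.1, a3.2]
    calc |(β.1 : ℝ) - j1| * |(β.1 : ℝ) - j2| ≤ (|t1 - t3| + 1) * (|t2 - t3| + 1) := by gcongr
      _ ≤ M * R0 := by rw [hM]; nlinarith
  have himg : ((S.image Prod.fst).card : ℝ) ≤
      ((16 * M + 4) * R0) * (1 / (1 + |(j1 : ℝ) - j2|)) := by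
    have hM0 : 0 ≤ M := by positivity
    set T := S.image Prod.fst with hT
    rcases eq_or_ne j1 j2 with rfl | hne
    · have h3 : T ⊆ Finset.range R0 := fun j hj => Finset.mem_range.mpr (hprod j hj).1
      have h4 := Finset.card_le_card h3
      rw [Finset.card_range] at h4
      have h5 : (T.card : ℝ) ≤ R0 := by exact_mod_cast h4
      simp only [sub_self, abs_zero, add_zero, div_one, mul_one]
      nlinarith
    · set k := |(j1 : ℝ) - j2| with hk
      have hk1 : 1 ≤ k := by
        have h3 : (1 : ℤ) ≤ |(j1 : ℤ) - j2| := Int.one_le_abs (by omega)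
        have : ((1 : ℤ) : ℝ) ≤ ((|(j1 : ℤ) - j2| : ℤ) : ℝ) := by exact_mod_cast h3
        push_cast at this; exact this
      have hkR : k ≤ R0 := by
        have := hlt _ h1
        have := hlt _ h2
        have n1 : (0 : ℝ) ≤ j1 := by positivity
        have n2 : (0 : ℝ) ≤ j2 := by positivity
        rw [hk, abs_le]; constructor <;> linarith
      set r := 2 * M * R0 / k with hr
      have hr0 : 0 ≤ r := by positivity
      have hrk : r * k = 2 * M * R0 := by rw [hr]; field_simp
      -- Any index is at distance at least `k / 2` from one of `j1`, `j2`.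
      have hsub : T ⊆ T.filter (fun j => |(j : ℝ) - j1| ≤ r) ∪
          T.filter (fun j => |(j : ℝ) - j2| ≤ r) := by
        intro j hj
        by_contra hcon
        simp only [Finset.mem_union, Finset.mem_filter, hj, true_and, not_or, not_le] at hcon
        have h3 := (hprod j hj).2
        have h4 : k ≤ |(j : ℝ) - j1| + |(j : ℝ) - j2| := by
          have : (j1 : ℝ) - j2 = ((j : ℝ) - j2) - ((j : ℝ) - j1) := by ring
          rw [hk, this, add_comm]; exact abs_sub _ _
        nlinarith [hcon.1, hcon.2, abs_nonneg ((j : ℝ) - j1), abs_nonneg ((j : ℝ) - j2)]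
      have h5 := (Finset.card_le_card hsub).trans (Finset.card_union_le _ _)
      have h6 : (T.card : ℝ) ≤ (2 * r + 1) + (2 * r + 1) := by
        have h5R := (Nat.cast_le (α := ℝ)).mpr h5
        rw [Nat.cast_add] at h5R
        refine h5R.trans (add_le_add ?_ ?_)
        · exact card_near _ hr0 fun j hj => (Finset.mem_filter.mp hj).2
        · exact card_near _ hr0 fun j hj => (Finset.mem_filter.mp hj).2
      rw [mul_one_div, le_div_iff₀ (by linarith)]
      calc (T.card : ℝ) * (1 + k) ≤ (4 * r + 2) * (2 * k) := by
            refine mul_le_mul (by linarith) (by linarith) (by linarith) (by linarith)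
        _ = 8 * (r * k) + 4 * k := by ring
        _ ≤ (16 * M + 4) * R0 := by rw [hrk]; linarith
  have hnat : (S.card : ℝ) ≤ (2 * Λ + 5) * (S.image Prod.fst).card := by
    have h3 := Finset.card_eq_sum_card_image Prod.fst S
    rw [h3]
    push_cast
    refine (Finset.sum_le_sum hfib).trans_eq ?_
    rw [Finset.sum_const, nsmul_eq_mul, mul_comm]
  rw [mul_assoc]
  exact hnat.trans (mul_le_mul_of_nonneg_left himg (by linarith))

/-! ### The quadratic step -/

/-- Quadratic step: against the eighth power of a transversal block of length `μ`, the products of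
two subblocks of length `ρ` are almost orthogonal. The number of cross terms of a pair decays like
the inverse of the distance of its members, and summing these weights costs a logarithm. -/
lemma l4_step {f : ℕ → E3 → ℂ} (hf : CurveFam f) (p R0 ρ c μ : ℕ) {d m Λ K : ℝ} (hρ : 0 < ρ)
    (hd : 0 < d) (hμm : (μ : ℝ) ≤ m) (hμd : 4 * (μ : ℝ) ^ 2 ≤ d ^ 2) (hΛ0 : 0 ≤ Λ) (hK0 : 0 ≤ K)
    (hsep : ((c : ℝ) + d ≤ p ∧ (p : ℝ) + R0 * ρ ≤ c + m) ∨
      ((p : ℝ) + R0 * ρ + d ≤ c ∧ (c : ℝ) ≤ p + m))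
    (hΛ : 8 * m * (μ : ℝ) ^ 2 ≤ d ^ 2 * (Λ * ρ))
    (hK : 16 * m ^ 2 * (μ : ℝ) ^ 2 + 2 * (μ : ℝ) ^ 2 * d ^ 2 ≤ d ^ 2 * (K * R0 * ρ ^ 2)) :
    Bm 4 8 (bk f p (R0 * ρ)) (bk f c μ) ≤
      (2 * Λ + 5) * ((16 * (K + Λ + 3) + 4) * R0) * (2 * (1 + Real.log R0)) *
        ∑ j ∈ Finset.range R0, Bm 4 8 (bk f (p + j * ρ) ρ) (bk f c μ) := by
  have hρ' : (0 : ℝ) < ρ := by exact_mod_cast hρ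
  set F' := bk f c μ with hF'
  set F : ℕ → E3 → ℂ := fun j => bk f (p + j * ρ) ρ with hF
  set P : ℝ := (2 * Λ + 5) * ((16 * (K + Λ + 3) + 4) * R0) with hP
  have hP0 : 0 ≤ P := by positivity
  set A : ℕ × ℕ → Fin 6 → ℕ := fun α i =>
    if i = 0 then p + α.1 * ρ else if i = 1 then p + α.2 * ρ else c with hA
  set B : Fin 6 → ℕ := fun i => if i = 0 then ρ else if i = 1 then ρ else μ with hB
  have hprod : ∀ α β : ℕ × ℕ, (fun x => (F α.1 x * F α.2 x) * conj (F β.1 x * F β.2 x) *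
      ((‖F' x‖ ^ 8 : ℝ) : ℂ)) =
      fun x => ∏ i, (bk f (A α i) (B i) x * conj (bk f (A β i) (B i) x)) := by
    intro α β
    ext x
    have : ((‖F' x‖ ^ 8 : ℝ) : ℂ) = (F' x * conj (F' x)) ^ 4 := by
      rw [Complex.mul_conj']; push_cast; ring
    rw [this, Fin.prod_univ_six]
    simp only [hA, hB, hF, hF', if_true, Fin.reduceEq, if_false, one_ne_zero, map_mul]
    ring
  have hmemF : ∀ j, MemLp (F j) 12 := fun j => hf.mem_bk _ _
  have hle : ∀ j : ℕ, j < R0 → (j : ℝ) * ρ + ρ ≤ R0 * ρ := by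
    intro j hj
    have : (j : ℝ) + 1 ≤ R0 := by exact_mod_cast hj
    nlinarith
  have key := almost_orth (Finset.range R0 ×ˢ Finset.range R0) (fun α x => F α.1 x * F α.2 x)
    (fun x => ‖F' x‖ ^ 8) (fun x => by positivity)
    (fun α _ β _ => by
      rw [hprod]; exact prod6_integrable (fun i => hf.mem_bk _ _) (fun i => hf.mem_bk _ _))
    (fun α => P * (1 / (1 + |(α.1 : ℝ) - α.2|))) (fun α hα => by
      rw [Finset.mem_product, Finset.mem_range, Finset.mem_range] at hα
      refine pair_count R0 α.1 α.2 hα.1 hα.2 hΛ0 hK0 _ ?_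
      intro β hβ
      rw [Finset.mem_filter, Finset.mem_product, Finset.mem_range, Finset.mem_range, hprod] at hβ
      obtain ⟨⟨b1, b2⟩, hne⟩ := hβ
      obtain ⟨s, t, hs, ht, hst⟩ := hf.orth _ _ _ _ hne
      have hs0 := hs 0
      have ht0 := ht 0
      have hs1 := hs 1
      have ht1 := ht 1
      simp only [hA, hB, if_true, Nat.cast_add, Nat.cast_mul, one_ne_zero, if_false]
        at hs0 ht0 hs1 ht1
      have hbox : ∀ (j : ℕ) (u : ℝ), j < R0 → u ∈ Set.Icc ((p : ℝ) + j * ρ) (p + j * ρ + ρ) →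
          (p : ℝ) ≤ u ∧ u ≤ p + R0 * ρ := by
        intro j u hj hu
        have h1 := hle j hj
        have h3 : (0 : ℝ) ≤ j * ρ := by positivity
        exact ⟨by linarith [hu.1], by linarith [hu.2]⟩
      have c1 := hbox _ _ hα.1 hs0
      have c2 := hbox _ _ hα.2 hs1
      have c3 := hbox _ _ b1 ht0
      have c4 := hbox _ _ b2 ht1
      have nt := nt_four hst (c := c) (μ := μ) hd (by positivity) hμm hμd
        (fun i hi hi1 => by have := hs i; simpa [hA, hB, hi, hi1] using this)
        (fun i hi hi1 => by have := ht i; simpa [hA, hB, hi, hi1] using this)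
        (by
          rcases hsep with ⟨h1, h2⟩ | ⟨h1, h2⟩
          · left
            rintro i (rfl | rfl)
            · exact ⟨⟨by linarith [c1.1], by linarith [c1.2]⟩, ⟨by linarith [c3.1], by linarith [c3.2]⟩⟩
            · exact ⟨⟨by linarith [c2.1], by linarith [c2.2]⟩, ⟨by linarith [c4.1], by linarith [c4.2]⟩⟩
          · right
            rintro i (rfl | rfl)
            · exact ⟨⟨by linarith [c1.2], by linarith [c1.1]⟩, ⟨by linarith [c3.2], by linarith [c3.1]⟩⟩
            · exact ⟨⟨by linarith [c2.2], by linarith [c2.1]⟩, ⟨by linarith [c4.2], by linarith [c4.1]⟩⟩)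
      have hsc : ∀ (j : ℕ) (u : ℝ), u ∈ Set.Icc ((p : ℝ) + j * ρ) (p + j * ρ + ρ) →
          (u - p) / ρ ∈ Set.Icc (j : ℝ) (j + 1) := by
        intro j u hu
        constructor
        · rw [le_div_iff₀ hρ']; linarith [hu.1]
        · rw [div_le_iff₀ hρ']; linarith [hu.2]
      refine ⟨b1, b2, (s 0 - p) / ρ, (s 1 - p) / ρ, (t 0 - p) / ρ, (t 1 - p) / ρ, hsc _ _ hs0,
        hsc _ _ hs1, hsc _ _ ht0, hsc _ _ ht1, ?_, ?_⟩
      · have h1 : (s 0 - p) / ρ + (s 1 - p) / ρ - (t 0 - p) / ρ - (t 1 - p) / ρ =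
            (s 0 + s 1 - t 0 - t 1) / ρ := by field_simp; ring
        rw [h1, abs_div, abs_of_pos hρ', div_le_iff₀ hρ']
        exact le_of_mul_le_mul_left (nt.1.trans hΛ) (by positivity)
      · have h1 : ((s 0 - p) / ρ - (t 0 - p) / ρ) * ((s 0 - p) / ρ - (t 1 - p) / ρ) =
            ((s 0 - t 0) * (s 0 - t 1)) / ρ ^ 2 := by field_simp; ring
        rw [h1, abs_div, abs_of_pos (by positivity : (0 : ℝ) < (ρ : ℝ) ^ 2),
          div_le_iff₀ (by positivity)]
        exact le_of_mul_le_mul_left (nt.2.1.trans hK) (by positivity))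
  have hI : ∀ j, Integrable (fun x => ‖F j x‖ ^ 4 * ‖F' x‖ ^ 8) := fun j =>
    Bm_integrable (by norm_num) (hmemF j) (hf.mem_bk _ _)
  set b : ℕ → ℝ := fun j => Bm 4 8 (F j) F' with hb
  have hb0 : ∀ j, 0 ≤ b j := fun j => Bm_nonneg _ _ _ _
  have hcross : ∀ α : ℕ × ℕ, ∫ x, ‖F α.1 x * F α.2 x‖ ^ 2 * ‖F' x‖ ^ 8 ≤
      (b α.1 + b α.2) / 2 := by
    intro α
    have : (b α.1 + b α.2) / 2 =
        ∫ x, (‖F α.1 x‖ ^ 4 * ‖F' x‖ ^ 8 + ‖F α.2 x‖ ^ 4 * ‖F' x‖ ^ 8) / 2 := by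
      rw [integral_div, integral_add (hI _) (hI _)]; rfl
    rw [this]
    refine integral_mono_of_nonneg (Eventually.of_forall fun x => by positivity)
      (((hI _).add (hI _)).div_const 2) (Eventually.of_forall fun x => ?_)
    simp only [norm_mul, mul_pow]
    have h8 : 0 ≤ ‖F' x‖ ^ 8 := by positivity
    nlinarith [mul_nonneg h8 (sq_nonneg (‖F α.1 x‖ ^ 2 - ‖F α.2 x‖ ^ 2))]
  set w : ℕ → ℕ → ℝ := fun i j => 1 / (1 + |(i : ℝ) - j|) with hw
  have hw0 : ∀ i j, 0 ≤ w i j := fun i j => by positivity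
  have hwc : ∀ i j, w i j = w j i := fun i j => by simp only [hw]; rw [abs_sub_comm]
  have hlhs : Bm 4 8 (bk f p (R0 * ρ)) F' = ∫ x, ‖∑ α ∈ Finset.range R0 ×ˢ Finset.range R0,
      F α.1 x * F α.2 x‖ ^ 2 * ‖F' x‖ ^ 8 := by
    rw [Bm]
    congr 1; ext x
    have : ∑ α ∈ Finset.range R0 ×ˢ Finset.range R0, F α.1 x * F α.2 x =
        (∑ j ∈ Finset.range R0, F j x) * ∑ j ∈ Finset.range R0, F j x := by
      rw [Finset.sum_product, Finset.sum_mul_sum]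
    rw [this, bk_split f p R0 ρ x, norm_mul]
    ring
  rw [hlhs]
  refine key.trans ?_
  calc ∑ α ∈ Finset.range R0 ×ˢ Finset.range R0, P * (1 / (1 + |(α.1 : ℝ) - α.2|)) *
        ∫ x, ‖F α.1 x * F α.2 x‖ ^ 2 * ‖F' x‖ ^ 8
      ≤ ∑ α ∈ Finset.range R0 ×ˢ Finset.range R0, P * w α.1 α.2 * ((b α.1 + b α.2) / 2) :=
        Finset.sum_le_sum fun α _ =>
          mul_le_mul_of_nonneg_left (hcross α) (mul_nonneg hP0 (hw0 _ _))
    _ = P / 2 * (∑ i ∈ Finset.range R0, ∑ j ∈ Finset.range R0, w i j * b i) +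
        P / 2 * (∑ i ∈ Finset.range R0, ∑ j ∈ Finset.range R0, w i j * b j) := by
        rw [Finset.sum_product, ← mul_add, ← Finset.sum_add_distrib, Finset.mul_sum]
        refine Finset.sum_congr rfl fun i _ => ?_
        rw [← Finset.sum_add_distrib, Finset.mul_sum]
        exact Finset.sum_congr rfl fun j _ => by ring
    _ = P * ∑ i ∈ Finset.range R0, b i * ∑ j ∈ Finset.range R0, w i j := by
        have : ∑ i ∈ Finset.range R0, ∑ j ∈ Finset.range R0, w i j * b j =
            ∑ i ∈ Finset.range R0, ∑ j ∈ Finset.range R0, w i j * b i := by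
          rw [Finset.sum_comm]
          exact Finset.sum_congr rfl fun i _ => Finset.sum_congr rfl fun j _ => by rw [hwc]
        rw [this, ← add_mul, add_halves]
        congr 1
        refine Finset.sum_congr rfl fun i _ => ?_
        rw [Finset.mul_sum]
        exact Finset.sum_congr rfl fun j _ => by ring
    _ ≤ P * ∑ i ∈ Finset.range R0, b i * (2 * (1 + Real.log R0)) := by
        refine mul_le_mul_of_nonneg_left (Finset.sum_le_sum fun i hi => ?_) hP0
        exact mul_le_mul_of_nonneg_left (harm_two R0 i (Finset.mem_range.mp hi)) (hb0 i)
    _ = _ := by rw [← Finset.sum_mul]; ring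

/-! ### The two steps at powers of a fixed number -/

/-- The blocks `[p, p + l]` and `[c, c + l']` lie in a common window of length `N ^ R` and are
at distance at least `2 N ^ (R - 1)`. -/
def SepBlk (N R p l c l' : ℕ) : Prop :=
  (c + l' + 2 * N ^ (R - 1) ≤ p ∧ p + l ≤ c + N ^ R) ∨
    (p + l + 2 * N ^ (R - 1) ≤ c ∧ c + l' ≤ p + N ^ R)

lemma SepBlk.symm {N R p l c l' : ℕ} (h : SepBlk N R p l c l') : SepBlk N R c l' p l := Or.symm h

lemma SepBlk.mono {N R p l c l' p' l₁ : ℕ} (h : SepBlk N R p l c l') (h1 : p ≤ p')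
    (h2 : p' + l₁ ≤ p + l) : SepBlk N R p' l₁ c l' := by
  rcases h with ⟨u, v⟩ | ⟨u, v⟩
  · left; constructor <;> omega
  · right; constructor <;> omega

lemma SepBlk.sub {N R p R0 ρ c l' j : ℕ} (h : SepBlk N R p (R0 * ρ) c l') (hj : j < R0) :
    SepBlk N R (p + j * ρ) ρ c l' := by
  refine h.mono (Nat.le_add_right _ _) ?_
  have : (j + 1) * ρ ≤ R0 * ρ := Nat.mul_le_mul_right _ hj
  rw [add_mul, one_mul] at this
  omega

/-- `l2_step` at lengths that are powers of `N`. A block of length `N ^ (R - b)` is dual to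
subblocks of length `N ^ (R - 3 b)`; here `R = r + 3 (b + 1)`. -/
lemma l2_pow {f : ℕ → E3 → ℂ} (hf : CurveFam f) {N : ℕ} (hN : 2 ≤ N) (r b p R0 c : ℕ)
    (hsep : SepBlk N (r + 3 * (b + 1)) p (R0 * N ^ r) c (N ^ (r + 2 * (b + 1)))) :
    Bm 2 10 (bk f p (R0 * N ^ r)) (bk f c (N ^ (r + 2 * (b + 1)))) ≤
      (3 * (N : ℝ) ^ 2) * ∑ j ∈ Finset.range R0,
        Bm 2 10 (bk f (p + j * N ^ r) (N ^ r)) (bk f c (N ^ (r + 2 * (b + 1)))) := by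
  have hN2 : (2 : ℝ) ≤ N := by exact_mod_cast hN
  have hs := l2_step hf p R0 (N ^ r) c (N ^ (r + 2 * (b + 1)))
    (d := 2 * (N : ℝ) ^ (r + 3 * b + 2)) (Λ := (N : ℝ) ^ 2) (by positivity) (by positivity)
    (by positivity) ?_ ?_
  · refine hs.trans (mul_le_mul_of_nonneg_right (by nlinarith) ?_)
    exact Finset.sum_nonneg fun _ _ => Bm_nonneg _ _ _ _
  · have e : r + 3 * (b + 1) - 1 = r + 3 * b + 2 := by omega
    rw [SepBlk, e] at hsep
    rcases hsep with ⟨u, -⟩ | ⟨u, -⟩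
    · left
      have : c + 2 * N ^ (r + 3 * b + 2) ≤ p := by omega
      exact_mod_cast this
    · right
      exact_mod_cast u
  · have e : 3 * (2 * (N : ℝ) ^ (r + 3 * b + 2)) ^ 2 * ((N : ℝ) ^ 2 * ((N ^ r : ℕ) : ℝ)) =
        12 * ((N ^ (r + 2 * (b + 1)) : ℕ) : ℝ) ^ 3 := by
      push_cast; ring
    rw [e]
    gcongr
    norm_num

/-- `l4_step` at lengths that are powers of `N`. With `R = r + (a + 1) + 2 e`, a block of length
`N ^ (R - (a + 1))` is cut into blocks of length `N ^ (R - (a + 1) - 2 e)` against one of length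
`N ^ (R - (a + 1) - e)`. The factor `N ^ (2 e)` is the number of subblocks. -/
lemma l4_pow {f : ℕ → E3 → ℂ} (hf : CurveFam f) {N : ℕ} (hN : 2 ≤ N) (r e a p c : ℕ)
    (hsep : SepBlk N (r + (a + 1) + 2 * e) p (N ^ (2 * e) * N ^ r) c (N ^ (r + e))) :
    Bm 4 8 (bk f p (N ^ (2 * e) * N ^ r)) (bk f c (N ^ (r + e))) ≤
      (4000 * ((r + (a + 1) + 2 * e : ℕ) : ℝ) * (N : ℝ) ^ 4) * (N : ℝ) ^ (2 * e) *
        ∑ j ∈ Finset.range (N ^ (2 * e)),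
          Bm 4 8 (bk f (p + j * N ^ r) (N ^ r)) (bk f c (N ^ (r + e))) := by
  have hN2 : (2 : ℝ) ≤ N := by exact_mod_cast hN
  set R := r + (a + 1) + 2 * e with hR
  have hR1 : (1 : ℝ) ≤ R := by exact_mod_cast (by omega : 1 ≤ R)
  have hs := l4_step hf p (N ^ (2 * e)) (N ^ r) c (N ^ (r + e))
    (d := 2 * (N : ℝ) ^ (r + a + 2 * e)) (m := (N : ℝ) ^ R) (Λ := 2 * N) (K := 5 * (N : ℝ) ^ 2)
    (by positivity) (by positivity) ?_ ?_ (by positivity) (by positivity) ?_ ?_ ?_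
  · refine hs.trans (mul_le_mul_of_nonneg_right ?_
      (Finset.sum_nonneg fun _ _ => Bm_nonneg _ _ _ _))
    have hlog : Real.log ((N ^ (2 * e) : ℕ) : ℝ) ≤ R * N := by
      push_cast
      rw [Real.log_pow]
      have h1 : Real.log (N : ℝ) ≤ N := (Real.log_le_sub_one_of_pos (by linarith)).trans (by linarith)
      have h2 : ((2 * e : ℕ) : ℝ) ≤ R := by exact_mod_cast (by omega : 2 * e ≤ R)
      exact mul_le_mul h2 h1 (Real.log_nonneg (by linarith)) (by positivity)
    have h1 : 2 * (2 * (N : ℝ)) + 5 ≤ 7 * N := by linarith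
    have h2 : 16 * (5 * (N : ℝ) ^ 2 + 2 * N + 3) + 4 ≤ 113 * (N : ℝ) ^ 2 := by nlinarith
    have h3 : 2 * (1 + Real.log ((N ^ (2 * e) : ℕ) : ℝ)) ≤ 4 * (R * N) := by nlinarith
    have h0 : 0 ≤ 2 * (1 + Real.log ((N ^ (2 * e) : ℕ) : ℝ)) := by
      have : 0 ≤ Real.log ((N ^ (2 * e) : ℕ) : ℝ) := Real.log_natCast_nonneg _
      linarith
    calc _ ≤ (7 * (N : ℝ)) * ((113 * (N : ℝ) ^ 2) * ((N ^ (2 * e) : ℕ) : ℝ)) * (4 * (R * N)) := by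
          gcongr
      _ = 3164 * (R * (N : ℝ) ^ 4 * (N : ℝ) ^ (2 * e)) := by push_cast; ring
      _ ≤ 4000 * (R * (N : ℝ) ^ 4 * (N : ℝ) ^ (2 * e)) := by gcongr; norm_num
      _ = _ := by ring
  · push_cast
    exact pow_le_pow_right₀ (by linarith) (by omega)
  · push_cast
    have : (N : ℝ) ^ (r + e) ≤ (N : ℝ) ^ (r + a + 2 * e) :=
      pow_le_pow_right₀ (by linarith) (by omega)
    rw [mul_pow]
    norm_num
    gcongr
  · have e' : R - 1 = r + a + 2 * e := by omega
    rw [SepBlk, e'] at hsep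
    rcases hsep with ⟨u, v⟩ | ⟨u, v⟩
    · left
      have : c + 2 * N ^ (r + a + 2 * e) ≤ p := by omega
      exact ⟨by exact_mod_cast this, by exact_mod_cast v⟩
    · right
      have : c ≤ p + N ^ R := by omega
      exact ⟨by exact_mod_cast u, by exact_mod_cast this⟩
  · have h1 : (1 : ℝ) ≤ (N : ℝ) ^ a := one_le_pow₀ (by linarith)
    have e1 : 8 * (N : ℝ) ^ R * ((N ^ (r + e) : ℕ) : ℝ) ^ 2 =
        8 * ((N : ℝ) ^ (3 * r + 4 * e + 1)) * ((N : ℝ) ^ a * 1) := by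
      rw [hR]; push_cast; ring
    have e2 : (2 * (N : ℝ) ^ (r + a + 2 * e)) ^ 2 * (2 * N * ((N ^ r : ℕ) : ℝ)) =
        8 * ((N : ℝ) ^ (3 * r + 4 * e + 1)) * ((N : ℝ) ^ a * (N : ℝ) ^ a) := by
      push_cast; ring
    rw [e1, e2]
    gcongr
  · have e1 : 16 * ((N : ℝ) ^ R) ^ 2 * ((N ^ (r + e) : ℕ) : ℝ) ^ 2 +
        2 * ((N ^ (r + e) : ℕ) : ℝ) ^ 2 * (2 * (N : ℝ) ^ (r + a + 2 * e)) ^ 2 =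
        4 * ((N : ℝ) ^ (r + a + 2 * e)) ^ 2 * ((N : ℝ) ^ (r + e)) ^ 2 * (4 * (N : ℝ) ^ 2 + 2) := by
      rw [hR]; push_cast; ring
    have e2 : (2 * (N : ℝ) ^ (r + a + 2 * e)) ^ 2 * (5 * (N : ℝ) ^ 2 * ((N ^ (2 * e) : ℕ) : ℝ) *
        ((N ^ r : ℕ) : ℝ) ^ 2) =
        4 * ((N : ℝ) ^ (r + a + 2 * e)) ^ 2 * ((N : ℝ) ^ (r + e)) ^ 2 * (5 * (N : ℝ) ^ 2) := by
      push_cast; ring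
    rw [e1, e2]
    gcongr
    nlinarith

lemma sum_sqrt_le (y : ℕ → ℝ) (hy : ∀ j, 0 ≤ y j) (M : ℕ) :
    ∑ j ∈ Finset.range M, y j ^ ((1 : ℝ) / 2) ≤
      (M : ℝ) ^ ((1 : ℝ) / 2) * (∑ j ∈ Finset.range M, y j) ^ ((1 : ℝ) / 2) := by
  have h := sq_sum_le_card_mul_sum_sq (s := Finset.range M) (f := fun j => y j ^ ((1 : ℝ) / 2))
  have e : ∀ j, (y j ^ ((1 : ℝ) / 2)) ^ 2 = y j := fun j => by
    rw [← sqrt_eq_rpow, sq_sqrt (hy j)]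
  simp only [e, Finset.card_range] at h
  rw [← mul_rpow (by positivity) (Finset.sum_nonneg fun j _ => hy j), ← sqrt_eq_rpow]
  exact le_sqrt_of_sq_le h

lemma alg_one {q n2 c n3 x y : ℝ} (hq : 0 ≤ q) (hn2 : 0 ≤ n2) (hc : 0 ≤ c) (hn3 : 0 ≤ n3)
    (hx : 0 ≤ x) (hy : 0 ≤ y) :
    (q * n2 * (x * y ^ 2)) ^ ((1 : ℝ) / 4) * (c * n3 * x ^ 3) ^ (1 - (1 : ℝ) / 4) =
      (q ^ ((1 : ℝ) / 4) * c ^ ((3 : ℝ) / 4) * (n2 ^ ((1 : ℝ) / 4) * n3 ^ ((3 : ℝ) / 4)) *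
        x ^ ((5 : ℝ) / 2)) * y ^ ((1 : ℝ) / 2) := by
  have e1 : (y ^ 2) ^ ((1 : ℝ) / 4) = y ^ ((1 : ℝ) / 2) := by
    rw [← rpow_natCast, ← rpow_mul hy]; norm_num
  have e2 : (x ^ 3) ^ ((3 : ℝ) / 4) = x ^ ((9 : ℝ) / 4) := by
    rw [← rpow_natCast, ← rpow_mul hx]; norm_num
  have e3 : x ^ ((5 : ℝ) / 2) = x ^ ((1 : ℝ) / 4) * x ^ ((9 : ℝ) / 4) := by
    rw [← rpow_add_of_nonneg hx (by norm_num) (by norm_num)]; norm_num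
  rw [show (1 : ℝ) - 1 / 4 = 3 / 4 by norm_num]
  rw [mul_rpow (by positivity) (by positivity), mul_rpow hq hn2, mul_rpow hx (by positivity),
    mul_rpow (by positivity) (by positivity), mul_rpow hc hn3, e1, e2, e3]
  ring

lemma alg_two {q n1 l k x y : ℝ} (hq : 0 ≤ q) (hn1 : 0 ≤ n1) (hl : 0 ≤ l) (hk : 0 ≤ k)
    (hx : 0 ≤ x) (hy : 0 ≤ y) :
    (q * n1 * (x * y ^ 2)) ^ ((1 : ℝ) / 3) *
      (l * (k * x ^ ((5 : ℝ) / 2)) * y ^ ((1 : ℝ) / 2)) ^ (1 - (1 : ℝ) / 3) =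
      q ^ ((1 : ℝ) / 3) * l ^ ((2 : ℝ) / 3) * (n1 ^ ((1 : ℝ) / 3) * k ^ ((2 : ℝ) / 3)) *
        (y * x ^ 2) := by
  have e1 : (y ^ 2) ^ ((1 : ℝ) / 3) = y ^ ((2 : ℝ) / 3) := by
    rw [← rpow_natCast, ← rpow_mul hy]; norm_num
  have e2 : (x ^ ((5 : ℝ) / 2)) ^ ((2 : ℝ) / 3) = x ^ ((5 : ℝ) / 3) := by
    rw [← rpow_mul hx]; norm_num
  have e3 : x ^ 2 = x ^ ((1 : ℝ) / 3) * x ^ ((5 : ℝ) / 3) := by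
    rw [← rpow_add_of_nonneg hx (by norm_num) (by norm_num), ← rpow_natCast]; norm_num
  have e4 : y = y ^ ((2 : ℝ) / 3) * (y ^ ((1 : ℝ) / 2)) ^ ((2 : ℝ) / 3) := by
    rw [← rpow_mul hy, ← rpow_add_of_nonneg hy (by norm_num) (by norm_num)]; norm_num
  rw [show (1 : ℝ) - 1 / 3 = 2 / 3 by norm_num]
  rw [mul_rpow (by positivity) (by positivity), mul_rpow hq hn1, mul_rpow hx (by positivity),
    mul_rpow (by positivity) (by positivity), mul_rpow hl (by positivity),
    mul_rpow hk (by positivity), e1, e2, e3]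
  nth_rewrite 3 [e4]
  ring

/-! ### The iterated bilinear estimate -/

/-- The exponent of `N` in the bilinear estimate between blocks of lengths `N ^ (R - a)` and
`N ^ (R - b)` after `n` iterations. It is the exact solution of the recursion in the proof of
`bilin`; when `h > 3` it decreases linearly in `n`. -/
def eExp (h R : ℝ) (n : ℕ) (a b : ℝ) : ℝ :=
  h * R - (a + 2 * b) - (h - 3) * (n * (3 * b - a) + a) / 5

lemma Bm_zero_left (F G : E3 → ℂ) : Bm 0 12 F G = ∫ x, ‖G x‖ ^ 12 := by simp [Bm]

lemma Bm_zero_right (F G : E3 → ℂ) : Bm 12 0 F G = ∫ x, ‖F x‖ ^ 12 := by simp [Bm]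

/-- Hölder's inequality and the linear bound alone give the bilinear estimate for `n = 0`. -/
lemma bilin_zero {F G : E3 → ℂ} (hF : MemLp F 12) (hG : MemLp G 12) {C N h R a b x y : ℝ}
    (hC : 0 ≤ C) (hN : 1 ≤ N) (h3 : 3 ≤ h) (ha : 0 ≤ a) (hb : 0 ≤ b) (hx : 0 ≤ x) (hy : 0 ≤ y)
    (h1 : ∫ z, ‖F z‖ ^ 12 ≤ C * N ^ (h * (R - a)) * x ^ 3)
    (h2 : ∫ z, ‖G z‖ ^ 12 ≤ C * N ^ (h * (R - b)) * y ^ 3) :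
    Bm 4 8 F G ≤ C * N ^ eExp h R 0 a b * (x * y ^ 2) := by
  have hN0 : 0 < N := by linarith
  have key := Bm_holder (m := 4) (n := 8) (m1 := 12) (n1 := 0) (m2 := 0) (n2 := 12) hF hG
    (by norm_num) (by norm_num) (θ := 1 / 3) (by norm_num) (by norm_num) (by norm_num)
    (by norm_num)
  rw [Bm_zero_left, Bm_zero_right] at key
  have e1 : (x ^ 3) ^ ((1 : ℝ) / 3) = x := by rw [← rpow_natCast, ← rpow_mul hx]; norm_num
  have e2 : (y ^ 3) ^ ((2 : ℝ) / 3) = y ^ 2 := by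
    rw [← rpow_natCast, ← rpow_mul hy, ← rpow_natCast]; norm_num
  have e3 : C = C ^ ((1 : ℝ) / 3) * C ^ ((2 : ℝ) / 3) := by
    rw [← rpow_add_of_nonneg hC (by norm_num) (by norm_num)]; norm_num
  have i1 := integral_nonneg (μ := volume) (f := fun z : E3 => ‖F z‖ ^ 12) fun z => by positivity
  have i2 := integral_nonneg (μ := volume) (f := fun z : E3 => ‖G z‖ ^ 12) fun z => by positivity
  calc Bm 4 8 F G ≤ _ := key
    _ ≤ (C * N ^ (h * (R - a)) * x ^ 3) ^ ((1 : ℝ) / 3) *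
        (C * N ^ (h * (R - b)) * y ^ 3) ^ (1 - (1 : ℝ) / 3) := by
        refine mul_le_mul (rpow_le_rpow i1 h1 (by norm_num)) (rpow_le_rpow i2 h2 (by norm_num))
          (by positivity) (by positivity)
    _ = C * N ^ (h * (R - a) * (1 / 3) + h * (R - b) * (2 / 3)) * (x * y ^ 2) := by
        rw [show (1 : ℝ) - 1 / 3 = 2 / 3 by norm_num, mul_rpow (by positivity) (by positivity),
          mul_rpow (by positivity) (by positivity), mul_rpow (by positivity) (by positivity),
          mul_rpow (by positivity) (by positivity), e1, e2, ← rpow_mul hN0.le, ← rpow_mul hN0.le,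
          rpow_add hN0]
        nth_rewrite 3 [e3]
        ring
    _ ≤ _ := by
        gcongr
        · rw [eExp]
          push_cast
          nlinarith [mul_nonneg (sub_nonneg.mpr h3) ha, mul_nonneg (sub_nonneg.mpr h3) hb]

/-- Bilinear estimate for transversal blocks, obtained from a linear bound with exponent `h` by `n`
alternations of the quadratic and the linear steps. The block at `p` is first cut by the quadratic
step into blocks `J` of length `N ^ (R - (2 b - a))`. For these, `∫ |J| ^ 4 |F'| ^ 8` is interpolated
between `∫ |J| ^ 8 |F'| ^ 4`, bounded by induction with the roles exchanged, and
`∫ |J| ^ 2 |F'| ^ 10`. In the latter the linear step cuts `J` into blocks of length `N ^ (R - 3 b)`,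
and a second interpolation between the induction hypothesis and the linear bound concludes. -/
lemma bilin {f : ℕ → E3 → ℂ} (hf : CurveFam f) {N R : ℕ} (hN : 2 ≤ N) {h C : ℝ} (h3 : 3 ≤ h)
    (hC : 0 < C)
    (hP : ∀ p L, ∫ x, ‖bk f p L x‖ ^ 12 ≤ C * (L : ℝ) ^ h * Am f p L ^ 3) {Λ1 Λ2 : ℝ}
    (hΛ1 : Λ1 = 3 * (N : ℝ) ^ 2) (hΛ2 : Λ2 = 4000 * (R : ℝ) * (N : ℝ) ^ 4) (n : ℕ) :
    ∀ a b p c : ℕ, 1 ≤ a → a ≤ b → 3 ^ n * b ≤ R →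
      SepBlk N R p (N ^ (R - a)) c (N ^ (R - b)) →
      Bm 4 8 (bk f p (N ^ (R - a))) (bk f c (N ^ (R - b))) ≤
        C * (Λ1 * Λ2) ^ 2 * (N : ℝ) ^ eExp h R n a b *
          (Am f p (N ^ (R - a)) * Am f c (N ^ (R - b)) ^ 2) := by
  have hN2 : (2 : ℝ) ≤ N := by exact_mod_cast hN
  have hN0 : (0 : ℝ) < N := by linarith
  have hPN : ∀ p a, a ≤ R → ∫ x, ‖bk f p (N ^ (R - a)) x‖ ^ 12 ≤
      C * (N : ℝ) ^ (h * ((R : ℝ) - a)) * Am f p (N ^ (R - a)) ^ 3 := by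
    intro p a ha
    refine (hP p _).trans_eq ?_
    congr 2
    push_cast
    rw [← rpow_natCast, ← rpow_mul hN0.le, Nat.cast_sub ha, mul_comm]
  induction n with
  | zero =>
    intro a b p c ha hab hb hsep
    have hbR : b ≤ R := by simpa using hb
    have hR1 : (1 : ℝ) ≤ R := by exact_mod_cast (by omega : 1 ≤ R)
    have hΛ : 1 ≤ Λ1 * Λ2 := by
      have h1 : 1 ≤ (N : ℝ) ^ 2 := one_le_pow₀ (by linarith)
      have h2 : 1 ≤ (N : ℝ) ^ 4 := one_le_pow₀ (by linarith)
      rw [hΛ1, hΛ2]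
      refine one_le_mul_of_one_le_of_one_le (by linarith) ?_
      exact one_le_mul_of_one_le_of_one_le (by linarith) h2
    refine (bilin_zero (hf.mem_bk _ _) (hf.mem_bk _ _) hC.le (by linarith) h3
      (Nat.cast_nonneg a) (Nat.cast_nonneg b) (Am_nonneg _ _ _) (Am_nonneg _ _ _)
      (hPN p a (hab.trans hbR)) (hPN c b hbR)).trans ?_
    refine mul_le_mul_of_nonneg_right ?_
      (mul_nonneg (Am_nonneg _ _ _) (pow_nonneg (Am_nonneg _ _ _) 2))
    refine mul_le_mul_of_nonneg_right ?_ (by positivity)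
    exact le_mul_of_one_le_right hC.le (one_le_pow₀ hΛ)
  | succ n ih =>
    intro a b p c ha hab hb hsep
    obtain ⟨a', rfl⟩ : ∃ a', a = a' + 1 := ⟨a - 1, by omega⟩
    obtain ⟨e, rfl⟩ : ∃ e, b = a' + 1 + e := ⟨b - (a' + 1), by omega⟩
    set b := a' + 1 + e with hbdef
    have hb' : 3 ^ n * (3 * b) ≤ R := by rw [pow_succ, mul_assoc] at hb; exact hb
    have h3b : 3 * b ≤ R := (Nat.le_mul_of_pos_left _ (by positivity)).trans hb'
    obtain ⟨r', hr'⟩ : ∃ r', R = r' + 3 * b := ⟨R - 3 * b, by omega⟩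
    obtain ⟨r, hr⟩ : ∃ r, R = r + (a' + 1) + 2 * e := ⟨R - (a' + 1) - 2 * e, by omega⟩
    have hR1 : (1 : ℝ) ≤ R := by exact_mod_cast (by omega : 1 ≤ R)
    have hpΛ1 : 0 < Λ1 := by rw [hΛ1]; positivity
    have hpΛ2 : 0 < Λ2 := by rw [hΛ2]; positivity
    set Q := C * (Λ1 * Λ2) ^ 2 with hQ
    have hQp : 0 < Q := by positivity
    clear_value Q
    have q1 : R - (a' + 1) = 2 * e + r := by omega
    have q2 : R - b = r + e := by omega
    have q3 : R - (a' + 1 + 2 * e) = r := by omega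
    have q4 : R - 3 * b = r' := by omega
    have q5 : r = (a' + 1 + b) + r' := by omega
    have q6 : r + e = r' + 2 * (a' + e + 1) := by omega
    have hbe : b = a' + e + 1 := by omega
    rw [q1, pow_add, q2] at hsep ⊢
    set F' := bk f c (N ^ (r + e)) with hF'
    set x := Am f c (N ^ (r + e)) with hx
    have hx0 : 0 ≤ x := Am_nonneg _ _ _
    have hF'm : MemLp F' 12 := hf.mem_bk _ _
    have hI' : ∫ z, ‖F' z‖ ^ 12 ≤ C * (N : ℝ) ^ (h * ((R : ℝ) - b)) * x ^ 3 := by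
      have := hPN c b (by omega)
      rwa [q2] at this
    -- `E1` and `E2` come from the induction hypothesis at the scales `2 b - a` and `3 b`.
    set E1 := eExp h R n (b : ℝ) ((a' + 1 + 2 * e : ℕ) : ℝ) with hE1
    set E2 := eExp h R n (b : ℝ) ((3 * b : ℕ) : ℝ) with hE2
    have hJ : ∀ j ∈ Finset.range (N ^ (2 * e)),
        Bm 4 8 (bk f (p + j * N ^ r) (N ^ r)) F' ≤
          (Q ^ ((1 : ℝ) / 2) * C ^ ((1 : ℝ) / 2) * Λ1 ^ ((2 : ℝ) / 3) *
            (N : ℝ) ^ (E1 / 3 + E2 / 6 + h * ((R : ℝ) - b) / 2 + ((a' + 1 + b : ℕ) : ℝ) / 3)) *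
            (Am f (p + j * N ^ r) (N ^ r) * x ^ 2) := by
      intro j hj
      have hsJ := hsep.sub (Finset.mem_range.mp hj)
      set s := p + j * N ^ r with hs
      set y := Am f s (N ^ r) with hy
      have hy0 : 0 ≤ y := Am_nonneg _ _ _
      have hJm : MemLp (bk f s (N ^ r)) 12 := hf.mem_bk _ _
      have t1 : Bm 8 4 (bk f s (N ^ r)) F' ≤ Q * (N : ℝ) ^ E1 * (x * y ^ 2) := by
        have := ih b (a' + 1 + 2 * e) c s (by omega) (by omega)
          ((Nat.mul_le_mul_left _ (by omega)).trans hb') (by rw [q2, q3]; exact hsJ.symm)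
        rw [q2, q3] at this
        rw [Bm_comm]
        exact this
      have hlen : N ^ r = N ^ (a' + 1 + b) * N ^ r' := by rw [← pow_add, ← q5]
      have hsJ2 : SepBlk N R s (N ^ (a' + 1 + b) * N ^ r') c (N ^ (r + e)) := by
        rw [← hlen]; exact hsJ
      set k := Q ^ ((1 : ℝ) / 4) * C ^ ((3 : ℝ) / 4) *
        (((N : ℝ) ^ E2) ^ ((1 : ℝ) / 4) * ((N : ℝ) ^ (h * ((R : ℝ) - b))) ^ ((3 : ℝ) / 4)) with hk
      have t2 : Bm 2 10 (bk f s (N ^ r)) F' ≤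
          Λ1 * ((k * ((N ^ (a' + 1 + b) : ℕ) : ℝ) ^ ((1 : ℝ) / 2)) * x ^ ((5 : ℝ) / 2)) *
            y ^ ((1 : ℝ) / 2) := by
        have l2 := l2_pow hf hN r' (a' + e) s (N ^ (a' + 1 + b)) c
          (by rw [show r' + 3 * (a' + e + 1) = R by omega, ← q6]; exact hsJ2)
        rw [← q6, ← hlen, ← hΛ1] at l2
        have t3 : ∀ i ∈ Finset.range (N ^ (a' + 1 + b)),
            Bm 2 10 (bk f (s + i * N ^ r') (N ^ r')) F' ≤
              (k * x ^ ((5 : ℝ) / 2)) * (Am f (s + i * N ^ r') (N ^ r')) ^ ((1 : ℝ) / 2) := by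
          intro i hi
          have hsK := hsJ2.sub (Finset.mem_range.mp hi)
          have t4 : Bm 8 4 (bk f (s + i * N ^ r') (N ^ r')) F' ≤
              Q * (N : ℝ) ^ E2 * (x * (Am f (s + i * N ^ r') (N ^ r')) ^ 2) := by
            have := ih b (3 * b) c (s + i * N ^ r') (by omega) (by omega) hb'
              (by rw [q2, q4]; exact hsK.symm)
            rw [q2, q4] at this
            rw [Bm_comm]
            exact this
          have key := Bm_holder (m := 2) (n := 10) (m1 := 8) (n1 := 4) (m2 := 0) (n2 := 12)
            (hf.mem_bk (s + i * N ^ r') (N ^ r')) hF'm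
            (by norm_num) (by norm_num) (θ := 1 / 4) (by norm_num) (by norm_num) (by norm_num)
            (by norm_num)
          rw [Bm_zero_left] at key
          refine key.trans ?_
          rw [hk, ← alg_one hQp.le (by positivity) hC.le (by positivity) hx0 (Am_nonneg _ _ _)]
          refine mul_le_mul (rpow_le_rpow (Bm_nonneg _ _ _ _) t4 (by norm_num))
            (rpow_le_rpow (integral_nonneg fun z => by positivity) hI' (by norm_num))
            (rpow_nonneg (integral_nonneg fun z => by positivity) _)
            (rpow_nonneg (le_trans (Bm_nonneg _ _ _ _) t4) _)
        have t5 : ∑ i ∈ Finset.range (N ^ (a' + 1 + b)),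
            (Am f (s + i * N ^ r') (N ^ r')) ^ ((1 : ℝ) / 2) ≤
            ((N ^ (a' + 1 + b) : ℕ) : ℝ) ^ ((1 : ℝ) / 2) * y ^ ((1 : ℝ) / 2) := by
          refine (sum_sqrt_le _ (fun i => Am_nonneg _ _ _) _).trans_eq ?_
          rw [← Am_split, ← hlen]
        calc _ ≤ _ := l2
          _ ≤ Λ1 * ∑ i ∈ Finset.range (N ^ (a' + 1 + b)), (k * x ^ ((5 : ℝ) / 2)) *
                (Am f (s + i * N ^ r') (N ^ r')) ^ ((1 : ℝ) / 2) :=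
              mul_le_mul_of_nonneg_left (Finset.sum_le_sum t3) hpΛ1.le
          _ ≤ Λ1 * ((k * x ^ ((5 : ℝ) / 2)) *
                (((N ^ (a' + 1 + b) : ℕ) : ℝ) ^ ((1 : ℝ) / 2) * y ^ ((1 : ℝ) / 2))) := by
              rw [← Finset.mul_sum]
              gcongr
          _ = _ := by ring
      have key := Bm_holder (m := 4) (n := 8) (m1 := 8) (n1 := 4) (m2 := 2) (n2 := 10) hJm hF'm
        (by norm_num) (by norm_num) (θ := 1 / 3) (by norm_num) (by norm_num) (by norm_num)
        (by norm_num)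
      calc Bm 4 8 (bk f s (N ^ r)) F' ≤ _ := key
        _ ≤ (Q * (N : ℝ) ^ E1 * (x * y ^ 2)) ^ ((1 : ℝ) / 3) *
            (Λ1 * ((k * ((N ^ (a' + 1 + b) : ℕ) : ℝ) ^ ((1 : ℝ) / 2)) * x ^ ((5 : ℝ) / 2)) *
              y ^ ((1 : ℝ) / 2)) ^ (1 - (1 : ℝ) / 3) := by
            refine mul_le_mul (rpow_le_rpow (Bm_nonneg _ _ _ _) t1 (by norm_num))
              (rpow_le_rpow (Bm_nonneg _ _ _ _) t2 (by norm_num))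
              (rpow_nonneg (Bm_nonneg _ _ _ _) _) (by positivity)
        _ = _ := by
            rw [alg_two hQp.le (by positivity) hpΛ1.le (by positivity) hx0 hy0, hk]
            congr 1
            push_cast
            rw [mul_rpow (by positivity) (by positivity), mul_rpow (by positivity) (by positivity),
              mul_rpow (by positivity) (by positivity), mul_rpow (by positivity) (by positivity)]
            have n1 : ((N : ℝ) ^ E1) ^ ((1 : ℝ) / 3) = (N : ℝ) ^ (E1 / 3) := by
              rw [← rpow_mul hN0.le]; congr 1; ring
            have n2 : (((N : ℝ) ^ E2) ^ ((1 : ℝ) / 4)) ^ ((2 : ℝ) / 3) = (N : ℝ) ^ (E2 / 6) := by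
              rw [← rpow_mul hN0.le, ← rpow_mul hN0.le]; congr 1; ring
            have n3 : (((N : ℝ) ^ (h * ((R : ℝ) - b))) ^ ((3 : ℝ) / 4)) ^ ((2 : ℝ) / 3) =
                (N : ℝ) ^ (h * ((R : ℝ) - b) / 2) := by
              rw [← rpow_mul hN0.le, ← rpow_mul hN0.le]; congr 1; ring
            have n4 : (((N : ℝ) ^ (a' + 1 + b)) ^ ((1 : ℝ) / 2)) ^ ((2 : ℝ) / 3) =
                (N : ℝ) ^ (((a' : ℝ) + 1 + b) / 3) := by
              rw [← rpow_natCast, ← rpow_mul hN0.le, ← rpow_mul hN0.le]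
              congr 1; push_cast; ring
            have n5 : (Q ^ ((1 : ℝ) / 4)) ^ ((2 : ℝ) / 3) = Q ^ ((1 : ℝ) / 6) := by
              rw [← rpow_mul hQp.le]; norm_num
            have n6 : (C ^ ((3 : ℝ) / 4)) ^ ((2 : ℝ) / 3) = C ^ ((1 : ℝ) / 2) := by
              rw [← rpow_mul hC.le]; norm_num
            have n7 : Q ^ ((1 : ℝ) / 2) = Q ^ ((1 : ℝ) / 3) * Q ^ ((1 : ℝ) / 6) := by
              rw [← rpow_add hQp]; norm_num
            rw [n1, n2, n3, n4, n5, n6, n7, rpow_add hN0, rpow_add hN0, rpow_add hN0]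
            ring
    have hl4 := l4_pow hf hN r e a' p c (by rw [← hr]; exact hsep)
    rw [← hr, ← hΛ2] at hl4
    -- The square in `(Λ1 * Λ2) ^ 2` is the fixed point of the recursion for the constants.
    have hconst : Λ2 * (Q ^ ((1 : ℝ) / 2) * C ^ ((1 : ℝ) / 2) * Λ1 ^ ((2 : ℝ) / 3)) ≤ Q := by
      have hΛ1_1 : 1 ≤ Λ1 := by
        rw [hΛ1]
        have h1 : 1 ≤ (N : ℝ) ^ 2 := one_le_pow₀ (by linarith)
        linarith
      have c1 : Q ^ ((1 : ℝ) / 2) = C ^ ((1 : ℝ) / 2) * (Λ1 * Λ2) := by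
        rw [hQ, mul_rpow hC.le (by positivity), ← rpow_natCast (Λ1 * Λ2),
          ← rpow_mul (by positivity)]
        norm_num
      have c2 : C ^ ((1 : ℝ) / 2) * C ^ ((1 : ℝ) / 2) = C := by rw [← rpow_add hC]; norm_num
      have c3 : Λ1 ^ ((2 : ℝ) / 3) ≤ Λ1 := by
        calc Λ1 ^ ((2 : ℝ) / 3) ≤ Λ1 ^ (1 : ℝ) :=
              rpow_le_rpow_of_exponent_le hΛ1_1 (by norm_num)
          _ = Λ1 := rpow_one _
      calc _ = (C ^ ((1 : ℝ) / 2) * C ^ ((1 : ℝ) / 2)) * Λ1 * Λ2 ^ 2 * Λ1 ^ ((2 : ℝ) / 3) := by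
            rw [c1]; ring
        _ ≤ C * Λ1 * Λ2 ^ 2 * Λ1 := by rw [c2]; gcongr
        _ = Q := by rw [hQ]; ring
    set E3 := E1 / 3 + E2 / 6 + h * ((R : ℝ) - b) / 2 + ((a' + 1 + b : ℕ) : ℝ) / 3 with hE3
    have hexp : (N : ℝ) ^ (2 * e) * (N : ℝ) ^ E3 =
        (N : ℝ) ^ eExp h R (n + 1) ((a' + 1 : ℕ) : ℝ) (b : ℝ) := by
      rw [← rpow_natCast, ← rpow_add hN0]
      congr 1
      rw [hE3, hE1, hE2, hbdef]
      simp only [eExp]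
      push_cast
      ring
    rw [Am_split]
    calc _ ≤ _ := hl4
      _ ≤ Λ2 * (N : ℝ) ^ (2 * e) * ∑ j ∈ Finset.range (N ^ (2 * e)),
          (Q ^ ((1 : ℝ) / 2) * C ^ ((1 : ℝ) / 2) * Λ1 ^ ((2 : ℝ) / 3) * (N : ℝ) ^ E3) *
            (Am f (p + j * N ^ r) (N ^ r) * x ^ 2) :=
          mul_le_mul_of_nonneg_left (Finset.sum_le_sum hJ) (by positivity)
      _ = (Λ2 * (Q ^ ((1 : ℝ) / 2) * C ^ ((1 : ℝ) / 2) * Λ1 ^ ((2 : ℝ) / 3))) *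
          ((N : ℝ) ^ (2 * e) * (N : ℝ) ^ E3) *
          ((∑ j ∈ Finset.range (N ^ (2 * e)), Am f (p + j * N ^ r) (N ^ r)) * x ^ 2) := by
          rw [← Finset.mul_sum, ← Finset.sum_mul]; ring
      _ ≤ _ := by
          rw [hexp]
          refine mul_le_mul_of_nonneg_right (mul_le_mul_of_nonneg_right hconst (by positivity)) ?_
          exact mul_nonneg (Finset.sum_nonneg fun _ _ => Am_nonneg _ _ _) (by positivity)

/-! ### Truncation and the broad-narrow dichotomy -/

lemma bk_Ico (f : ℕ → E3 → ℂ) (a L : ℕ) (x : E3) :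
    bk f a L x = ∑ k ∈ Finset.Ico a (a + L), f k x := by
  rw [Finset.sum_Ico_eq_sum_range, Nat.add_sub_cancel_left]; rfl

/-- The family whose members outside `[p, p + L)` are replaced by zero. -/
def trunc (f : ℕ → E3 → ℂ) (p L : ℕ) : ℕ → E3 → ℂ := fun k =>
  if k ∈ Finset.Ico p (p + L) then f k else 0

lemma bk_trunc (f : ℕ → E3 → ℂ) (p L a l : ℕ) :
    bk (trunc f p L) a l = bk f (max a p) (min (a + l) (p + L) - max a p) := by
  ext x
  rw [bk_Ico, bk_Ico]
  have : ∀ k, trunc f p L k x = if k ∈ Finset.Ico p (p + L) then f k x else 0 := by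
    intro k; rw [trunc]; split_ifs <;> rfl
  simp_rw [this]
  rw [← Finset.sum_filter]
  refine Finset.sum_congr ?_ fun _ _ => rfl
  ext k
  simp only [Finset.mem_filter, Finset.mem_Ico]
  omega

lemma bk_len_zero (f : ℕ → E3 → ℂ) (a : ℕ) (x : E3) : bk f a 0 x = 0 := by simp [bk]

lemma CurveFam.trunc {f : ℕ → E3 → ℂ} (hf : CurveFam f) (p L : ℕ) : CurveFam (trunc f p L) where
  mem k := by
    rw [_root_.trunc]; split_ifs
    · exact hf.mem k
    · exact MemLp.zero
  orth a l a' l' hne := by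
    simp_rw [bk_trunc] at hne
    obtain ⟨s, t, hs, ht, hst⟩ := hf.orth _ _ _ _ hne
    have h1 : ∀ i, max (a i) p < min (a i + l i) (p + L) := by
      intro i
      by_contra hcon
      refine hne ?_
      have h0 : min (a i + l i) (p + L) - max (a i) p = 0 := by omega
      have hz : ∀ x, ∏ i, (bk f (max (a i) p) (min (a i + l i) (p + L) - max (a i) p) x *
          conj (bk f (max (a' i) p) (min (a' i + l' i) (p + L) - max (a' i) p) x)) = 0 := by
        intro x
        refine Finset.prod_eq_zero (Finset.mem_univ i) ?_
        rw [h0, bk_len_zero, zero_mul]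
      simp_rw [hz]; simp
    have h2 : ∀ i, max (a' i) p < min (a' i + l' i) (p + L) := by
      intro i
      by_contra hcon
      refine hne ?_
      have h0 : min (a' i + l' i) (p + L) - max (a' i) p = 0 := by omega
      have hz : ∀ x, ∏ i, (bk f (max (a i) p) (min (a i + l i) (p + L) - max (a i) p) x *
          conj (bk f (max (a' i) p) (min (a' i + l' i) (p + L) - max (a' i) p) x)) = 0 := by
        intro x
        refine Finset.prod_eq_zero (Finset.mem_univ i) ?_
        rw [h0, bk_len_zero, map_zero, mul_zero]
      simp_rw [hz]; simp
    have hbox : ∀ (a l : ℕ) (u : ℝ), max a p < min (a + l) (p + L) →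
        u ∈ Set.Icc ((max a p : ℕ) : ℝ)
          ((max a p : ℕ) + ((min (a + l) (p + L) - max a p : ℕ) : ℝ)) →
        u ∈ Set.Icc (a : ℝ) (a + l) := by
      intro a l u h hu
      have e1 : (a : ℝ) ≤ ((max a p : ℕ) : ℝ) := by exact_mod_cast le_max_left a p
      have e2 : ((max a p : ℕ) : ℝ) + ((min (a + l) (p + L) - max a p : ℕ) : ℝ) ≤ a + l := by
        exact_mod_cast (by omega : max a p + (min (a + l) (p + L) - max a p) ≤ a + l)
      exact ⟨e1.trans hu.1, hu.2.trans e2⟩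
    exact ⟨s, t, fun i => hbox _ _ _ (h1 i) (hs i), fun i => hbox _ _ _ (h2 i) (ht i), hst⟩

lemma bk_trunc_self (f : ℕ → E3 → ℂ) (p L M : ℕ) (h : L ≤ M) :
    bk (trunc f p L) p M = bk f p L := by
  rw [bk_trunc]; congr 1 <;> omega

lemma Am_trunc_self (f : ℕ → E3 → ℂ) (p L M : ℕ) (h : L ≤ M) :
    Am (trunc f p L) p M = Am f p L := by
  rw [Am, Am, ← Finset.sum_subset (Finset.range_mono h)]
  · refine Finset.sum_congr rfl fun i hi => ?_
    have : p + i ∈ Finset.Ico p (p + L) := by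
      rw [Finset.mem_range] at hi; rw [Finset.mem_Ico]; omega
    rw [trunc, if_pos this]
  · intro i _ hi
    have : p + i ∉ Finset.Ico p (p + L) := by
      rw [Finset.mem_range] at hi; rw [Finset.mem_Ico]; omega
    rw [trunc, if_neg this]
    simp

/-- Broad-narrow dichotomy: either the sum is at most six times its largest term, or some term whose
index is at distance at least three from that of the largest one exceeds the average up to a
constant. -/
lemma broad_narrow (N : ℕ) (z : ℕ → ℝ) (hz : ∀ i, 0 ≤ z i) :
    (∑ i ∈ Finset.range N, z i) ^ 12 ≤ 6 ^ 12 * ∑ i ∈ Finset.range N, z i ^ 12 +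
      6 ^ 12 * (N : ℝ) ^ 12 * ∑ i ∈ Finset.range N, ∑ j ∈ Finset.range N,
        if i + 3 ≤ j ∨ j + 3 ≤ i then z i ^ 4 * z j ^ 8 else 0 := by
  have hterm : ∀ i j, 0 ≤ if i + 3 ≤ j ∨ j + 3 ≤ i then z i ^ 4 * z j ^ 8 else 0 := by
    intro i j
    have := hz i
    have := hz j
    split_ifs <;> positivity
  have hT : 0 ≤ ∑ i ∈ Finset.range N, ∑ j ∈ Finset.range N,
      if i + 3 ≤ j ∨ j + 3 ≤ i then z i ^ 4 * z j ^ 8 else 0 :=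
    Finset.sum_nonneg fun i _ => Finset.sum_nonneg fun j _ => hterm i j
  have hS : 0 ≤ ∑ i ∈ Finset.range N, z i ^ 12 := Finset.sum_nonneg fun i _ => pow_nonneg (hz i) _
  rcases Nat.eq_zero_or_pos N with rfl | hN
  · simp
  obtain ⟨i0, hi0, hmax⟩ := Finset.exists_max_image (Finset.range N) z ⟨0, Finset.mem_range.mpr hN⟩
  set far := (Finset.range N).filter fun j => i0 + 3 ≤ j ∨ j + 3 ≤ i0 with hfar
  have hsplit : ∑ i ∈ Finset.range N, z i ≤ 5 * z i0 + ∑ j ∈ far, z j := by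
    rw [← Finset.sum_filter_add_sum_filter_not (Finset.range N)
      (fun j => i0 + 3 ≤ j ∨ j + 3 ≤ i0), ← hfar, add_comm]
    refine add_le_add ?_ le_rfl
    refine (Finset.sum_le_card_nsmul _ _ (z i0) fun j hj =>
      hmax j (Finset.mem_filter.mp hj).1).trans ?_
    rw [nsmul_eq_mul]
    refine mul_le_mul_of_nonneg_right ?_ (hz i0)
    have : ((Finset.range N).filter fun j => ¬(i0 + 3 ≤ j ∨ j + 3 ≤ i0)).card ≤ 5 := by
      refine (Finset.card_le_card (t := Finset.Icc (i0 - 2) (i0 + 2)) ?_).trans ?_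
      · intro j hj
        rw [Finset.mem_filter] at hj
        rw [Finset.mem_Icc]; omega
      · rw [Nat.card_Icc]; omega
    exact_mod_cast this
  have hsum0 : 0 ≤ ∑ i ∈ Finset.range N, z i := Finset.sum_nonneg fun i _ => hz i
  have hnarrow : ∑ i ∈ Finset.range N, z i ≤ 6 * z i0 →
      (∑ i ∈ Finset.range N, z i) ^ 12 ≤ 6 ^ 12 * ∑ i ∈ Finset.range N, z i ^ 12 := by
    intro h
    calc _ ≤ (6 * z i0) ^ 12 := pow_le_pow_left₀ hsum0 h 12
      _ = 6 ^ 12 * z i0 ^ 12 := by ring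
      _ ≤ _ := by
        refine mul_le_mul_of_nonneg_left ?_ (by positivity)
        exact Finset.single_le_sum (f := fun i => z i ^ 12) (fun i _ => pow_nonneg (hz i) _) hi0
  rcases far.eq_empty_or_nonempty with he | hne
  · rw [he, Finset.sum_empty, add_zero] at hsplit
    refine (hnarrow (by linarith [hz i0])).trans (le_add_of_nonneg_right (by positivity))
  · obtain ⟨j0, hj0, hmax2⟩ := Finset.exists_max_image far z hne
    have h1 : ∑ j ∈ far, z j ≤ N * z j0 := by
      refine (Finset.sum_le_card_nsmul _ _ (z j0) hmax2).trans ?_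
      rw [nsmul_eq_mul]
      refine mul_le_mul_of_nonneg_right ?_ (hz j0)
      have := Finset.card_filter_le (Finset.range N) (fun j => i0 + 3 ≤ j ∨ j + 3 ≤ i0)
      rw [Finset.card_range] at this
      exact_mod_cast this
    rcases le_total ((N : ℝ) * z j0) (z i0) with hle | hle
    · exact (hnarrow (by linarith)).trans (le_add_of_nonneg_right (by positivity))
    · have hj0' := Finset.mem_filter.mp hj0
      have h2 : ∑ i ∈ Finset.range N, z i ≤ 6 * (N * z j0) := by linarith
      have h3 : z j0 ^ 4 * z i0 ^ 8 ≤ ∑ i ∈ Finset.range N, ∑ j ∈ Finset.range N,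
          if i + 3 ≤ j ∨ j + 3 ≤ i then z i ^ 4 * z j ^ 8 else 0 := by
        have e1 := Finset.single_le_sum (f := fun i => ∑ j ∈ Finset.range N,
          if i + 3 ≤ j ∨ j + 3 ≤ i then z i ^ 4 * z j ^ 8 else 0)
          (fun i _ => Finset.sum_nonneg fun j _ => hterm i j) hj0'.1
        have e2 := Finset.single_le_sum (f := fun j =>
          if j0 + 3 ≤ j ∨ j + 3 ≤ j0 then z j0 ^ 4 * z j ^ 8 else 0)
          (fun j _ => hterm j0 j) hi0
        rw [if_pos (Or.symm hj0'.2)] at e2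
        exact e2.trans e1
      refine le_trans ?_ (le_add_of_nonneg_left (by positivity))
      calc _ ≤ (6 * (N * z j0)) ^ 12 := pow_le_pow_left₀ hsum0 h2 12
        _ = 6 ^ 12 * (N : ℝ) ^ 12 * (z j0 ^ 4 * z j0 ^ 8) := by ring
        _ ≤ 6 ^ 12 * (N : ℝ) ^ 12 * (z j0 ^ 4 * z i0 ^ 8) := by
            have := hz j0
            have := hmax j0 hj0'.1
            gcongr
        _ ≤ _ := mul_le_mul_of_nonneg_left h3 (by positivity)

lemma sum_cube_le {ι : Type*} (s : Finset ι) (a : ι → ℝ) (ha : ∀ i ∈ s, 0 ≤ a i) :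
    ∑ i ∈ s, a i ^ 3 ≤ (∑ i ∈ s, a i) ^ 3 := by
  set S := ∑ i ∈ s, a i with hS
  have h : ∀ i ∈ s, a i ≤ S := fun i hi => Finset.single_le_sum ha hi
  calc ∑ i ∈ s, a i ^ 3 ≤ ∑ i ∈ s, a i * S ^ 2 := by
        refine Finset.sum_le_sum fun i hi => ?_
        have := pow_le_pow_left₀ (ha i hi) (h i hi) 2
        calc a i ^ 3 = a i * a i ^ 2 := by ring
          _ ≤ _ := mul_le_mul_of_nonneg_left this (ha i hi)
    _ = S ^ 3 := by rw [← Finset.sum_mul, ← hS]; ring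

/-- The linear estimate with exponent `h`, uniformly over all families. -/
def LinBd (h : ℝ) : Prop := ∃ C > 0, ∀ f, CurveFam f → ∀ p L : ℕ,
  ∫ x, ‖bk f p L x‖ ^ 12 ≤ C * (L : ℝ) ^ h * Am f p L ^ 3

lemma int_len_zero (f : ℕ → E3 → ℂ) (p : ℕ) : ∫ x, ‖bk f p 0 x‖ ^ 12 = 0 := by
  simp [bk_len_zero]

lemma LinBd.mono {h h' : ℝ} (H : LinBd h) (hh : h ≤ h') : LinBd h' := by
  obtain ⟨C, hC, H⟩ := H
  refine ⟨C, hC, fun f hf p L => ?_⟩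
  have hA : 0 ≤ Am f p L ^ 3 := pow_nonneg (Am_nonneg _ _ _) 3
  rcases Nat.eq_zero_or_pos L with rfl | hL
  · rw [int_len_zero]; positivity
  · refine (H f hf p L).trans (mul_le_mul_of_nonneg_right ?_ hA)
    refine mul_le_mul_of_nonneg_left ?_ hC.le
    exact rpow_le_rpow_of_exponent_le (by exact_mod_cast hL) hh

lemma Am_term_cube (F : E3 → ℂ) :
    ((∫ x, ‖F x‖ ^ 12) ^ ((1 : ℝ) / 3)) ^ 3 = ∫ x, ‖F x‖ ^ 12 := by
  rw [← rpow_natCast, ← rpow_mul (integral_nonneg fun x => by positivity)]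
  norm_num

lemma linBd_eleven : LinBd 11 := by
  refine ⟨1, one_pos, fun f hf p L => ?_⟩
  have h1 : ∀ x, ‖bk f p L x‖ ^ 12 ≤ (L : ℝ) ^ 11 * ∑ i ∈ Finset.range L, ‖f (p + i) x‖ ^ 12 := by
    intro x
    have h3 := pow_sum_div_card_le_sum_pow (s := Finset.range L) (f := fun i => ‖f (p + i) x‖)
      (n := 11) (fun i _ => norm_nonneg _)
    rw [Finset.card_range] at h3
    have h4 : ‖bk f p L x‖ ≤ ∑ i ∈ Finset.range L, ‖f (p + i) x‖ := norm_sum_le _ _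
    rcases Nat.eq_zero_or_pos L with rfl | hL
    · simp [bk_len_zero]
    · have hL' : (0 : ℝ) < (L : ℝ) ^ 11 := by positivity
      rw [div_le_iff₀ hL'] at h3
      calc _ ≤ _ := pow_le_pow_left₀ (norm_nonneg _) h4 12
        _ ≤ _ := h3
        _ = _ := mul_comm _ _
  have hi : ∀ i ∈ Finset.range L, Integrable fun x => ‖f (p + i) x‖ ^ 12 :=
    fun i _ => MemLp.int12 (hf.mem _)
  calc ∫ x, ‖bk f p L x‖ ^ 12
      ≤ ∫ x, (L : ℝ) ^ 11 * ∑ i ∈ Finset.range L, ‖f (p + i) x‖ ^ 12 :=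
        integral_mono (MemLp.int12 (hf.mem_bk _ _))
          ((integrable_finsetSum _ hi).const_mul _) h1
    _ = (L : ℝ) ^ 11 * ∑ i ∈ Finset.range L, ((∫ x, ‖f (p + i) x‖ ^ 12) ^ ((1 : ℝ) / 3)) ^ 3 := by
        rw [integral_const_mul, integral_finsetSum _ hi]
        simp_rw [Am_term_cube]
    _ ≤ (L : ℝ) ^ 11 * Am f p L ^ 3 := by
        refine mul_le_mul_of_nonneg_left (sum_cube_le _ _ fun i _ => ?_) (by positivity)
        exact rpow_nonneg (integral_nonneg fun x => by positivity) _
    _ = _ := by rw [one_mul]; norm_cast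

/-! ### Improvement of the linear exponent -/

/-- The broad-narrow step: the block of length `N ^ R` is cut into `N` blocks. Neighbouring blocks
are handled by the linear estimate, separated ones by the bilinear estimate. -/
lemma broad_step {f : ℕ → E3 → ℂ} (hf : CurveFam f) {N R n : ℕ} (hN : 2 ≤ N) (hR : 3 ^ n ≤ R)
    {h C : ℝ} (h3 : 3 ≤ h) (hC : 0 < C)
    (hP : ∀ p L, ∫ x, ‖bk f p L x‖ ^ 12 ≤ C * (L : ℝ) ^ h * Am f p L ^ 3) (p : ℕ) :
    ∫ x, ‖bk f p (N ^ R) x‖ ^ 12 ≤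
      6 ^ 12 * (C * ((N ^ (R - 1) : ℕ) : ℝ) ^ h + (N : ℝ) ^ 12 *
        (C * (3 * (N : ℝ) ^ 2 * (4000 * (R : ℝ) * (N : ℝ) ^ 4)) ^ 2 * (N : ℝ) ^ eExp h R n 1 1)) *
        Am f p (N ^ R) ^ 3 := by
  have hR1 : 1 ≤ R := le_trans (Nat.one_le_pow _ _ (by norm_num)) hR
  set ρ := N ^ (R - 1) with hρ
  have hNR : N ^ R = N * ρ := by rw [hρ, ← pow_succ']; congr 1; omega
  set F : ℕ → E3 → ℂ := fun i => bk f (p + i * ρ) ρ with hF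
  set A : ℕ → ℝ := fun i => Am f (p + i * ρ) ρ with hA
  have hA0 : ∀ i, 0 ≤ A i := fun i => Am_nonneg _ _ _
  have hFm : ∀ i, MemLp (F i) 12 := fun i => hf.mem_bk _ _
  set K := C * (3 * (N : ℝ) ^ 2 * (4000 * (R : ℝ) * (N : ℝ) ^ 4)) ^ 2 * (N : ℝ) ^ eExp h R n 1 1
    with hK
  have hK0 : 0 ≤ K := by positivity
  have hAs : Am f p (N ^ R) = ∑ i ∈ Finset.range N, A i := by rw [hNR, Am_split]
  have hpt : ∀ x, ‖bk f p (N ^ R) x‖ ^ 12 ≤ 6 ^ 12 * ∑ i ∈ Finset.range N, ‖F i x‖ ^ 12 +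
      6 ^ 12 * (N : ℝ) ^ 12 * ∑ i ∈ Finset.range N, ∑ j ∈ Finset.range N,
        if i + 3 ≤ j ∨ j + 3 ≤ i then ‖F i x‖ ^ 4 * ‖F j x‖ ^ 8 else 0 := by
    intro x
    refine le_trans ?_ (broad_narrow N (fun i => ‖F i x‖) fun i => norm_nonneg _)
    rw [hNR, bk_split]
    exact pow_le_pow_left₀ (norm_nonneg _) (norm_sum_le _ _) 12
  have hint1 : ∀ i, Integrable fun x => ‖F i x‖ ^ 12 := fun i => MemLp.int12 (hFm i)
  have hint2 : ∀ i j, Integrable fun x =>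
      if i + 3 ≤ j ∨ j + 3 ≤ i then ‖F i x‖ ^ 4 * ‖F j x‖ ^ 8 else 0 := by
    intro i j
    split_ifs
    · exact Bm_integrable (by norm_num) (hFm i) (hFm j)
    · exact integrable_zero _ _ _
  have hI1 : Integrable fun x => 6 ^ 12 * ∑ i ∈ Finset.range N, ‖F i x‖ ^ 12 :=
    (integrable_finsetSum _ fun i _ => hint1 i).const_mul _
  have hI2 : Integrable fun x => 6 ^ 12 * (N : ℝ) ^ 12 *
      ∑ i ∈ Finset.range N, ∑ j ∈ Finset.range N,
        if i + 3 ≤ j ∨ j + 3 ≤ i then ‖F i x‖ ^ 4 * ‖F j x‖ ^ 8 else 0 :=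
    (integrable_finsetSum _ fun i _ => integrable_finsetSum _ fun j _ => hint2 i j).const_mul _
  have hfar : ∀ i ∈ Finset.range N, ∀ j ∈ Finset.range N,
      (∫ x, if i + 3 ≤ j ∨ j + 3 ≤ i then ‖F i x‖ ^ 4 * ‖F j x‖ ^ 8 else 0) ≤
        K * (A i * A j ^ 2) := by
    intro i hi j hj
    rw [Finset.mem_range] at hi hj
    by_cases hij : i + 3 ≤ j ∨ j + 3 ≤ i
    · simp only [if_pos hij]
      have hsep : SepBlk N R (p + i * ρ) ρ (p + j * ρ) ρ := by
        rw [SepBlk, hNR, ← hρ]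
        rcases hij with hij | hij
        · right
          obtain ⟨d, rfl⟩ := Nat.exists_eq_add_of_le hij
          obtain ⟨e, rfl⟩ := Nat.exists_eq_add_of_lt hj
          constructor <;>
            nlinarith [Nat.zero_le (d * ρ), Nat.zero_le (e * ρ), Nat.zero_le (i * ρ)]
        · left
          obtain ⟨d, rfl⟩ := Nat.exists_eq_add_of_le hij
          obtain ⟨e, rfl⟩ := Nat.exists_eq_add_of_lt hi
          constructor <;>
            nlinarith [Nat.zero_le (d * ρ), Nat.zero_le (e * ρ), Nat.zero_le (j * ρ)]
      have hb := bilin hf hN h3 hC hP rfl rfl n 1 1 (p + i * ρ) (p + j * ρ) le_rfl le_rfl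
        (by simpa using hR) hsep
      rw [Nat.cast_one, ← hρ, ← hK] at hb
      exact hb
    · simp only [if_neg hij, integral_zero]
      have := hA0 i
      positivity
  calc ∫ x, ‖bk f p (N ^ R) x‖ ^ 12
      ≤ ∫ x, (6 ^ 12 * ∑ i ∈ Finset.range N, ‖F i x‖ ^ 12 +
        6 ^ 12 * (N : ℝ) ^ 12 * ∑ i ∈ Finset.range N, ∑ j ∈ Finset.range N,
        if i + 3 ≤ j ∨ j + 3 ≤ i then ‖F i x‖ ^ 4 * ‖F j x‖ ^ 8 else 0) :=
        integral_mono (MemLp.int12 (hf.mem_bk _ _)) (hI1.add hI2) hpt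
    _ = 6 ^ 12 * ∑ i ∈ Finset.range N, (∫ x, ‖F i x‖ ^ 12) +
        6 ^ 12 * (N : ℝ) ^ 12 * ∑ i ∈ Finset.range N, ∑ j ∈ Finset.range N,
        (∫ x, if i + 3 ≤ j ∨ j + 3 ≤ i then ‖F i x‖ ^ 4 * ‖F j x‖ ^ 8 else 0) := by
        rw [integral_add hI1 hI2, integral_const_mul, integral_const_mul,
          integral_finsetSum _ fun i _ => hint1 i,
          integral_finsetSum _ fun i _ => integrable_finsetSum _ fun j _ => hint2 i j]
        congr 2
        exact Finset.sum_congr rfl fun i _ => integral_finsetSum _ fun j _ => hint2 i j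
    _ ≤ 6 ^ 12 * ∑ i ∈ Finset.range N, C * (ρ : ℝ) ^ h * A i ^ 3 +
        6 ^ 12 * (N : ℝ) ^ 12 * ∑ i ∈ Finset.range N, ∑ j ∈ Finset.range N,
        K * (A i * A j ^ 2) := by
        refine add_le_add (mul_le_mul_of_nonneg_left
          (Finset.sum_le_sum fun i _ => hP _ _) (by positivity)) (mul_le_mul_of_nonneg_left
          (Finset.sum_le_sum fun i hi => Finset.sum_le_sum fun j hj => hfar i hi j hj)
          (by positivity))
    _ = 6 ^ 12 * (C * (ρ : ℝ) ^ h) * ∑ i ∈ Finset.range N, A i ^ 3 +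
        6 ^ 12 * (N : ℝ) ^ 12 * K * ((∑ i ∈ Finset.range N, A i) *
          ∑ j ∈ Finset.range N, A j ^ 2) := by
        rw [Finset.sum_mul_sum]
        simp_rw [← Finset.mul_sum]
        ring
    _ ≤ 6 ^ 12 * (C * (ρ : ℝ) ^ h) * (∑ i ∈ Finset.range N, A i) ^ 3 +
        6 ^ 12 * (N : ℝ) ^ 12 * K * ((∑ i ∈ Finset.range N, A i) *
          (∑ j ∈ Finset.range N, A j) ^ 2) := by
        have h1 := sum_cube_le (Finset.range N) A fun i _ => hA0 i
        have h2 : ∑ j ∈ Finset.range N, A j ^ 2 ≤ (∑ j ∈ Finset.range N, A j) ^ 2 :=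
          Finset.sum_sq_le_sq_sum_of_nonneg fun i _ => hA0 i
        have h0 : 0 ≤ ∑ i ∈ Finset.range N, A i := Finset.sum_nonneg fun i _ => hA0 i
        exact add_le_add (mul_le_mul_of_nonneg_left h1 (by positivity))
          (mul_le_mul_of_nonneg_left (mul_le_mul_of_nonneg_left h2 h0) (by positivity))
    _ = _ := by rw [hAs]; ring

/-- A gain in the exponent that is uniform as long as `h` stays away from the critical value `3`. Take
`N` close to `L ^ (1 / R)` with `R = 3 ^ n` fixed: the narrow part gains `N ^ h`, and for large `n`
the bilinear exponent compensates all powers of `N` lost in the broad part. A total gain of one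
power of `N` is kept. -/
lemma improve {w : ℝ} (hw : 0 < w) :
    ∃ κ > 0, ∀ h, 3 + w ≤ h → LinBd h → LinBd (h - κ) := by
  -- With `w * n ≥ 110` one has `24 - 3 - w * (2 * n + 1) / 5 ≤ -1`.
  obtain ⟨n, hn⟩ := exists_nat_ge (110 / w)
  rw [div_le_iff₀ hw] at hn
  set R := 3 ^ n with hRdef
  have hR1 : 1 ≤ R := Nat.one_le_pow _ _ (by norm_num)
  have hR0 : (1 : ℝ) ≤ R := by exact_mod_cast hR1
  refine ⟨1 / R, by positivity, fun h hh H => ?_⟩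
  obtain ⟨C, hC, H⟩ := H
  have hR9 : 0 ≤ h * R - 1 := by nlinarith
  refine ⟨6 ^ 12 * C * (1 + 12000 ^ 2 * (R : ℝ) ^ 2) * 2 ^ (h * R - 1), by positivity,
    fun f hf p L => ?_⟩
  have hA : 0 ≤ Am f p L ^ 3 := pow_nonneg (Am_nonneg _ _ _) 3
  rcases Nat.eq_zero_or_pos L with rfl | hL
  · rw [int_len_zero]; positivity
  have hL1 : (1 : ℝ) ≤ L := by exact_mod_cast hL
  set y : ℝ := (L : ℝ) ^ (1 / (R : ℝ)) with hy
  have hy1 : 1 ≤ y := one_le_rpow hL1 (by positivity)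
  have hyR : y ^ R = L := by
    rw [hy, ← rpow_natCast, ← rpow_mul (by positivity), one_div_mul_cancel (by positivity),
      rpow_one]
  set N := ⌊y⌋₊ + 1 with hNdef
  have hN2 : 2 ≤ N := by
    have : 1 ≤ ⌊y⌋₊ := Nat.le_floor (by exact_mod_cast hy1)
    omega
  have hyN : y ≤ N := by rw [hNdef]; push_cast; exact (Nat.lt_floor_add_one y).le
  have hNy : (N : ℝ) ≤ 2 * y := by
    have := Nat.floor_le (show 0 ≤ y by linarith)
    rw [hNdef]; push_cast; linarith
  have hN2' : (2 : ℝ) ≤ N := by exact_mod_cast hN2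
  have hN0 : (0 : ℝ) < N := by linarith
  have hLN : L ≤ N ^ R := by
    have : (L : ℝ) ≤ (N : ℝ) ^ R := by rw [← hyR]; gcongr
    exact_mod_cast this
  -- Padding by zeros makes the length a power of `N`.
  have key := broad_step (hf.trunc p L) hN2 (le_refl R) (by linarith) hC
    (fun p' L' => H _ (hf.trunc p L) p' L') p
  rw [bk_trunc_self f p L _ hLN, Am_trunc_self f p L _ hLN] at key
  refine key.trans (mul_le_mul_of_nonneg_right ?_ hA)
  set Q : ℝ := (N : ℝ) ^ (h * R - 1) with hQ
  have hQ0 : 0 ≤ Q := by positivity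
  have e1 : ((N ^ (R - 1) : ℕ) : ℝ) ^ h ≤ Q := by
    push_cast
    rw [← rpow_natCast, ← rpow_mul hN0.le]
    refine rpow_le_rpow_of_exponent_le (by linarith) ?_
    push_cast [Nat.cast_sub hR1]
    nlinarith
  have e2 : (N : ℝ) ^ 24 * (N : ℝ) ^ eExp h R n 1 1 ≤ Q := by
    rw [← rpow_natCast, ← rpow_add hN0]
    refine rpow_le_rpow_of_exponent_le (by linarith) ?_
    rw [eExp]
    push_cast
    have : w * n ≤ (h - 3) * n := by gcongr; linarith
    nlinarith
  have e3 : Q ≤ 2 ^ (h * R - 1) * (L : ℝ) ^ (h - 1 / R) := by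
    calc Q ≤ (2 * y) ^ (h * R - 1) := rpow_le_rpow hN0.le hNy hR9
      _ = _ := by
        rw [mul_rpow (by norm_num) (by linarith), hy, ← rpow_mul (by positivity)]
        congr 2
        field_simp
  calc _ = 6 ^ 12 * C * (((N ^ (R - 1) : ℕ) : ℝ) ^ h + 12000 ^ 2 * (R : ℝ) ^ 2 *
        ((N : ℝ) ^ 24 * (N : ℝ) ^ eExp h R n 1 1)) := by ring
    _ ≤ 6 ^ 12 * C * (Q + 12000 ^ 2 * (R : ℝ) ^ 2 * Q) := by gcongr
    _ = 6 ^ 12 * C * (1 + 12000 ^ 2 * (R : ℝ) ^ 2) * Q := by ring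
    _ ≤ 6 ^ 12 * C * (1 + 12000 ^ 2 * (R : ℝ) ^ 2) *
        (2 ^ (h * R - 1) * (L : ℝ) ^ (h - 1 / R)) := by gcongr
    _ = _ := by ring

/-- Iteration of `improve` from the trivial exponent `11`. -/
lemma linBd_of_gt_three {w : ℝ} (hw : 0 < w) : LinBd (3 + w) := by
  obtain ⟨κ, hκ, H⟩ := improve hw
  have hk : ∀ k : ℕ, LinBd (max (3 + w) (11 - k * κ)) := by
    intro k
    induction k with
    | zero => exact linBd_eleven.mono (by simp)
    | succ k ih =>
      refine (H _ (le_max_left _ _) ih).mono ?_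
      push_cast
      rcases le_total (3 + w) (11 - k * κ) with h | h
      · rw [max_eq_right h]; exact le_trans (by linarith) (le_max_right _ _)
      · rw [max_eq_left h]; exact le_trans (by linarith) (le_max_left _ _)
  obtain ⟨k, hk'⟩ := exists_nat_ge (8 / κ)
  rw [div_le_iff₀ hκ] at hk'
  refine (hk k).mono (max_le le_rfl (by linarith))

/-! ### The decoupling inequality -/

/-- The pieces of `E g` over the consecutive intervals of length `δ`. -/
def arcs (g : ℝ → ℂ) (δ : ℝ) (k : ℕ) : E3 → ℂ := momExt g (k * δ) ((k + 1) * δ)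

lemma bk_arcs {g : ℝ → ℂ} (hg : Integrable g) (δ : ℝ) (a L : ℕ) :
    bk (arcs g δ) a L = momExt g (a * δ) ((a + L) * δ) := by
  ext x
  have hm : Integrable (fun ξ => g ξ * eR (x 0 * ξ + x 1 * ξ ^ 2 + x 2 * ξ ^ 3)) := by
    refine hg.mul_bdd (c := 1) ?_ (Eventually.of_forall fun ξ => by simp)
    exact (continuous_eR.comp (by fun_prop)).aestronglyMeasurable
  have := intervalIntegral.sum_integral_adjacent_intervals (μ := volume)
    (f := fun ξ => g ξ * eR (x 0 * ξ + x 1 * ξ ^ 2 + x 2 * ξ ^ 3))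
    (a := fun i : ℕ => ((a + i : ℕ) : ℝ) * δ) (n := L) (fun k _ => hm.intervalIntegrable)
  simp only [Nat.cast_add, add_zero] at this
  rw [momExt, ← this, bk]
  refine Finset.sum_congr rfl fun i _ => ?_
  simp only [arcs, momExt]
  push_cast
  simp only [add_assoc]

lemma curveFam_arcs {g : ℝ → ℂ} (hg : Integrable g) (h : MemLp (Ex g) 12) {δ : ℝ} (hδ : 0 < δ) :
    CurveFam (arcs g δ) where
  mem k := momExt_memLp hg h (by nlinarith)
  orth a L a' L' hne := by
    simp_rw [bk_arcs hg] at hne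
    have hle : ∀ (a L : Fin 6 → ℕ) i, (a i : ℝ) * δ ≤ (a i + L i) * δ := fun a L i => by
      have : (0 : ℝ) ≤ L i := by positivity
      gcongr; linarith
    obtain ⟨s, t, hs, ht, hst⟩ := momExt_orth hg
      (fun i => ((a i : ℝ) * δ, ((a i : ℝ) + L i) * δ))
      (fun i => ((a' i : ℝ) * δ, ((a' i : ℝ) + L' i) * δ)) (hle a L) (hle a' L')
      (prod6_integrable (fun i => momExt_memLp hg h (hle a L i))
        fun i => momExt_memLp hg h (hle a' L' i)) hne
    refine ⟨fun i => s i / δ, fun i => t i / δ, fun i => ?_, fun i => ?_, fun e => ?_⟩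
    · exact ⟨(le_div_iff₀ hδ).2 (hs i).1, (div_le_iff₀ hδ).2 (hs i).2⟩
    · exact ⟨(le_div_iff₀ hδ).2 (ht i).1, (div_le_iff₀ hδ).2 (ht i).2⟩
    · simp_rw [div_pow, ← Finset.sum_div, hst e]

lemma momExt_indicator {g : ℝ → ℂ} {l r : ℝ} (h0 : 0 ≤ l) (hlr : l ≤ r) (h1 : r ≤ 1) :
    momExt ((Set.Ioc 0 1).indicator g) l r = momExt g l r := by
  ext x
  rw [momExt_eq hlr, momExt_eq hlr, Set.indicator_indicator,
    Set.inter_eq_left.2 (Set.Ioc_subset_Ioc h0 h1)]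

/-- The linear estimate for the pieces of `E g`. If `g` is not integrable or `E g` is not in `L¹²`,
the left side is zero by the conventions for undefined integrals; otherwise `momExt_memLp` puts
all pieces in `L¹²`. -/
lemma main_bound {h C : ℝ} (hC : 0 < C) (H : ∀ f, CurveFam f → ∀ p L : ℕ,
      ∫ x, ‖bk f p L x‖ ^ 12 ≤ C * (L : ℝ) ^ h * Am f p L ^ 3) {n : ℕ} (hn : 0 < n)
    (g : ℝ → ℂ) :
    ∫ x, ‖momExt g 0 1 x‖ ^ 12 ≤ C * (n : ℝ) ^ h * decSum g 0 (n : ℝ)⁻¹ n ^ 3 := by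
  have hn0 : (0 : ℝ) < n := by exact_mod_cast hn
  have hD : 0 ≤ decSum g 0 (n : ℝ)⁻¹ n := Finset.sum_nonneg fun k _ => by
    unfold L12; positivity
  have hR : 0 ≤ C * (n : ℝ) ^ h * decSum g 0 (n : ℝ)⁻¹ n ^ 3 := by positivity
  set G := (Set.Ioc (0 : ℝ) 1).indicator g with hG
  have hE : momExt g 0 1 = Ex G := by
    ext x; rw [momExt_eq zero_le_one]; rfl
  by_cases hg : Integrable G
  swap
  · have hz : ∀ x, momExt g 0 1 x = 0 := by
      intro x
      rw [hE, Ex]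
      refine integral_undef fun hcon => hg ?_
      have hcph : Continuous fun ξ => eR (-cph x ξ) :=
        continuous_eR.comp (by unfold cph; fun_prop)
      have := hcon.mul_bdd (c := 1) hcph.aestronglyMeasurable
        (Eventually.of_forall fun ξ => by simp)
      refine this.congr (Eventually.of_forall fun ξ => ?_)
      have : eR (cph x ξ) * eR (-cph x ξ) = 1 := by
        rw [eR, eR, ← Complex.exp_add]; push_cast; ring_nf; exact Complex.exp_zero
      simp only [mul_assoc, this, mul_one]
    simpa [hz] using hR
  by_cases hI : Integrable fun x => ‖Ex G x‖ ^ 12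
  swap
  · rw [hE, integral_undef hI]; exact hR
  have hmem : MemLp (Ex G) 12 := by
    have := (integrable_norm_rpow_iff (p := 12) (μ := volume) (f := Ex G)
      (continuous_Ex hg).aestronglyMeasurable (by norm_num) (by norm_num)).1
    refine this (hI.congr (Eventually.of_forall fun x => ?_))
    simp only [ENNReal.toReal_ofNat]
    norm_cast
  have key := H _ (curveFam_arcs hg hmem (inv_pos.2 hn0)) 0 n
  rw [bk_arcs hg] at key
  have e1 : momExt G ((0 : ℕ) * (n : ℝ)⁻¹) (((0 : ℕ) + n) * (n : ℝ)⁻¹) = momExt g 0 1 := by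
    rw [Nat.cast_zero, zero_mul, zero_add, mul_inv_cancel₀ hn0.ne']
    exact momExt_indicator le_rfl zero_le_one le_rfl
  have e2 : Am (arcs G (n : ℝ)⁻¹) 0 n = decSum g 0 (n : ℝ)⁻¹ n := by
    refine Finset.sum_congr rfl fun k hk => ?_
    have hk' : ((k : ℝ) + 1) * (n : ℝ)⁻¹ ≤ 1 := by
      rw [← div_eq_mul_inv, div_le_one hn0]
      exact_mod_cast Finset.mem_range.1 hk
    have e3 : arcs G (n : ℝ)⁻¹ (0 + k) =
        momExt g (0 + k * (n : ℝ)⁻¹) (0 + (k + 1) * (n : ℝ)⁻¹) := by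
      rw [arcs, zero_add, zero_add, zero_add]
      exact momExt_indicator (by positivity) (by gcongr; linarith) hk'
    rw [e3, L12, ← rpow_natCast, ← rpow_mul (integral_nonneg fun x => by positivity)]
    norm_num
  rwa [e1, e2] at key

/-- **Theorem (main).** Sharp `ℓ⁴L¹²` decoupling for the moment curve in `ℝ³`:
for every `ε > 0` there is `C_ε > 0` (depending only on `ε`) such that for every `δ` with
`δ⁻¹ ∈ ℕ` and every `g : [0,1] → ℂ`,
`‖E_{[0,1]} g‖₁₂ ≤ C_ε δ^{-1/4-ε} (∑_{J ∈ P_δ} ‖E_J g‖₁₂⁴)^{1/4}`;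
equivalently `D(δ) ≤ C_ε δ^{-1/4-ε}`. -/
theorem moment_curve_l4L12_decoupling :
    ∀ ε : ℝ, 0 < ε → ∃ C : ℝ, 0 < C ∧ ∀ δ : ℝ, IsRecipNat δ →
      (∀ g : ℝ → ℂ,
        L12 (momExt g 0 1) ≤
          C * δ ^ (-(1 : ℝ) / 4 - ε) * decSum g 0 δ ⌊δ⁻¹⌋₊ ^ ((1 : ℝ) / 4)) ∧
      Dconst δ ≤ C * δ ^ (-(1 : ℝ) / 4 - ε) := by
  intro ε hε
  obtain ⟨C, hC, H⟩ := linBd_of_gt_three (w := 12 * ε) (by linarith)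
  refine ⟨C ^ ((1 : ℝ) / 12), by positivity, fun δ hδ => ?_⟩
  obtain ⟨hδ0, n, hn⟩ := hδ
  have hδn : δ = (n : ℝ)⁻¹ := by rw [hn, inv_inv]
  have hn0 : 0 < n := by
    have : (0 : ℝ) < n := by rw [hn]; positivity
    exact_mod_cast this
  have hn0' : (0 : ℝ) < n := by exact_mod_cast hn0
  have hfl : ⌊δ⁻¹⌋₊ = n := by rw [← hn, Nat.floor_natCast]
  have hmain : ∀ g : ℝ → ℂ, L12 (momExt g 0 1) ≤
      C ^ ((1 : ℝ) / 12) * δ ^ (-(1 : ℝ) / 4 - ε) *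
        decSum g 0 δ ⌊δ⁻¹⌋₊ ^ ((1 : ℝ) / 4) := by
    intro g
    have hD : 0 ≤ decSum g 0 δ n := Finset.sum_nonneg fun k _ => by
      unfold L12; positivity
    have key := main_bound hC H hn0 g
    rw [← hδn] at key
    rw [hfl]
    refine (rpow_le_rpow (integral_nonneg fun x => by positivity) key
      (by norm_num : (0 : ℝ) ≤ 1 / 12)).trans_eq ?_
    rw [mul_rpow (by positivity) (by positivity), mul_rpow hC.le (by positivity),
      ← rpow_mul hn0'.le, ← rpow_natCast, ← rpow_mul hD, hδn, inv_rpow hn0'.le,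
      ← rpow_neg hn0'.le]
    congr 2
    · congr 1; ring
    · norm_num
  exact ⟨hmain, csInf_le ⟨0, fun c hc => hc.1⟩ ⟨by positivity, hmain⟩⟩
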